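/- arXiv:1806.04566 — 3 statements merged into one kernel-verified Lean document; each statement's English description precedes it below -/
import Mathlib

section
/- Let k ≥ 2 and j ∈ {1,…,k−1}. With high probability, there exist three triples (K_ℓ,C_ℓ,J_ℓ), ℓ = 1,2,3, such that for every p ∈ [p_{j−1}^−, p_{M_j}) there is some ℓ for which (K_ℓ,C_ℓ,J_ℓ) forms a copy of M_j in G_p. In particular, with high probability H^j(G_p;F_2) ≠ 0 for all p ∈ [p_{j−1}^−, p_{M_j}) simultaneously. -/
open MeasureTheory Filter

attribute [local instance] Classical.propDecidable

namespace RSC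

variable {V : Type*}

/-- `A` is an `i`-dimensional simplex of the complex `G`. -/
def IsSimplex (G : Set (Finset V)) (i : ℕ) (A : Finset V) : Prop :=
  A ∈ G ∧ A.card = i + 1

/-- A `k`-dimensional simplicial complex on vertex set `V`. -/
structure IsKComplex (G : Set (Finset V)) (k : ℕ) : Prop where
  down : ∀ A ∈ G, ∀ B, B ⊆ A → B.Nonempty → B ∈ G
  singletons : ∀ v : V, ({v} : Finset V) ∈ G
  dim : ∀ A ∈ G, A.card ≤ k + 1

/-- `i`-cochains with `F₂`-coefficients. -/
abbrev Cochain (G : Set (Finset V)) (i : ℕ) : Type _ :=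
  {A : Finset V // IsSimplex G i A} → ZMod 2

/-- The coboundary map `δ^i : C^i(G) → C^{i+1}(G)`. -/
noncomputable def coboundary (G : Set (Finset V)) (i : ℕ) :
    Cochain G i →ₗ[ZMod 2] Cochain G (i + 1) where
  toFun f := fun σ => ∑ τ ∈ Finset.powersetCard (i + 1) (σ : Finset V),
      if h : IsSimplex G i τ then f ⟨τ, h⟩ else 0
  map_add' f g := by
    funext σ
    simp only [Pi.add_apply, ← Finset.sum_add_distrib]
    refine Finset.sum_congr rfl fun τ _ => ?_
    by_cases h : IsSimplex G i τ <;> simp [h]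
  map_smul' c f := by
    funext σ
    simp only [Pi.smul_apply, RingHom.id_apply, Finset.smul_sum]
    refine Finset.sum_congr rfl fun τ _ => ?_
    by_cases h : IsSimplex G i τ <;> simp [h]

/-- The submodule of `i`-cocycles. -/
noncomputable def cocycles (G : Set (Finset V)) (i : ℕ) : Submodule (ZMod 2) (Cochain G i) :=
  LinearMap.ker (coboundary G i)

/-- The submodule of `i`-coboundaries (`δ^{-1}` is the zero map). -/
noncomputable def coboundaries (G : Set (Finset V)) : (i : ℕ) → Submodule (ZMod 2) (Cochain G i)
  | 0 => ⊥
  | (i + 1) => LinearMap.range (coboundary G i)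

/-- The `i`-th cohomology group `H^i(G;F₂) = ker δ^i / im δ^{i-1}`. -/
noncomputable abbrev cohomology (G : Set (Finset V)) (i : ℕ) :=
  (cocycles G i) ⧸ ((coboundaries G i).comap (cocycles G i).subtype)

/-- `F₂`-cohomological `j`-connectedness: `H^0 ≅ F₂` and `H^i = 0` for `1 ≤ i ≤ j`. -/
def CohomConnected (G : Set (Finset V)) (j : ℕ) : Prop :=
  Nonempty (cohomology G 0 ≃ₗ[ZMod 2] ZMod 2) ∧
    ∀ i, 1 ≤ i → i ≤ j → Subsingleton (cohomology G i)

/-- The `j`-flower in `K` with centre `C`: the set of petals `C ∪ {w}`, `w ∈ K \ C`. -/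
def Flower [DecidableEq V] (K C : Finset V) : Set (Finset V) :=
  {P | ∃ w ∈ K \ C, P = insert w C}

/-- A copy of `M_j^-`: a `k`-simplex `K` together with a `(j-1)`-simplex `C ⊆ K` such that
each petal of the flower `F(K,C)` is contained in no `k`-simplex other than `K`. -/
def IsMjMinus [DecidableEq V] (G : Set (Finset V)) (k j : ℕ) (K C : Finset V) : Prop :=
  IsSimplex G k K ∧ C ∈ G ∧ C.card = j ∧ C ⊆ K ∧
    ∀ P ∈ Flower K C, ∀ K', IsSimplex G k K' → P ⊆ K' → K' = K

/-- A `j`-cycle: every `(j-1)`-simplex lies in an even number of members of `J`. -/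
def IsCycle (G : Set (Finset V)) (j : ℕ) (J : Finset (Finset V)) : Prop :=
  (∀ σ ∈ J, IsSimplex G j σ) ∧
    ∀ τ : Finset V, τ.card = j → Even (J.filter (fun σ => τ ⊆ σ)).card

/-- A copy of `M_j`. -/
def IsMj [DecidableEq V] (G : Set (Finset V)) (k j : ℕ) (K C : Finset V)
    (J : Finset (Finset V)) : Prop :=
  IsMjMinus G k j K C ∧ IsCycle G j J ∧ ∃! P : Finset V, P ∈ J ∧ P ∈ Flower K C

/-- A `j`-shell: a `(j+2)`-set all of whose `(j+1)`-subsets are `j`-simplices. -/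
def IsShell (G : Set (Finset V)) (j : ℕ) (A : Finset V) : Prop :=
  A.card = j + 2 ∧ ∀ τ ⊆ A, τ.card = j + 1 → τ ∈ G

/-- A copy of `M_j^*`. -/
def IsMjStar [DecidableEq V] (G : Set (Finset V)) (k j : ℕ) (K C : Finset V) (w a : V) : Prop :=
  IsMjMinus G k j K C ∧ w ∈ K \ C ∧ a ∉ K ∧ IsShell G j (insert a (insert w C))

/-- The support of a cochain. -/
def cochainSupport {G : Set (Finset V)} {i : ℕ} (f : Cochain G i) : Set (Finset V) :=
  {A | ∃ h : IsSimplex G i A, f ⟨A, h⟩ = 1}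

/-- A cochain arising from a copy of `M_j^-`: its support is the flower `F(K,C)`. -/
def ArisesFrom [DecidableEq V] (G : Set (Finset V)) (k j : ℕ) (f : Cochain G j)
    (K C : Finset V) : Prop :=
  IsMjMinus G k j K C ∧ cochainSupport f = Flower K C

/-- A `j`-cocycle generated by copies of `M_j^-`: it differs by a `j`-coboundary from a sum
of `j`-cocycles arising from copies of `M_j^-`. -/
def GeneratedByMjMinus [DecidableEq V] (G : Set (Finset V)) (k j : ℕ) (f : Cochain G j) : Prop :=
  ∃ (m : ℕ) (fs : Fin m → Cochain G j),
    (∀ i, ∃ K C, ArisesFrom G k j (fs i) K C) ∧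
      f - (∑ i, fs i) ∈ coboundaries G j

/-- Membership in `N_G`: a `j`-cocycle not generated by copies of `M_j^-`. -/
def InNG [DecidableEq V] (G : Set (Finset V)) (k j : ℕ) (f : Cochain G j) : Prop :=
  f ∈ cocycles G j ∧ ¬ GeneratedByMjMinus G k j f

/-- Traversability: the transitive closure of "lying in a common `k`-simplex" is `S × S`. -/
def Traversable (G : Set (Finset V)) (k : ℕ) (S : Set (Finset V)) : Prop :=
  ∀ σ₁ ∈ S, ∀ σ₂ ∈ S,
    Relation.TransGen
      (fun a b => a ∈ S ∧ b ∈ S ∧ ∃ K, IsSimplex G k K ∧ a ⊆ K ∧ b ⊆ K) σ₁ σ₂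

/-- A local obstacle: a `k`-simplex containing at least `k-j+1` many `j`-simplices,
each lying in no other `k`-simplex. -/
def IsLocalObstacle (G : Set (Finset V)) (k j : ℕ) (K : Finset V) : Prop :=
  IsSimplex G k K ∧
    k - j + 1 ≤ {σ : Finset V | IsSimplex G j σ ∧ σ ⊆ K ∧
      ∀ K', IsSimplex G k K' → σ ⊆ K' → K' = K}.ncard

/-- The random complex `G_p` given birth times `t`: all singletons together with all
non-empty subsets of `(k+1)`-sets with birth time at most `p`. -/
def complexAt (k n : ℕ) (t : Finset (Fin n) → ℝ) (p : ℝ) : Set (Finset (Fin n)) :=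
  {A | (∃ v, A = {v}) ∨
    (A.Nonempty ∧ ∃ K : Finset (Fin n), K.card = k + 1 ∧ t K ≤ p ∧ A ⊆ K)}

/-- The distribution of birth times: i.i.d. uniform on `[0,1]`. -/
noncomputable def birthMeasure (n : ℕ) : Measure (Finset (Fin n) → ℝ) :=
  Measure.pi fun _ => volume.restrict (Set.Icc (0 : ℝ) 1)

/-- `p_{M_j}`: the supremum of the probabilities `p ∈ [0,1]` at which `G_p` contains
a copy of `M_j`. -/
noncomputable def pMj (k j n : ℕ) (t : Finset (Fin n) → ℝ) : ℝ :=
  sSup {p : ℝ | p ∈ Set.Icc (0 : ℝ) 1 ∧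
    ∃ K C J, IsMj (complexAt k n t p) k j K C J}

/-- The threshold `p_j`. -/
noncomputable def pjThreshold (k j n : ℕ) : ℝ :=
  ((j + 1 : ℝ) * Real.log n + Real.log (Real.log n)) * (Nat.factorial (k - j)) /
    (((k - j + 1 : ℕ) : ℝ) * (n : ℝ) ^ (k - j))

/-- `p_j^-`. -/
noncomputable def pjMinus (k j n : ℕ) : ℝ :=
  (1 - 1 / Real.sqrt (Real.log n)) * ((j + 1 : ℝ) * Real.log n) * (Nat.factorial (k - j)) /
    (((k - j + 1 : ℕ) : ℝ) * (n : ℝ) ^ (k - j))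

/-- `p_{j-1}^-`. -/
noncomputable def pjPrevMinus (k j n : ℕ) : ℝ :=
  (1 - 1 / Real.sqrt (Real.log n)) * ((j : ℝ) * Real.log n) * (Nat.factorial (k - j + 1)) /
    (((k - j + 2 : ℕ) : ℝ) * (n : ℝ) ^ (k - j + 1))

/-- `p_j^{(1)}`. -/
noncomputable def pjOne (k j n : ℕ) : ℝ :=
  1 / (10 * ((j : ℝ) + 1) * (Nat.choose (k + 1) (j + 1)) * (n : ℝ) ^ (k - j))

/-- The number of copies of `M_j^-` in `G`. -/
noncomputable def countMjMinus (k j : ℕ) {n : ℕ} (G : Set (Finset (Fin n))) : ℕ :=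
  {x : Finset (Fin n) × Finset (Fin n) | IsMjMinus G k j x.1 x.2}.ncard

/-- The number of copies of `M_j^*` in `G`. -/
noncomputable def countMjStar (k j : ℕ) {n : ℕ} (G : Set (Finset (Fin n))) : ℕ :=
  {x : Finset (Fin n) × Finset (Fin n) × Fin n × Fin n |
    IsMjStar G k j x.1 x.2.1 x.2.2.1 x.2.2.2}.ncard

lemma simplex_k_iff {k n : ℕ} (hk : 1 ≤ k) (t : Finset (Fin n) → ℝ) (p : ℝ) (K : Finset (Fin n)) :
    IsSimplex (complexAt k n t p) k K ↔ K.card = k + 1 ∧ t K ≤ p := by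
  constructor
  · rintro ⟨h, hc⟩
    refine ⟨hc, ?_⟩
    rcases h with ⟨v, rfl⟩ | ⟨_, K', hK', ht, hsub⟩
    · simp at hc; omega
    · have : K = K' := Finset.eq_of_subset_of_card_le hsub (by omega)
      rwa [this]
  · rintro ⟨hc, ht⟩
    exact ⟨Or.inr ⟨Finset.card_pos.1 (by omega), K, hc, ht, subset_rfl⟩, hc⟩

/-- competitors of the flower -/
noncomputable def Nb (k : ℕ) {n : ℕ} (K C : Finset (Fin n)) : Finset (Finset (Fin n)) :=
  Finset.univ.filter fun S => S.card = k + 1 ∧ S ≠ K ∧ ∃ w ∈ K \ C, insert w C ⊆ S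

lemma mem_Nb {k n : ℕ} {K C S : Finset (Fin n)} :
    S ∈ Nb k K C ↔ S.card = k + 1 ∧ S ≠ K ∧ ∃ w ∈ K \ C, insert w C ⊆ S := by
  simp [Nb]

lemma minus_iff {k j n : ℕ} (hj : 1 ≤ j) (hjk : j < k) (t : Finset (Fin n) → ℝ) (p : ℝ)
    (K C : Finset (Fin n)) :
    IsMjMinus (complexAt k n t p) k j K C ↔
      K.card = k + 1 ∧ t K ≤ p ∧ C.card = j ∧ C ⊆ K ∧ ∀ S ∈ Nb k K C, p < t S := by
  unfold IsMjMinus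
  simp only [simplex_k_iff (show 1 ≤ k by omega)]
  constructor
  · rintro ⟨⟨hK, ht⟩, _, hC, hCK, h⟩
    refine ⟨hK, ht, hC, hCK, fun S hS => ?_⟩
    obtain ⟨hSc, hne, w, hw, hsub⟩ := mem_Nb.1 hS
    by_contra hcon
    exact hne (h _ ⟨w, hw, rfl⟩ S ⟨hSc, not_lt.1 hcon⟩ hsub)
  · rintro ⟨hK, ht, hC, hCK, h⟩
    refine ⟨⟨hK, ht⟩, Or.inr ⟨Finset.card_pos.1 (by omega), K, hK, ht, hCK⟩, hC, hCK, ?_⟩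
    rintro P ⟨w, hw, rfl⟩ K' ⟨hK', ht'⟩ hsub
    by_contra hne
    exact absurd (h K' (mem_Nb.2 ⟨hK', hne, w, hw, hsub⟩)) (not_lt.2 ht')

lemma complexAt_mono {k n : ℕ} (t : Finset (Fin n) → ℝ) {p q : ℝ} (h : p ≤ q) :
    complexAt k n t p ⊆ complexAt k n t q := by
  rintro A (h1 | ⟨h1, K, h2, h3, h4⟩)
  · exact Or.inl h1
  · exact Or.inr ⟨h1, K, h2, h3.trans h, h4⟩

lemma cycle_mono {V : Type*} {G G' : Set (Finset V)} (h : G ⊆ G') {j : ℕ} {J : Finset (Finset V)}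
    (hJ : IsCycle G j J) : IsCycle G' j J :=
  ⟨fun σ hσ => ⟨h (hJ.1 σ hσ).1, (hJ.1 σ hσ).2⟩, hJ.2⟩

/-- nonvanishing of cohomology -/
lemma not_subsingleton_of_Mj {k j n : ℕ} (hj : 1 ≤ j) (hjk : j < k) (t : Finset (Fin n) → ℝ) (p : ℝ)
    (K C : Finset (Fin n)) (J : Finset (Finset (Fin n)))
    (h : IsMj (complexAt k n t p) k j K C J) :
    ¬ Subsingleton (cohomology (complexAt k n t p) j) := by
  obtain ⟨i, rfl⟩ : ∃ i, j = i + 1 := ⟨j - 1, by omega⟩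
  obtain ⟨hM, hcyc, hex⟩ := h
  obtain ⟨hKs, hCG, hCc, hCK, hiso⟩ := hM
  set G := complexAt k n t p with hG
  intro hsub
  let f : Cochain G (i + 1) := fun A => if (A : Finset (Fin n)) ∈ Flower K C then 1 else 0
  have hpet : ∀ P ∈ Flower K C, IsSimplex G (i + 1) P := by
    rintro P ⟨w, hw, rfl⟩
    rw [Finset.mem_sdiff] at hw
    have hs : insert w C ⊆ K := Finset.insert_subset hw.1 hCK
    refine ⟨?_, by rw [Finset.card_insert_of_notMem hw.2, hCc]⟩
    obtain ⟨hKc, hKt⟩ := (simplex_k_iff (show 1 ≤ k by omega) t p K).1 hKs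
    exact Or.inr ⟨Finset.insert_nonempty _ _, K, hKc, hKt, hs⟩
  have hf : f ∈ cocycles G (i + 1) := by
    rw [cocycles, LinearMap.mem_ker]
    funext σ
    obtain ⟨σ, hσG, hσc⟩ := σ
    show (∑ τ ∈ Finset.powersetCard (i + 1 + 1) σ,
      if h : IsSimplex G (i + 1) τ then f ⟨τ, h⟩ else 0) = 0
    have e1 : ∀ τ ∈ Finset.powersetCard (i + 1 + 1) σ,
        (if h : IsSimplex G (i + 1) τ then f ⟨τ, h⟩ else 0) =
          if τ ∈ Flower K C then (1 : ZMod 2) else 0 := by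
      intro τ _
      by_cases h1 : τ ∈ Flower K C
      · simp [f, h1, hpet τ h1]
      · simp [f, h1]
    rw [Finset.sum_congr rfl e1, Finset.sum_boole]
    by_cases hne : ∃ τ ∈ Finset.powersetCard (i + 1 + 1) σ, τ ∈ Flower K C
    · obtain ⟨τ, hτ, w, hw, rfl⟩ := hne
      rw [Finset.mem_powersetCard] at hτ
      have hσK : σ ⊆ K := by
        rcases hσG with ⟨v, rfl⟩ | ⟨_, K', hK', ht, hsub⟩
        · simp at hσc
        · have := hiso _ ⟨w, hw, rfl⟩ K' ((simplex_k_iff (show 1 ≤ k by omega) t p K').2 ⟨hK', ht⟩)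
            (hτ.1.trans hsub)
          rwa [this] at hsub
      have hcσ : C ⊆ σ := (Finset.subset_insert w C).trans hτ.1
      have h2 : (σ \ C).card = 2 := by
        rw [Finset.card_sdiff_of_subset hcσ]; omega
      have h3 : (Finset.powersetCard (i + 1 + 1) σ).filter (fun τ => τ ∈ Flower K C)
          = (σ \ C).image (fun w => insert w C) := by
        ext τ
        simp only [Finset.mem_filter, Finset.mem_powersetCard, Finset.mem_image]
        constructor
        · rintro ⟨⟨h4, h5⟩, w', hw', rfl⟩
          rw [Finset.mem_sdiff] at hw'
          exact ⟨w', Finset.mem_sdiff.2 ⟨h4 (Finset.mem_insert_self _ _), hw'.2⟩, rfl⟩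
        · rintro ⟨w', hw', rfl⟩
          rw [Finset.mem_sdiff] at hw'
          refine ⟨⟨Finset.insert_subset hw'.1 hcσ, by
            rw [Finset.card_insert_of_notMem hw'.2, hCc]⟩, w',
            Finset.mem_sdiff.2 ⟨hσK hw'.1, hw'.2⟩, rfl⟩
      rw [h3, Finset.card_image_of_injOn, h2]
      · decide
      · intro x hx y hy hxy
        simp only [Finset.coe_sdiff, Set.mem_sdiff, Finset.mem_coe] at hx hy
        have hxy' : insert x C = insert y C := hxy
        have : x ∈ insert y C := by
          rw [← hxy']; exact Finset.mem_insert_self _ _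
        rcases Finset.mem_insert.1 this with h | h
        · exact h
        · exact absurd h hx.2
    · rw [Finset.filter_eq_empty_iff.2]
      · simp
      · intro τ hτ h; exact hne ⟨τ, hτ, h⟩
  -- not a coboundary
  have hz : (Submodule.Quotient.mk ⟨f, hf⟩ : cohomology G (i + 1)) = 0 := Subsingleton.elim _ _
  rw [Submodule.Quotient.mk_eq_zero, Submodule.mem_comap] at hz
  obtain ⟨g, hg⟩ : ∃ g, coboundary G i g = f := hz
  let F : Finset (Fin n) → ZMod 2 := fun σ => if σ ∈ Flower K C then 1 else 0
  let g' : Finset (Fin n) → ZMod 2 := fun τ => if h : IsSimplex G i τ then g ⟨τ, h⟩ else 0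
  have h1 : ∑ σ ∈ J, F σ = 1 := by
    obtain ⟨P, ⟨hPJ, hPF⟩, hu⟩ := hex
    rw [Finset.sum_eq_single P]
    · simp [F, hPF]
    · intro b hb hne
      have : b ∉ Flower K C := fun h => hne (hu b ⟨hb, h⟩)
      simp [F, this]
    · intro h; exact absurd hPJ h
  have h2 : ∑ σ ∈ J, F σ = 0 := by
    have e : ∀ σ ∈ J, F σ = ∑ τ ∈ Finset.univ.filter (fun τ : Finset (Fin n) => τ.card = i + 1),
        if τ ⊆ σ then g' τ else 0 := by
      intro σ hσ
      have h3 := congrFun hg ⟨σ, hcyc.1 σ hσ⟩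
      have h4 : F σ = f ⟨σ, hcyc.1 σ hσ⟩ := rfl
      rw [h4, ← h3, ← Finset.sum_filter]
      show ∑ τ ∈ Finset.powersetCard (i + 1) σ, g' τ = _
      refine Finset.sum_congr ?_ fun _ _ => rfl
      ext τ
      simp [Finset.mem_powersetCard, and_comm]
    rw [Finset.sum_congr rfl e, Finset.sum_comm]
    refine Finset.sum_eq_zero fun τ hτ => ?_
    rw [← Finset.sum_filter, Finset.sum_const]
    have := hcyc.2 τ (by simpa using hτ)
    obtain ⟨r, hr⟩ := this
    have hr' : (J.filter (fun σ => τ ⊆ σ)).card = r + r := by convert hr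
    rw [hr', add_smul, ← two_smul (ZMod 2), show (2 : ZMod 2) = 0 from rfl, zero_smul]
  rw [h1] at h2
  exact one_ne_zero h2

/-- shell as a cycle -/
lemma shell_cycle {V : Type*} {G : Set (Finset V)} {j : ℕ} {A : Finset V} (hA : A.card = j + 2)
    (h : ∀ σ ∈ A.powersetCard (j + 1), σ ∈ G) : IsCycle G j (A.powersetCard (j + 1)) := by
  refine ⟨fun σ hσ => ⟨h σ hσ, (Finset.mem_powersetCard.1 hσ).2⟩, fun τ hτ => ?_⟩
  by_cases hs : τ ⊆ A
  · have h3 : (A.powersetCard (j + 1)).filter (fun σ => τ ⊆ σ)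
          = (A \ τ).image (fun w => insert w τ) := by
      ext σ
      simp only [Finset.mem_filter, Finset.mem_powersetCard, Finset.mem_image]
      constructor
      · rintro ⟨⟨h4, h5⟩, h6⟩
        have : (σ \ τ).card = 1 := by rw [Finset.card_sdiff_of_subset h6]; omega
        obtain ⟨w, hw⟩ := Finset.card_eq_one.1 this
        have hw' : w ∈ σ \ τ := by rw [hw]; simp
        rw [Finset.mem_sdiff] at hw'
        refine ⟨w, Finset.mem_sdiff.2 ⟨h4 hw'.1, hw'.2⟩, ?_⟩
        rw [← Finset.sdiff_union_of_subset h6, hw]; rfl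
      · rintro ⟨w', hw', rfl⟩
        rw [Finset.mem_sdiff] at hw'
        exact ⟨⟨Finset.insert_subset hw'.1 hs, by
            rw [Finset.card_insert_of_notMem hw'.2, hτ]⟩, Finset.subset_insert _ _⟩
    rw [h3, Finset.card_image_of_injOn, Finset.card_sdiff_of_subset hs, hA, hτ]
    · exact ⟨1, by omega⟩
    · intro x hx y hy hxy
      simp only [Finset.coe_sdiff, Set.mem_sdiff, Finset.mem_coe] at hx hy
      have hxy' : insert x τ = insert y τ := hxy
      have : x ∈ insert y τ := by
        rw [← hxy']; exact Finset.mem_insert_self _ _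
      rcases Finset.mem_insert.1 this with h | h
      · exact h
      · exact absurd h hx.2
  · rw [Finset.filter_eq_empty_iff.2]
    · simp
    · intro σ hσ h
      exact hs (h.trans (Finset.mem_powersetCard.1 hσ).1)

/-- If shells are available at time `s`, every copy of `M_j^-` extends to a copy of `M_j`. -/
def Shells (k j n : ℕ) (t : Finset (Fin n) → ℝ) (s : ℝ) : Prop :=
  ∀ K P : Finset (Fin n), K.card = k + 1 → P ⊆ K → P.card = j + 1 →
    ∃ a, a ∉ K ∧ ∀ x ∈ P, insert a (P.erase x) ∈ complexAt k n t s

lemma exists_J {k j n : ℕ} (hjk : j < k) {t : Finset (Fin n) → ℝ} {s : ℝ}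
    (hs : Shells k j n t s) {K C : Finset (Fin n)} (hK : K.card = k + 1) (hC : C.card = j)
    (hCK : C ⊆ K) :
    ∃ J : Finset (Finset (Fin n)), (∀ p, s ≤ p → t K ≤ p → IsCycle (complexAt k n t p) j J) ∧
      ∃! P, P ∈ J ∧ P ∈ Flower K C := by
  have : (K \ C).Nonempty := by
    rw [← Finset.card_pos, Finset.card_sdiff_of_subset hCK]; omega
  obtain ⟨w, hw⟩ := this
  have hw' := Finset.mem_sdiff.1 hw
  have hPK : insert w C ⊆ K := Finset.insert_subset hw'.1 hCK
  have hPc : (insert w C).card = j + 1 := by rw [Finset.card_insert_of_notMem hw'.2, hC]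
  obtain ⟨a, haK, ha⟩ := hs K (insert w C) hK hPK hPc
  have haP : a ∉ insert w C := fun h => haK (hPK h)
  have hAc : (insert a (insert w C)).card = j + 2 := by
    rw [Finset.card_insert_of_notMem haP, hPc]
  refine ⟨(insert a (insert w C)).powersetCard (j + 1), fun p hp hKp => shell_cycle hAc ?_, ?_⟩
  · intro σ hσ
    obtain ⟨h1, h2⟩ := Finset.mem_powersetCard.1 hσ
    by_cases haσ : a ∈ σ
    · have hc1 : (insert w C \ σ.erase a).card = 1 := by
        have hsub : σ.erase a ⊆ insert w C := by
          intro x hx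
          rw [Finset.mem_erase] at hx
          exact (Finset.mem_insert.1 (h1 hx.2)).resolve_left hx.1
        rw [Finset.card_sdiff_of_subset hsub, Finset.card_erase_of_mem haσ]; omega
      obtain ⟨x, hx⟩ := Finset.card_eq_one.1 hc1
      have hx' : x ∈ insert w C \ σ.erase a := by rw [hx]; simp
      rw [Finset.mem_sdiff] at hx'
      have : σ = insert a ((insert w C).erase x) := by
        refine Finset.eq_of_subset_of_card_le ?_ ?_
        · intro y hy
          by_cases hya : y = a
          · rw [hya]; exact Finset.mem_insert_self _ _
          · refine Finset.mem_insert_of_mem (Finset.mem_erase.2 ⟨?_, ?_⟩)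
            · rintro rfl
              exact hx'.2 (Finset.mem_erase.2 ⟨hya, hy⟩)
            · exact (Finset.mem_insert.1 (h1 hy)).resolve_left hya
        · rw [h2]
          refine (Finset.card_insert_le _ _).trans ?_
          rw [Finset.card_erase_of_mem hx'.1]; omega
      rw [this]
      exact complexAt_mono t hp (ha x hx'.1)
    · have : σ ⊆ insert w C := fun y hy =>
        (Finset.mem_insert.1 (h1 hy)).resolve_left (fun h => haσ (h ▸ hy))
      exact Or.inr ⟨Finset.card_pos.1 (by omega), K, hK, hKp, this.trans hPK⟩
  · refine ⟨insert w C, ⟨Finset.mem_powersetCard.2 ⟨Finset.subset_insert _ _, hPc⟩, w, hw, rfl⟩, ?_⟩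
    rintro P ⟨hP1, w', hw1, rfl⟩
    obtain ⟨h1, _⟩ := Finset.mem_powersetCard.1 hP1
    rw [Finset.mem_sdiff] at hw1
    have h2 := h1 (Finset.mem_insert_self w' C)
    rcases Finset.mem_insert.1 h2 with h | h
    · exact absurd (h ▸ hw1.1) haK
    · rcases Finset.mem_insert.1 h with h | h
      · rw [h]
      · exact absurd h hw1.2

/-- Linear algebra: many isolated flowers produce a cycle. -/
lemma first_triple {k j n : ℕ} (hj : 1 ≤ j) (hjk : j < k) (t : Finset (Fin n) → ℝ) (r s : ℝ)
    (cen pet : Finset (Fin n) → Finset (Fin n))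
    (hcp : ∀ K : Finset (Fin n), K.card = k + 1 →
      (cen K).card = j ∧ (pet K).card = j + 1 ∧ cen K ⊆ pet K ∧ pet K ⊆ K)
    (X : Finset (Finset (Fin n)))
    (hX : ∀ K ∈ X, K.card = k + 1 ∧ t K ≤ r ∧ ∀ S ∈ Nb k K (cen K), s < t S)
    (hrs : r ≤ s)
    (hcard : n.choose j < X.card) :
    ∃ K C J, ∀ p, r ≤ p → p ≤ s → IsMj (complexAt k n t p) k j K C J := by
  have hpetmem : ∀ K, K.card = k + 1 → ∃ w ∈ K \ cen K, pet K = insert w (cen K) := by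
    intro K hK
    obtain ⟨h1, h2, h3, h4⟩ := hcp K hK
    have : (pet K \ cen K).card = 1 := by rw [Finset.card_sdiff_of_subset h3]; omega
    obtain ⟨w, hw⟩ := Finset.card_eq_one.1 this
    have hw' : w ∈ pet K \ cen K := by rw [hw]; simp
    rw [Finset.mem_sdiff] at hw'
    refine ⟨w, Finset.mem_sdiff.2 ⟨h4 hw'.1, hw'.2⟩, ?_⟩
    rw [← Finset.sdiff_union_of_subset h3, hw]; rfl
  -- petals of `K ∈ X` in another member of `X` impossible
  have hiso : ∀ K ∈ X, ∀ K' ∈ X, ∀ P ∈ Flower K (cen K), P ⊆ K' → K' = K := by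
    rintro K hK K' hK' P ⟨w, hw, rfl⟩ hsub
    by_contra hne
    have h1 := (hX K hK).2.2 K' (mem_Nb.2 ⟨(hX K' hK').1, hne, w, hw, hsub⟩)
    have h2 := (hX K' hK').2.1
    linarith
  let v : X → ((Finset.univ : Finset (Fin n)).powersetCard j → ZMod 2) :=
    fun K τ => if (τ : Finset (Fin n)) ⊆ pet K then 1 else 0
  have hdep : ¬ LinearIndependent (ZMod 2) v := by
    intro hli
    have := hli.fintype_card_le_finrank
    simp only [Module.finrank_fintype_fun_eq_card, Fintype.card_coe, Finset.card_powersetCard,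
      Finset.card_univ, Fintype.card_fin] at this
    omega
  rw [Fintype.not_linearIndependent_iff] at hdep
  obtain ⟨g, hg, K₀, hK₀⟩ := hdep
  have hg1 : ∀ K, g K = 0 ∨ g K = 1 := by
    intro K
    generalize g K = x
    revert x; decide
  let S : Finset X := Finset.univ.filter fun K => g K = 1
  let J : Finset (Finset (Fin n)) := S.image fun K : X => pet K
  have hinj : Set.InjOn (fun K : X => pet K) S := by
    intro K _ K' _ h
    simp only at h
    obtain ⟨w, hw, hw2⟩ := hpetmem K (hX K K.2).1
    have := hiso K K.2 K' K'.2 (pet K) ⟨w, hw, hw2⟩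
      (by rw [h]; exact (hcp K' (hX K' K'.2).1).2.2.2)
    exact Subtype.ext this.symm
  have hJcyc : ∀ p, r ≤ p → IsCycle (complexAt k n t p) j J := by
    intro p hp
    refine ⟨?_, ?_⟩
    · intro σ hσ
      obtain ⟨K, hK, rfl⟩ := Finset.mem_image.1 hσ
      have h1 := hX K K.2
      obtain ⟨_, h2, h3, h4⟩ := hcp K h1.1
      exact ⟨Or.inr ⟨Finset.card_pos.1 (by omega), K, h1.1, h1.2.1.trans hp, h4⟩, h2⟩
    · intro τ hτ
      have h1 := congrFun hg ⟨τ, Finset.mem_powersetCard.2 ⟨Finset.subset_univ _, hτ⟩⟩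
      rw [Finset.sum_apply] at h1
      have h2 : ∀ K : X, (g K • v K) ⟨τ, Finset.mem_powersetCard.2 ⟨Finset.subset_univ _, hτ⟩⟩
          = if (g K = 1 ∧ τ ⊆ pet K) then 1 else 0 := by
        intro K
        simp only [v, Pi.smul_apply, smul_eq_mul]
        rcases hg1 K with h | h <;> simp [h]
      rw [Finset.sum_congr rfl (fun K _ => h2 K), Finset.sum_boole] at h1
      have h3 : J.filter (fun σ => τ ⊆ σ) =
          (Finset.univ.filter (fun K : X => g K = 1 ∧ τ ⊆ pet K)).image (fun K : X => pet K) := by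
        ext σ
        simp only [J, S, Finset.mem_filter, Finset.mem_image, Finset.mem_univ, true_and]
        constructor
        · rintro ⟨⟨K, h, rfl⟩, h'⟩; exact ⟨K, ⟨h, h'⟩, rfl⟩
        · rintro ⟨K, ⟨h, h'⟩, rfl⟩; exact ⟨⟨K, h, rfl⟩, h'⟩
      suffices hh : Even (J.filter (fun σ => τ ⊆ σ)).card by convert hh
      rw [h3, Finset.card_image_of_injOn]
      · exact (ZMod.natCast_eq_zero_iff_even).1 h1
      · refine hinj.mono ?_
        intro K hK
        simp only [Finset.coe_filter, Set.mem_setOf_eq, Finset.mem_univ, true_and] at hK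
        simp [S, hK.1]
  have hK0 := hX K₀ K₀.2
  obtain ⟨c1, c2, c3, c4⟩ := hcp K₀ hK0.1
  refine ⟨K₀, cen K₀, J, fun p hp hps => ⟨?_, hJcyc p hp, ?_⟩⟩
  · exact (minus_iff hj hjk t p _ _).2 ⟨hK0.1, hK0.2.1.trans hp, c1, c3.trans c4,
      fun S hS => lt_of_le_of_lt hps (hK0.2.2 S hS)⟩
  · refine ⟨pet K₀, ⟨?_, ?_⟩, ?_⟩
    · refine Finset.mem_image.2 ⟨K₀, ?_, rfl⟩
      simp [S, (hg1 K₀).resolve_left hK₀]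
    · obtain ⟨w, hw, hw2⟩ := hpetmem K₀ hK0.1
      exact ⟨w, hw, hw2⟩
    · rintro P ⟨hP1, hP2⟩
      obtain ⟨K, hK, rfl⟩ := Finset.mem_image.1 hP1
      have := hiso K₀ K₀.2 K K.2 _ hP2 (hcp K (hX K K.2).1).2.2.2
      rw [this]

lemma combine {k j n : ℕ} (hj : 1 ≤ j) (hjk : j < k) (t : Finset (Fin n) → ℝ) (r s q q2 : ℝ)
    (hsq : s ≤ q) (hq2 : q ≤ q2) (h0 : 0 ≤ q2) (h1' : q2 ≤ 1)
    (h1 : ∃ K C J, ∀ p, r ≤ p → p ≤ s → IsMj (complexAt k n t p) k j K C J)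
    (h2 : ∃ K C : Finset (Fin n), K.card = k + 1 ∧ C.card = j ∧ C ⊆ K ∧ t K ≤ s ∧
      ∀ S ∈ Nb k K C, q < t S)
    (h2' : ∃ K C : Finset (Fin n), K.card = k + 1 ∧ C.card = j ∧ C ⊆ K ∧ t K ≤ q2 ∧
      ∀ S ∈ Nb k K C, q2 < t S)
    (hsh : Shells k j n t s)
    (h3 : ∀ (K C : Finset (Fin n)) (p : ℝ), K.card = k + 1 → C.card = j → C ⊆ K → t K ≤ p →
      p ≤ 1 → q2 ≤ p → (∀ S ∈ Nb k K C, p < t S) → t K ≤ q) :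
    (∃ K₁ C₁ J₁ K₂ C₂ J₂ K₃ C₃ J₃,
        ∀ p : ℝ, r ≤ p → p < pMj k j n t →
          (IsMj (complexAt k n t p) k j K₁ C₁ J₁ ∨
            IsMj (complexAt k n t p) k j K₂ C₂ J₂ ∨
            IsMj (complexAt k n t p) k j K₃ C₃ J₃)) ∧
      ∀ p : ℝ, r ≤ p → p < pMj k j n t →
        ¬ Subsingleton (cohomology (complexAt k n t p) j) := by
  have key : ∃ K₁ C₁ J₁ K₂ C₂ J₂ K₃ C₃ J₃,
        ∀ p : ℝ, r ≤ p → p < pMj k j n t →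
          (IsMj (complexAt k n t p) k j K₁ C₁ J₁ ∨
            IsMj (complexAt k n t p) k j K₂ C₂ J₂ ∨
            IsMj (complexAt k n t p) k j K₃ C₃ J₃) := by
    obtain ⟨K₁, C₁, J₁, H1⟩ := h1
    obtain ⟨K₂, C₂, a1, a2, a3, a4, a5⟩ := h2
    obtain ⟨J₂, b1, b2⟩ := exists_J hjk hsh a1 a2 a3
    -- third
    have H3 : ∃ K C : Finset (Fin n), K.card = k + 1 ∧ C.card = j ∧ C ⊆ K ∧ t K ≤ q ∧
        ∀ p, p < pMj k j n t → ∀ S ∈ Nb k K C, p < t S := by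
      by_contra hcon
      push Not at hcon
      -- a copy at q2
      obtain ⟨K', C', c1, c2, c3, c4, c5⟩ := h2'
      obtain ⟨J', d1, d2⟩ := exists_J hjk hsh c1 c2 c3
      have hcopy : IsMj (complexAt k n t q2) k j K' C' J' :=
        ⟨(minus_iff hj hjk t q2 _ _).2 ⟨c1, c4, c2, c3, c5⟩, d1 q2 (hsq.trans hq2) c4, d2⟩
      have hbdd : BddAbove {p : ℝ | p ∈ Set.Icc (0 : ℝ) 1 ∧
          ∃ K C J, IsMj (complexAt k n t p) k j K C J} := ⟨1, fun p hp => hp.1.2⟩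
      have hmem : q2 ∈ {p : ℝ | p ∈ Set.Icc (0 : ℝ) 1 ∧
          ∃ K C J, IsMj (complexAt k n t p) k j K C J} := ⟨⟨h0, h1'⟩, _, _, _, hcopy⟩
      have hex : ∀ x : Finset (Fin n) × Finset (Fin n), ∃ p, p < pMj k j n t ∧
          (x.1.card = k + 1 → x.2.card = j → x.2 ⊆ x.1 → t x.1 ≤ q →
            ∃ S ∈ Nb k x.1 x.2, t S ≤ p) := by
        intro x
        by_cases h : x.1.card = k + 1 ∧ x.2.card = j ∧ x.2 ⊆ x.1 ∧ t x.1 ≤ q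
        · obtain ⟨p, hp, S, hS, hSp⟩ := hcon x.1 x.2 h.1 h.2.1 h.2.2.1 h.2.2.2
          exact ⟨p, hp, fun _ _ _ _ => ⟨S, hS, hSp⟩⟩
        · exact ⟨pMj k j n t - 1, by linarith, fun e1 e2 e3 e4 => absurd ⟨e1, e2, e3, e4⟩ h⟩
      choose pf hpf1 hpf2 using hex
      obtain ⟨x0, -, hx0⟩ := Finset.exists_max_image
        (Finset.univ : Finset (Finset (Fin n) × Finset (Fin n))) pf ⟨(∅, ∅), Finset.mem_univ _⟩
      obtain ⟨p₁, hp₁, hlt⟩ := exists_lt_of_lt_csSup ⟨q2, hmem⟩ (hpf1 x0)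
      have hfin : ∃ p', pf x0 < p' ∧ q2 ≤ p' ∧ p' ≤ 1 ∧
          ∃ K C J, IsMj (complexAt k n t p') k j K C J := by
        rcases le_total q2 p₁ with h | h
        · exact ⟨p₁, hlt, h, hp₁.1.2, hp₁.2⟩
        · exact ⟨q2, hlt.trans_le h, le_rfl, h1', hmem.2⟩
      obtain ⟨p', e1, e2, e3, K, C, J, e4, -⟩ := hfin
      obtain ⟨f1, f2, f3, f4, f5⟩ := (minus_iff hj hjk t p' K C).1 e4
      have hKq := h3 K C p' f1 f3 f4 f2 e3 e2 f5
      obtain ⟨S, hS, hSp⟩ := hpf2 (K, C) f1 f3 f4 hKq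
      have g1 := f5 S hS
      have g2 := hx0 (K, C) (Finset.mem_univ _)
      linarith
    obtain ⟨K₃, C₃, c1, c2, c3, c4, c5⟩ := H3
    obtain ⟨J₃, d1, d2⟩ := exists_J hjk hsh c1 c2 c3
    refine ⟨K₁, C₁, J₁, K₂, C₂, J₂, K₃, C₃, J₃, fun p hp hpM => ?_⟩
    rcases le_total p s with h | h
    · exact Or.inl (H1 p hp h)
    rcases le_total p q with h' | h'
    · refine Or.inr (Or.inl ⟨?_, b1 p h (a4.trans h), b2⟩)
      exact (minus_iff hj hjk t p _ _).2 ⟨a1, a4.trans h, a2, a3,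
        fun S hS => lt_of_le_of_lt h' (a5 S hS)⟩
    · refine Or.inr (Or.inr ⟨?_, d1 p h (c4.trans h'), d2⟩)
      exact (minus_iff hj hjk t p _ _).2 ⟨c1, c4.trans h', c2, c3, c5 p hpM⟩
  refine ⟨key, ?_⟩
  obtain ⟨K₁, C₁, J₁, K₂, C₂, J₂, K₃, C₃, J₃, H⟩ := key
  intro p hp hpM
  rcases H p hp hpM with h | h | h
  · exact not_subsingleton_of_Mj hj hjk t p _ _ _ h
  · exact not_subsingleton_of_Mj hj hjk t p _ _ _ h
  · exact not_subsingleton_of_Mj hj hjk t p _ _ _ h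

/-! Counting -/

lemma card_superset_le {n d e : ℕ} (Q : Finset (Fin n)) (hQ : Q.card = d) :
    (Finset.univ.filter fun S : Finset (Fin n) => S.card = d + e ∧ Q ⊆ S).card ≤ n.choose e := by
  have : n.choose e = ((Finset.univ : Finset (Fin n)).powersetCard e).card := by
    simp [Finset.card_powersetCard]
  rw [this]
  refine Finset.card_le_card_of_injOn (fun S => S \ Q) ?_ ?_
  · intro S hS
    simp only [Finset.coe_filter, Finset.mem_univ, true_and, Set.mem_ofPred_eq] at hS
    simp only [Finset.mem_coe, Finset.mem_powersetCard, Finset.subset_univ, true_and]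
    rw [Finset.card_sdiff_of_subset hS.2]; omega
  · intro S hS S' hS' h
    simp only [Finset.coe_filter, Finset.mem_univ, true_and, Set.mem_ofPred_eq] at hS hS'
    have h' : S \ Q = S' \ Q := h
    rw [← Finset.sdiff_union_of_subset hS.2, h', Finset.sdiff_union_of_subset hS'.2]

lemma Nb_card_le {k j n : ℕ} (hjk : j < k) {K C : Finset (Fin n)} (hK : K.card = k + 1)
    (hC : C.card = j) (hCK : C ⊆ K) :
    (Nb k K C).card ≤ (k - j + 1) * n.choose (k - j) := by
  have hsub : Nb k K C ⊆ (K \ C).biUnion fun w =>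
      Finset.univ.filter fun S : Finset (Fin n) => S.card = (j + 1) + (k - j) ∧ insert w C ⊆ S := by
    intro S hS
    obtain ⟨h1, _, w, hw, h2⟩ := mem_Nb.1 hS
    refine Finset.mem_biUnion.2 ⟨w, hw, ?_⟩
    simp only [Finset.mem_filter, Finset.mem_univ, true_and]
    exact ⟨by omega, h2⟩
  refine (Finset.card_le_card hsub).trans ?_
  refine (Finset.card_biUnion_le_card_mul _ _ (n.choose (k - j)) ?_).trans ?_
  · intro w hw
    refine card_superset_le _ ?_
    rw [Finset.card_insert_of_notMem (Finset.mem_sdiff.1 hw).2, hC]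
  · rw [Finset.card_sdiff_of_subset hCK, hK, hC]
    gcongr; omega

lemma Nb_inter_card_le {k j n : ℕ} (hjk : j < k) {K C K' C' : Finset (Fin n)}
    (hK : K.card = k + 1) (hC : C.card = j) (hCK : C ⊆ K)
    (hK' : K'.card = k + 1) (hC' : C'.card = j) (hCK' : C' ⊆ K') (hne : K ≠ K')
    (hN : K' ∉ Nb k K C) :
    (Nb k K C ∩ Nb k K' C').card ≤ (k - j + 1) ^ 2 * n ^ (k - j - 1) := by
  have hsub : Nb k K C ∩ Nb k K' C' ⊆ ((K \ C) ×ˢ (K' \ C')).biUnion fun w =>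
      Finset.univ.filter fun S : Finset (Fin n) =>
        S.card = (j + 2) + (k - j - 1) ∧ insert w.1 C ∪ insert w.2 C' ⊆ S := by
    intro S hS
    obtain ⟨hS1, hS2⟩ := Finset.mem_inter.1 hS
    obtain ⟨h1, _, w, hw, h2⟩ := mem_Nb.1 hS1
    obtain ⟨_, _, w', hw', h2'⟩ := mem_Nb.1 hS2
    refine Finset.mem_biUnion.2 ⟨(w, w'), Finset.mem_product.2 ⟨hw, hw'⟩, ?_⟩
    simp only [Finset.mem_filter, Finset.mem_univ, true_and]
    exact ⟨by omega, Finset.union_subset h2 h2'⟩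
  refine (Finset.card_le_card hsub).trans ?_
  refine (Finset.card_biUnion_le_card_mul _ _ (n ^ (k - j - 1)) ?_).trans ?_
  · rintro ⟨w, w'⟩ hw
    obtain ⟨h1, h2⟩ := Finset.mem_product.1 hw
    simp only at h1 h2
    have c1 : (insert w C).card = j + 1 := by
      rw [Finset.card_insert_of_notMem (Finset.mem_sdiff.1 h1).2, hC]
    have c2 : (insert w' C').card = j + 1 := by
      rw [Finset.card_insert_of_notMem (Finset.mem_sdiff.1 h2).2, hC']
    have hdiff : ¬ insert w' C' ⊆ insert w C := by
      intro hs
      have he := Finset.eq_of_subset_of_card_le hs (by omega)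
      refine hN (mem_Nb.2 ⟨hK', hne.symm, w, h1, ?_⟩)
      rw [← he]
      exact Finset.insert_subset (Finset.mem_sdiff.1 h2).1 hCK'
    have hc : j + 2 ≤ (insert w C ∪ insert w' C').card := by
      have : insert w C ⊂ insert w C ∪ insert w' C' := by
        refine Finset.ssubset_iff_subset_ne.2 ⟨Finset.subset_union_left, fun h => hdiff ?_⟩
        rw [h]; exact Finset.subset_union_right
      have := Finset.card_lt_card this
      omega
    obtain ⟨Q, hQ1, hQ2⟩ := Finset.exists_subset_card_eq hc
    refine le_trans (Finset.card_le_card ?_)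
      ((card_superset_le (e := k - j - 1) Q hQ2).trans (Nat.choose_le_pow _ _))
    intro S hS
    simp only [Finset.mem_filter, Finset.mem_univ, true_and] at hS ⊢
    exact ⟨hS.1, hQ1.trans hS.2⟩
  · rw [Finset.card_product, Finset.card_sdiff_of_subset hCK, Finset.card_sdiff_of_subset hCK',
      hK, hC, hK', hC', pow_two]
    gcongr <;> omega

lemma Nb_card_ge {k j n : ℕ} (hjk : j < k) {K C : Finset (Fin n)} (hK : K.card = k + 1)
    (hC : C.card = j) (hCK : C ⊆ K) :
    (k - j + 1) * (n - (k + 1)).choose (k - j) ≤ (Nb k K C).card := by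
  have h1 : (k - j + 1) * (n - (k + 1)).choose (k - j) =
      ((K \ C) ×ˢ ((Finset.univ \ K).powersetCard (k - j))).card := by
    rw [Finset.card_product, Finset.card_sdiff_of_subset hCK, Finset.card_powersetCard,
      Finset.card_sdiff_of_subset (Finset.subset_univ _), hK, hC, Finset.card_univ,
      Fintype.card_fin]
    congr 1; omega
  rw [h1]
  refine Finset.card_le_card_of_injOn (fun x => insert x.1 C ∪ x.2) ?_ ?_
  · rintro ⟨w, Y⟩ hx
    obtain ⟨hw, hY⟩ := Finset.mem_product.1 (Finset.mem_coe.1 hx)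
    simp only [Finset.mem_powersetCard] at hw hY
    have hw' := Finset.mem_sdiff.1 hw
    have hsK : insert w C ⊆ K := Finset.insert_subset hw'.1 hCK
    have hdis : Disjoint (insert w C) Y := by
      rw [Finset.disjoint_left]
      intro y hy hyY
      exact (Finset.mem_sdiff.1 (hY.1 hyY)).2 (hsK hy)
    refine Finset.mem_coe.2 (mem_Nb.2 ⟨?_, ?_, w, hw, Finset.subset_union_left⟩)
    · simp only
      rw [Finset.card_union_of_disjoint hdis, Finset.card_insert_of_notMem hw'.2, hC, hY.2]
      omega
    · intro h
      have : Y.Nonempty := Finset.card_pos.1 (by omega)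
      obtain ⟨y, hy⟩ := this
      refine (Finset.mem_sdiff.1 (hY.1 hy)).2 ?_
      rw [← h]
      exact Finset.mem_union_right _ hy
  · rintro ⟨w, Y⟩ hx ⟨w', Y'⟩ hx' h
    obtain ⟨hw, hY⟩ := Finset.mem_product.1 (Finset.mem_coe.1 hx)
    obtain ⟨hw1, hY1⟩ := Finset.mem_product.1 (Finset.mem_coe.1 hx')
    simp only [Finset.mem_powersetCard, Finset.mem_sdiff] at hw hY hw1 hY1
    have h' : insert w C ∪ Y = insert w' C ∪ Y' := h
    have aux : ∀ (w : Fin n) (Y : Finset (Fin n)), w ∈ K → w ∉ C → Y ⊆ Finset.univ \ K →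
        (insert w C ∪ Y) \ K = Y ∧ ∀ x, (x ∈ insert w C ∪ Y ∧ x ∈ K ∧ x ∉ C) ↔ x = w := by
      intro w Y hw hwC hY
      constructor
      · ext y
        simp only [Finset.mem_sdiff, Finset.mem_union, Finset.mem_insert]
        constructor
        · rintro ⟨(rfl | h) | h, h2⟩
          · exact absurd hw h2
          · exact absurd (hCK h) h2
          · exact h
        · intro h
          exact ⟨Or.inr h, (Finset.mem_sdiff.1 (hY h)).2⟩
      · intro x
        simp only [Finset.mem_union, Finset.mem_insert]
        constructor
        · rintro ⟨(h | h) | h, h2, h3⟩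
          · exact h
          · exact absurd h h3
          · exact absurd h2 (Finset.mem_sdiff.1 (hY h)).2
        · rintro rfl
          exact ⟨Or.inl (Or.inl rfl), hw, hwC⟩
    have A := aux w Y hw.1 hw.2 hY.1
    have A' := aux w' Y' hw1.1 hw1.2 hY1.1
    have e1 : Y = Y' := by rw [← A.1, ← A'.1, h']
    have e2 : w = w' := by
      rw [← A'.2 w, ← h']
      exact (A.2 w).2 rfl
    rw [e1, e2]

/-- uniform distribution on the unit interval -/
noncomputable def unif : Measure ℝ := volume.restrict (Set.Icc (0 : ℝ) 1)

instance : IsProbabilityMeasure unif := ⟨by simp [unif]⟩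

instance (n : ℕ) : IsProbabilityMeasure (birthMeasure n) := by
  have : birthMeasure n = Measure.pi fun _ => unif := rfl
  rw [this]; infer_instance

lemma unif_Ioi {b : ℝ} (h0 : 0 ≤ b) (h1 : b ≤ 1) : unif.real (Set.Ioi b) = 1 - b := by
  rw [measureReal_def, unif, Measure.restrict_apply measurableSet_Ioi,
    show Set.Ioi b ∩ Set.Icc 0 1 = Set.Ioc b 1 by ext x; simp; grind, Real.volume_Ioc,
    ENNReal.toReal_ofReal (by linarith)]

lemma unif_Iic {a : ℝ} (h0 : 0 ≤ a) (h1 : a ≤ 1) : unif.real (Set.Iic a) = a := by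
  rw [measureReal_def, unif, Measure.restrict_apply measurableSet_Iic,
    show Set.Iic a ∩ Set.Icc 0 1 = Set.Icc 0 a by ext x; simp; grind, Real.volume_Icc,
    ENNReal.toReal_ofReal (by linarith), sub_zero]

lemma unif_Ioc_le {x y : ℝ} (h : x ≤ y) : unif.real (Set.Ioc x y) ≤ y - x := by
  rw [measureReal_def, unif, Measure.restrict_apply measurableSet_Ioc]
  refine ENNReal.toReal_le_of_le_ofReal (by linarith) ?_
  refine (measure_mono Set.inter_subset_left).trans ?_
  rw [Real.volume_Ioc]

lemma box_real {n : ℕ} (W U : Finset (Finset (Fin n))) (hd : Disjoint W U) (I : Set ℝ) (b : ℝ) :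
    (birthMeasure n).real {t | (∀ S ∈ W, t S ∈ I) ∧ ∀ S ∈ U, b < t S} =
      unif.real I ^ W.card * unif.real (Set.Ioi b) ^ U.card := by
  have hset : {t : Finset (Fin n) → ℝ | (∀ S ∈ W, t S ∈ I) ∧ ∀ S ∈ U, b < t S} =
      Set.pi Set.univ (fun S => if S ∈ W then I else if S ∈ U then Set.Ioi b else Set.univ) := by
    ext t
    simp only [Set.mem_ofPred_eq, Set.mem_pi, Set.mem_univ, forall_true_left]
    constructor
    · rintro ⟨h1, h2⟩ S
      by_cases hW : S ∈ W
      · simp [hW, h1 S hW]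
      · by_cases hU : S ∈ U
        · simp [hW, hU, h2 S hU]
        · simp [hW, hU]
    · intro h
      refine ⟨fun S hS => ?_, fun S hS => ?_⟩
      · simpa [hS] using h S
      · have hW : S ∉ W := fun h' => Finset.disjoint_left.1 hd h' hS
        simpa [hS, hW] using h S
  rw [hset, measureReal_def]
  have : birthMeasure n = Measure.pi fun _ => unif := rfl
  rw [this, Measure.pi_pi, ENNReal.toReal_prod]
  have : ∀ S : Finset (Fin n), (unif (if S ∈ W then I else if S ∈ U then Set.Ioi b else Set.univ)).toReal
      = (if S ∈ W then unif.real I else 1) * (if S ∈ U then unif.real (Set.Ioi b) else 1) := by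
    intro S
    by_cases hW : S ∈ W
    · have hU : S ∉ U := Finset.disjoint_left.1 hd hW
      simp [hW, hU, measureReal_def]
    · by_cases hU : S ∈ U
      · simp [hW, hU, measureReal_def]
      · simp [hW, hU]
  rw [Finset.prod_congr rfl fun S _ => this S, Finset.prod_mul_distrib]
  congr 1
  · rw [Finset.prod_ite_mem]; simp
  · rw [Finset.prod_ite_mem]; simp

lemma box_meas {n : ℕ} (W U : Finset (Finset (Fin n))) {I : Set ℝ} (hI : MeasurableSet I) (b : ℝ) :
    MeasurableSet {t : Finset (Fin n) → ℝ | (∀ S ∈ W, t S ∈ I) ∧ ∀ S ∈ U, b < t S} := by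
  have : {t : Finset (Fin n) → ℝ | (∀ S ∈ W, t S ∈ I) ∧ ∀ S ∈ U, b < t S} =
      (⋂ S ∈ W, (fun t => t S) ⁻¹' I) ∩ ⋂ S ∈ U, (fun t => t S) ⁻¹' (Set.Ioi b) := by
    ext; simp
  rw [this]
  exact (Finset.measurableSet_biInter _ fun S _ => (measurable_pi_apply S) hI).inter
    (Finset.measurableSet_biInter _ fun S _ => (measurable_pi_apply S) measurableSet_Ioi)

lemma second_moment {Ω : Type*} [MeasurableSpace Ω] (μ : Measure Ω) [IsProbabilityMeasure μ]
    {ι : Type*} (I : Finset ι) (E : ι → Set Ω) (hE : ∀ i, MeasurableSet (E i)) (η : ℝ)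
    (hη : 0 ≤ η)
    (hp : ∀ i ∈ I, ∀ i' ∈ I, i ≠ i' →
      μ.real (E i ∩ E i') ≤ (1 + η) * (μ.real (E i) * μ.real (E i')))
    (M : ℝ) (hM : M = ∑ i ∈ I, μ.real (E i)) (hM0 : 0 < M) :
    μ.real {ω | ((I.filter fun i => ω ∈ E i).card : ℝ) < M / 2} ≤ 4 / M + 4 * η := by
  let f : ι → Ω → ℝ := fun i => (E i).indicator 1
  have hfi : ∀ i, Integrable (f i) μ := fun i => (integrable_const 1).indicator (hE i)
  have hff : ∀ i i', f i * f i' = (E i ∩ E i').indicator 1 := by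
    intro i i'
    rw [Set.inter_indicator_one]
  have hffi : ∀ i i', Integrable (fun ω => f i ω * f i' ω) μ := by
    intro i i'
    have : (fun ω => f i ω * f i' ω) = (E i ∩ E i').indicator 1 := hff i i'
    rw [this]
    exact (integrable_const (1 : ℝ)).indicator ((hE i).inter (hE i'))
  have hintg : ∀ i, ∫ ω, f i ω ∂μ = μ.real (E i) := fun i => integral_indicator_one (hE i)
  have hint2 : ∀ i i', ∫ ω, f i ω * f i' ω ∂μ = μ.real (E i ∩ E i') := by
    intro i i'
    have : (fun ω => f i ω * f i' ω) = (E i ∩ E i').indicator 1 := hff i i'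
    rw [this]
    exact integral_indicator_one ((hE i).inter (hE i'))
  let X : Ω → ℝ := fun ω => ∑ i ∈ I, f i ω
  have hX : ∀ ω, X ω = ((I.filter fun i => ω ∈ E i).card : ℝ) := by
    intro ω
    simp only [X, f, Set.indicator_apply, Pi.one_apply]
    rw [Finset.sum_boole]
  have hXi : Integrable X μ := integrable_finsetSum _ fun i _ => hfi i
  have hXX : ∀ ω, X ω ^ 2 = ∑ i ∈ I, ∑ i' ∈ I, f i ω * f i' ω := by
    intro ω
    simp only [X, pow_two, Finset.sum_mul_sum]
  have hXXi : Integrable (fun ω => X ω ^ 2) μ := by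
    simp only [hXX]
    exact integrable_finsetSum _ fun i _ => integrable_finsetSum _ fun i' _ => hffi i i'
  have hEX : ∫ ω, X ω ∂μ = M := by
    simp only [X]
    rw [integral_finsetSum _ fun i _ => hfi i, hM]
    exact Finset.sum_congr rfl fun i _ => hintg i
  have hEXX : ∫ ω, X ω ^ 2 ∂μ ≤ M + (1 + η) * M ^ 2 := by
    simp only [hXX]
    rw [integral_finsetSum _ fun i _ => integrable_finsetSum _ fun i' _ => hffi i i']
    have : ∀ i ∈ I, ∫ ω, ∑ i' ∈ I, f i ω * f i' ω ∂μ ≤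
        μ.real (E i) + (1 + η) * (μ.real (E i) * M) := by
      intro i hi
      rw [integral_finsetSum _ fun i' _ => hffi i i']
      simp only [hint2]
      have h1 : ∀ i' ∈ I, μ.real (E i ∩ E i') ≤ (if i' = i then μ.real (E i) else 0) +
          (1 + η) * (μ.real (E i) * μ.real (E i')) := by
        intro i' hi'
        by_cases h : i' = i
        · subst h
          simp only [if_true, Set.inter_self]
          have : 0 ≤ (1 + η) * (μ.real (E i') * μ.real (E i')) := by positivity
          linarith
        · simp only [h, if_false, zero_add]
          exact hp i hi i' hi' (Ne.symm h)
      refine (Finset.sum_le_sum h1).trans (le_of_eq ?_)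
      rw [Finset.sum_add_distrib, Finset.sum_ite_eq' I i, if_pos hi, hM, ← Finset.mul_sum,
        ← Finset.mul_sum]
    refine (Finset.sum_le_sum this).trans (le_of_eq ?_)
    rw [Finset.sum_add_distrib, ← Finset.mul_sum, ← Finset.sum_mul, ← hM]
    ring
  have hvar : ∫ ω, (X ω - M) ^ 2 ∂μ ≤ M + η * M ^ 2 := by
    have e : ∀ ω, (X ω - M) ^ 2 = X ω ^ 2 - (2 * M) * X ω + M ^ 2 := fun ω => by ring
    simp only [e]
    have hs : Integrable (fun ω => X ω ^ 2 - (2 * M) * X ω) μ := hXXi.sub (hXi.const_mul _)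
    rw [integral_add hs (integrable_const _),
      integral_sub hXXi (hXi.const_mul _), integral_const_mul, hEX]
    simp only [integral_const, probReal_univ, smul_eq_mul, one_mul]
    nlinarith
  have hvi : Integrable (fun ω => (X ω - M) ^ 2) μ := by
    have e : ∀ ω, (X ω - M) ^ 2 = X ω ^ 2 - (2 * M) * X ω + M ^ 2 := fun ω => by ring
    simp only [e]
    exact (hXXi.sub (hXi.const_mul _)).add (integrable_const _)
  have hmk := mul_meas_ge_le_integral_of_nonneg (μ := μ) (f := fun ω => (X ω - M) ^ 2)
    (Eventually.of_forall fun ω => sq_nonneg _) hvi (M ^ 2 / 4)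
  have hmono : μ.real {ω | ((I.filter fun i => ω ∈ E i).card : ℝ) < M / 2} ≤
      μ.real {ω | M ^ 2 / 4 ≤ (X ω - M) ^ 2} := by
    refine measureReal_mono ?_
    intro ω hω
    simp only [Set.mem_ofPred_eq, ← hX] at hω ⊢
    nlinarith
  refine hmono.trans ?_
  have h3 := hmk.trans hvar
  have h4 : 4 / M + 4 * η = (M + η * M ^ 2) / (M ^ 2 / 4) := by field_simp
  rw [h4, le_div_iff₀ (by positivity)]
  linarith

/-- The isolated simplices -/
noncomputable def Xs (k : ℕ) {n : ℕ} (cen : Finset (Fin n) → Finset (Fin n)) (a b : ℝ)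
    (t : Finset (Fin n) → ℝ) : Finset (Finset (Fin n)) :=
  ((Finset.univ : Finset (Fin n)).powersetCard (k + 1)).filter fun K =>
    t K ≤ a ∧ ∀ S ∈ Nb k K (cen K), b < t S

lemma Xs_prob {k j n : ℕ} (hjk : j < k) (cen : Finset (Fin n) → Finset (Fin n))
    (hc : ∀ K : Finset (Fin n), K.card = k + 1 → (cen K).card = j ∧ cen K ⊆ K)
    {a b g : ℝ} (ha : 0 ≤ a) (hab : a ≤ b) (hb : b ≤ 1)
    (hD : b * ((k - j + 1) ^ 2 * n ^ (k - j - 1) : ℕ) ≤ 1 / 2)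
    (hg : 0 < g)
    (hgle : g ≤ n.choose (k + 1) * (a * (1 - b) ^ ((k - j + 1) * n.choose (k - j)))) :
    (birthMeasure n).real {t | ((Xs k cen a b t).card : ℝ) < g / 2} ≤
      4 / g + 8 * (b * ((k - j + 1) ^ 2 * n ^ (k - j - 1) : ℕ)) := by
  set D : ℕ := (k - j + 1) ^ 2 * n ^ (k - j - 1) with hDdef
  have hb0 : 0 ≤ b := ha.trans hab
  let E : Finset (Fin n) → Set (Finset (Fin n) → ℝ) := fun K =>
    {t | (∀ S ∈ ({K} : Finset (Finset (Fin n))), t S ∈ Set.Iic a) ∧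
      ∀ S ∈ Nb k K (cen K), b < t S}
  have hEm : ∀ K, MeasurableSet (E K) := fun K => box_meas _ _ measurableSet_Iic _
  have hnot : ∀ K : Finset (Fin n), K ∉ Nb k K (cen K) := fun K h => (mem_Nb.1 h).2.1 rfl
  have hEP : ∀ K, (birthMeasure n).real (E K) = a * (1 - b) ^ (Nb k K (cen K)).card := by
    intro K
    rw [box_real _ _ (by simpa using hnot K), unif_Iic ha (hab.trans hb), unif_Ioi hb0 hb]
    simp
  let I := (Finset.univ : Finset (Fin n)).powersetCard (k + 1)
  let M := ∑ K ∈ I, (birthMeasure n).real (E K)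
  have hgM : g ≤ M := by
    refine hgle.trans ?_
    have : (n.choose (k + 1) : ℝ) = I.card := by simp [I, Finset.card_powersetCard]
    rw [this, ← nsmul_eq_mul]
    refine Finset.card_nsmul_le_sum _ _ _ fun K hK => ?_
    have hKc := (Finset.mem_powersetCard.1 hK).2
    rw [hEP]
    refine mul_le_mul_of_nonneg_left ?_ ha
    exact pow_le_pow_of_le_one (by linarith) (by linarith)
      (Nb_card_le hjk hKc (hc K hKc).1 (hc K hKc).2)
  have hM0 : 0 < M := hg.trans_le hgM
  have hsm := second_moment (birthMeasure n) I E hEm (2 * (b * D)) (by positivity) ?_ M rfl hM0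
  · have hmono : (birthMeasure n).real {t | ((Xs k cen a b t).card : ℝ) < g / 2} ≤
        (birthMeasure n).real {t | ((I.filter fun K => t ∈ E K).card : ℝ) < M / 2} := by
      refine measureReal_mono ?_
      intro t ht
      simp only [Set.mem_ofPred_eq] at ht ⊢
      have : (I.filter fun K => t ∈ E K) = Xs k cen a b t := by
        simp [I, E, Xs]
      rw [this]
      linarith
    have hsm' : (birthMeasure n).real {t | ((I.filter fun K => t ∈ E K).card : ℝ) < M / 2} ≤
        4 / M + 4 * (2 * (b * D)) := by convert hsm
    refine hmono.trans (hsm'.trans ?_)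
    have : 4 / M ≤ 4 / g := by gcongr
    linarith
  · intro K hK K' hK' hne
    have hKc := (Finset.mem_powersetCard.1 hK).2
    have hKc' := (Finset.mem_powersetCard.1 hK').2
    have hpos : 0 ≤ (1 + 2 * (b * D)) * ((birthMeasure n).real (E K) * (birthMeasure n).real (E K')) := by
      positivity
    by_cases h1 : K' ∈ Nb k K (cen K)
    · have : E K ∩ E K' = ∅ := by
        rw [Set.eq_empty_iff_forall_notMem]
        rintro t ⟨h2, h3⟩
        have e1 := h2.2 K' h1
        have e2 : t K' ≤ a := h3.1 K' (Finset.mem_singleton_self _)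
        linarith
      rw [this]; simpa using hpos
    by_cases h1' : K ∈ Nb k K' (cen K')
    · have : E K ∩ E K' = ∅ := by
        rw [Set.eq_empty_iff_forall_notMem]
        rintro t ⟨h2, h3⟩
        have e1 := h3.2 K h1'
        have e2 : t K ≤ a := h2.1 K (Finset.mem_singleton_self _)
        linarith
      rw [this]; simpa using hpos
    have hint : E K ∩ E K' = {t | (∀ S ∈ ({K, K'} : Finset (Finset (Fin n))), t S ∈ Set.Iic a) ∧
        ∀ S ∈ Nb k K (cen K) ∪ Nb k K' (cen K'), b < t S} := by
      ext t
      simp only [E, Set.mem_inter_iff, Set.mem_ofPred_eq, Finset.mem_singleton, forall_eq,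
        Finset.mem_insert, forall_eq_or_imp, Finset.mem_union]
      constructor
      · rintro ⟨⟨e1, e2⟩, e3, e4⟩
        exact ⟨⟨e1, e3⟩, fun S hS => hS.elim (e2 S) (e4 S)⟩
      · rintro ⟨⟨e1, e3⟩, e⟩
        exact ⟨⟨e1, fun S hS => e S (Or.inl hS)⟩, e3, fun S hS => e S (Or.inr hS)⟩
    have hdis : Disjoint ({K, K'} : Finset (Finset (Fin n)))
        (Nb k K (cen K) ∪ Nb k K' (cen K')) := by
      rw [Finset.disjoint_left]
      intro S hS hS'
      rcases Finset.mem_insert.1 hS with rfl | h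
      · rcases Finset.mem_union.1 hS' with h | h
        · exact hnot _ h
        · exact h1' h
      · rw [Finset.mem_singleton] at h
        subst h
        rcases Finset.mem_union.1 hS' with h | h
        · exact h1 h
        · exact hnot _ h
    rw [hint, box_real _ _ hdis, unif_Iic ha (hab.trans hb), unif_Ioi hb0 hb, hEP, hEP,
      Finset.card_pair hne]
    have hcard := Finset.card_union_add_card_inter (Nb k K (cen K)) (Nb k K' (cen K'))
    have hle := Nb_inter_card_le hjk hKc (hc K hKc).1 (hc K hKc).2 hKc' (hc K' hKc').1
      (hc K' hKc').2 hne h1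
    set u := (Nb k K (cen K) ∪ Nb k K' (cen K')).card
    set v := (Nb k K (cen K) ∩ Nb k K' (cen K')).card
    set x := (Nb k K (cen K)).card
    set y := (Nb k K' (cen K')).card
    have h2 : a * (1 - b) ^ x * (a * (1 - b) ^ y) = a ^ 2 * (1 - b) ^ u * (1 - b) ^ v := by
      have : (1 - b) ^ x * (1 - b) ^ y = (1 - b) ^ u * (1 - b) ^ v := by
        rw [← pow_add, ← pow_add, hcard]
      linear_combination a ^ 2 * this
    rw [h2]
    have h3 : 1 - b * D ≤ (1 - b) ^ v := by
      have e1 : (1 - b) ^ D ≤ (1 - b) ^ v :=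
        pow_le_pow_of_le_one (by linarith) (by linarith) hle
      have e2 := one_add_mul_le_pow (a := -b) (by linarith) D
      have e3 : (1 + -b) = 1 - b := by ring
      rw [e3] at e2
      linarith
    have h4 : 1 ≤ (1 + 2 * (b * D)) * (1 - b) ^ v := by
      have h0 : 0 ≤ b * (D : ℝ) := by positivity
      calc (1 : ℝ) ≤ (1 + 2 * (b * D)) * (1 - b * D) := by nlinarith
        _ ≤ _ := by gcongr
    have h5 : 0 ≤ a ^ 2 * (1 - b) ^ u := by
      have : 0 ≤ 1 - b := by linarith
      positivity
    nlinarith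

lemma birth_prob {k j n : ℕ} (hjk : j < k) {x y z : ℝ} (hxy : x ≤ y) (hz : 0 ≤ z) (hz1 : z ≤ 1) :
    (birthMeasure n).real {t | ∃ K C : Finset (Fin n), K.card = k + 1 ∧ C.card = j ∧ C ⊆ K ∧
      x < t K ∧ t K ≤ y ∧ ∀ S ∈ Nb k K C, z < t S} ≤
      2 ^ (k + 1) * (n ^ (k + 1) *
        ((y - x) * (1 - z) ^ ((k - j + 1) * (n - (k + 1)).choose (k - j)))) := by
  let I := ((Finset.univ : Finset (Fin n)).powersetCard (k + 1)).sigma fun K => K.powersetCard j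
  let E : (Σ _ : Finset (Fin n), Finset (Fin n)) → Set (Finset (Fin n) → ℝ) := fun K =>
    {t | (∀ S ∈ ({K.1} : Finset (Finset (Fin n))), t S ∈ Set.Ioc x y) ∧
      ∀ S ∈ Nb k K.1 K.2, z < t S}
  have hsub : {t : Finset (Fin n) → ℝ | ∃ K C : Finset (Fin n), K.card = k + 1 ∧ C.card = j ∧ C ⊆ K ∧
      x < t K ∧ t K ≤ y ∧ ∀ S ∈ Nb k K C, z < t S} ⊆ ⋃ i ∈ I, E i := by
    rintro t ⟨K, C, h1, h2, h3, h4, h5, h6⟩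
    refine Set.mem_iUnion₂.2 ⟨⟨K, C⟩, ?_, ?_⟩
    · simp [I, h1, h2, h3]
    · exact ⟨by simp [h4, h5], h6⟩
  refine (measureReal_mono hsub (measure_ne_top _ _)).trans ?_
  refine (measureReal_biUnion_finset_le _ _).trans ?_
  have hB : ∀ i ∈ I, (birthMeasure n).real (E i) ≤
      (y - x) * (1 - z) ^ ((k - j + 1) * (n - (k + 1)).choose (k - j)) := by
    rintro ⟨K, C⟩ hi
    simp only [I, Finset.mem_sigma, Finset.mem_powersetCard] at hi
    rw [box_real _ _ (by
      simp only [Finset.disjoint_singleton_left]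
      exact fun h => (mem_Nb.1 h).2.1 rfl), unif_Ioi hz hz1]
    simp only [Finset.card_singleton, pow_one]
    have := Nb_card_ge hjk hi.1.2 hi.2.2 hi.2.1
    have h1z : 0 ≤ 1 - z := by linarith
    refine mul_le_mul (unif_Ioc_le hxy) ?_ (by positivity) (by linarith)
    exact pow_le_pow_of_le_one h1z (by linarith) this
  refine (Finset.sum_le_card_nsmul _ _ _ hB).trans ?_
  rw [nsmul_eq_mul, ← mul_assoc (2 ^ (k + 1) : ℝ)]
  have h1z : 0 ≤ 1 - z := by linarith
  have hxy' : 0 ≤ y - x := by linarith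
  refine mul_le_mul_of_nonneg_right ?_ (by positivity)
  have hI : I.card ≤ 2 ^ (k + 1) * n ^ (k + 1) := by
    rw [Finset.card_sigma]
    refine (Finset.sum_le_card_nsmul _ _ (2 ^ (k + 1)) ?_).trans ?_
    · intro K hK
      rw [Finset.card_powersetCard, (Finset.mem_powersetCard.1 hK).2]
      exact Nat.choose_le_two_pow _ _
    · rw [Finset.card_powersetCard, smul_eq_mul, mul_comm]
      simp only [Finset.card_univ, Fintype.card_fin]
      gcongr
      exact Nat.choose_le_pow _ _
  exact_mod_cast hI

lemma shell_fix {k j n α : ℕ} (hjk : j < k) (hα : α ≤ n - (k + 1)) {s : ℝ} (hs : 0 ≤ s)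
    (hs1 : s ≤ 1) (K P : Finset (Fin n)) (hK : K.card = k + 1) (hPK : P ⊆ K)
    (hP : P.card = j + 1) :
    (birthMeasure n).real {t | ¬ ∃ a, a ∉ K ∧ ∀ x ∈ P, insert a (P.erase x) ∈ complexAt k n t s} ≤
      ((j + 1) * (1 - s) ^ ((n - (k + 1) - α).choose (k - j))) ^ α := by
  have hVK : (Finset.univ \ K).card = n - (k + 1) := by
    rw [Finset.card_sdiff_of_subset (Finset.subset_univ _), hK]; simp
  obtain ⟨A, hA1, hA2⟩ := Finset.exists_subset_card_eq (hα.trans_eq hVK.symm)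
  let B := (Finset.univ \ K) \ A
  have hB : B.card = n - (k + 1) - α := by
    rw [Finset.card_sdiff_of_subset hA1, hVK, hA2]
  have hAK : ∀ a ∈ A, a ∉ K := fun a ha => (Finset.mem_sdiff.1 (hA1 ha)).2
  have hBK : ∀ a ∈ B, a ∉ K ∧ a ∉ A := fun a ha =>
    ⟨(Finset.mem_sdiff.1 (Finset.mem_sdiff.1 ha).1).2, (Finset.mem_sdiff.1 ha).2⟩
  let φ : (A → P) → (A × Finset (Fin n)) → Finset (Fin n) := fun f x =>
    insert (x.1 : Fin n) (P.erase (f x.1)) ∪ x.2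
  let T : (A → P) → Finset (Finset (Fin n)) := fun f =>
    ((Finset.univ : Finset A) ×ˢ B.powersetCard (k - j)).image (φ f)
  have hT : ∀ f, (T f).card = α * (n - (k + 1) - α).choose (k - j) := by
    intro f
    rw [Finset.card_image_of_injOn, Finset.card_product, Finset.card_powersetCard, hB,
      Finset.card_univ, Fintype.card_coe, hA2]
    rintro ⟨a, Y⟩ h ⟨a', Y'⟩ h' he
    simp only [Finset.coe_product, Set.mem_prod, Finset.mem_coe, Finset.mem_powersetCard,
      Finset.mem_univ, true_and] at h h'
    have aux : ∀ (a : A) (Y : Finset (Fin n)), Y ⊆ B → φ f (a, Y) ∩ A = {(a : Fin n)} ∧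
        φ f (a, Y) ∩ B = Y := by
      intro a Y hY
      constructor
      · ext y
        simp only [φ, Finset.mem_inter, Finset.mem_union, Finset.mem_insert, Finset.mem_erase,
          Finset.mem_singleton]
        constructor
        · rintro ⟨(e | e) | e, e'⟩
          · exact e
          · exact absurd (hPK e.2) (hAK y e')
          · exact absurd e' (hBK y (hY e)).2
        · rintro rfl
          exact ⟨Or.inl (Or.inl rfl), a.2⟩
      · ext y
        simp only [φ, Finset.mem_inter, Finset.mem_union, Finset.mem_insert, Finset.mem_erase]
        constructor
        · rintro ⟨(e | e) | e, e'⟩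
          · exact absurd (e ▸ a.2) (hBK y e').2
          · exact absurd (hPK e.2) (hBK y e').1
          · exact e
        · intro e
          exact ⟨Or.inr e, hY e⟩
    have g1 := aux a Y h.1
    have g2 := aux a' Y' h'.1
    rw [he] at g1
    have e1 : Y = Y' := by exact g1.2.symm.trans g2.2
    have e2 : a = a' := Subtype.ext (Finset.singleton_injective (g1.1.symm.trans g2.1))
    rw [e1, e2]
  have hsub : {t | ¬ ∃ a, a ∉ K ∧ ∀ x ∈ P, insert a (P.erase x) ∈ complexAt k n t s} ⊆
      ⋃ f ∈ (Finset.univ : Finset (A → P)), {t : Finset (Fin n) → ℝ |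
        (∀ S ∈ (∅ : Finset (Finset (Fin n))), t S ∈ (Set.univ : Set ℝ)) ∧ ∀ S ∈ T f, s < t S} := by
    intro t ht
    simp only [Set.mem_ofPred_eq] at ht
    push Not at ht
    have : ∀ a : A, ∃ x : P, insert (a : Fin n) (P.erase x) ∉ complexAt k n t s := by
      intro a
      obtain ⟨x, hx, hx'⟩ := ht a (hAK a a.2)
      exact ⟨⟨x, hx⟩, hx'⟩
    choose f hf using this
    refine Set.mem_iUnion₂.2 ⟨f, Finset.mem_univ _, by simp, ?_⟩
    intro S hS
    obtain ⟨⟨a, Y⟩, hx, rfl⟩ := Finset.mem_image.1 hS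
    simp only [Finset.mem_product, Finset.mem_univ, true_and, Finset.mem_powersetCard] at hx
    by_contra hcon
    refine hf a (Or.inr ⟨Finset.insert_nonempty _ _, φ f (a, Y), ?_, not_lt.1 hcon,
      Finset.subset_union_left⟩)
    have hdis : Disjoint (insert (a : Fin n) (P.erase (f a))) Y := by
      rw [Finset.disjoint_left]
      intro y hy hyY
      have := hBK y (hx.1 hyY)
      rcases Finset.mem_insert.1 hy with h | h
      · exact this.2 (h ▸ a.2)
      · exact this.1 (hPK (Finset.mem_of_mem_erase h))
    simp only [φ]
    rw [Finset.card_union_of_disjoint hdis, Finset.card_insert_of_notMem, hx.2,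
      Finset.card_erase_of_mem (f a).2, hP]
    · omega
    · intro h
      exact hAK a a.2 (hPK (Finset.mem_of_mem_erase h))
  refine (measureReal_mono hsub (measure_ne_top _ _)).trans ?_
  refine (measureReal_biUnion_finset_le _ _).trans (le_of_eq ?_)
  have : ∀ f ∈ (Finset.univ : Finset (A → P)), (birthMeasure n).real {t : Finset (Fin n) → ℝ |
        (∀ S ∈ (∅ : Finset (Finset (Fin n))), t S ∈ (Set.univ : Set ℝ)) ∧ ∀ S ∈ T f, s < t S} =
      (1 - s) ^ (α * (n - (k + 1) - α).choose (k - j)) := by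
    intro f _
    rw [box_real _ _ (by simp), unif_Ioi hs hs1, hT]
    simp
  rw [Finset.sum_congr rfl this, Finset.sum_const, nsmul_eq_mul, Finset.card_univ,
    Fintype.card_fun, Fintype.card_coe, Fintype.card_coe, hA2, hP, mul_pow, ← pow_mul, mul_comm α]
  push_cast
  rfl

lemma shell_prob {k j n α : ℕ} (hjk : j < k) (hα : α ≤ n - (k + 1)) {s : ℝ} (hs : 0 ≤ s)
    (hs1 : s ≤ 1) :
    (birthMeasure n).real {t | ¬ Shells k j n t s} ≤
      2 ^ (k + 1) * (n ^ (k + 1) *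
      ((j + 1) * (1 - s) ^ ((n - (k + 1) - α).choose (k - j))) ^ α) := by
  let I := ((Finset.univ : Finset (Fin n)).powersetCard (k + 1)).sigma fun K => K.powersetCard (j + 1)
  have hsub : {t | ¬ Shells k j n t s} ⊆ ⋃ i ∈ I,
      {t | ¬ ∃ a, a ∉ i.1 ∧ ∀ x ∈ i.2, insert a (i.2.erase x) ∈ complexAt k n t s} := by
    intro t ht
    simp only [Set.mem_ofPred_eq, Shells] at ht
    push Not at ht
    obtain ⟨K, P, h1, h2, h3, h4⟩ := ht
    refine Set.mem_iUnion₂.2 ⟨⟨K, P⟩, ?_, ?_⟩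
    · simp [I, h1, h2, h3]
    · simp only [Set.mem_ofPred_eq]
      push Not
      exact h4
  refine (measureReal_mono hsub (measure_ne_top _ _)).trans ?_
  refine (measureReal_biUnion_finset_le _ _).trans ?_
  have hB : ∀ i ∈ I, (birthMeasure n).real
      {t | ¬ ∃ a, a ∉ i.1 ∧ ∀ x ∈ i.2, insert a (i.2.erase x) ∈ complexAt k n t s} ≤
      ((j + 1) * (1 - s) ^ ((n - (k + 1) - α).choose (k - j))) ^ α := by
    rintro ⟨K, C⟩ hi
    simp only [I, Finset.mem_sigma, Finset.mem_powersetCard] at hi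
    exact shell_fix hjk hα hs hs1 K C hi.1.2 hi.2.1 hi.2.2
  refine (Finset.sum_le_card_nsmul _ _ _ hB).trans ?_
  rw [nsmul_eq_mul, ← mul_assoc (2 ^ (k + 1) : ℝ)]
  have h1z : 0 ≤ 1 - s := by linarith
  refine mul_le_mul_of_nonneg_right ?_ (by positivity)
  have hI : I.card ≤ 2 ^ (k + 1) * n ^ (k + 1) := by
    rw [Finset.card_sigma]
    refine (Finset.sum_le_card_nsmul _ _ (2 ^ (k + 1)) ?_).trans ?_
    · intro K hK
      rw [Finset.card_powersetCard, (Finset.mem_powersetCard.1 hK).2]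
      exact Nat.choose_le_two_pow _ _
    · rw [Finset.card_powersetCard, smul_eq_mul, mul_comm]
      simp only [Finset.card_univ, Fintype.card_fin]
      gcongr
      exact Nat.choose_le_pow _ _
  exact_mod_cast hI

/-- The scale `m!/((m+1) n^m)`. -/
noncomputable def cn (m n : ℕ) : ℝ := (Nat.factorial m : ℝ) / (((m : ℝ) + 1) * (n : ℝ) ^ m)

lemma cn_pos {m n : ℕ} (hn : 0 < n) : 0 < cn m n := by
  have : (0 : ℝ) < n := by exact_mod_cast hn
  unfold cn; positivity

lemma cn_nonneg (m n : ℕ) : 0 ≤ cn m n := by unfold cn; positivity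

lemma cn_le {m n : ℕ} (hm : 1 ≤ m) (hn : 0 < n) : cn m n ≤ Nat.factorial m / n := by
  have h0 : (1 : ℝ) ≤ n := by exact_mod_cast hn
  have h1 : (n : ℝ) ≤ (n : ℝ) ^ m := le_self_pow₀ h0 (by omega)
  unfold cn
  apply div_le_div_of_nonneg_left (by positivity) (by positivity)
  nlinarith [(Nat.cast_nonneg m : (0:ℝ) ≤ m)]

lemma cn_choose {m n : ℕ} (hn : 0 < n) : (((m + 1) * n.choose m : ℕ) : ℝ) * cn m n ≤ 1 := by
  have h0 : (0 : ℝ) < n := by exact_mod_cast hn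
  have h := Nat.choose_le_pow_div (α := ℝ) m n
  rw [le_div_iff₀ (by positivity)] at h
  unfold cn
  push_cast
  rw [← mul_div_assoc, div_le_one (by positivity)]
  nlinarith [(Nat.cast_nonneg m : (0:ℝ) ≤ m)]

lemma lower_pow {m n : ℕ} (hn : 0 < n) {x : ℝ} (hx : 0 ≤ x) (h1 : x * cn m n ≤ 1 / 2)
    (h2 : x ^ 2 * cn m n ≤ 1 / 4) :
    Real.exp (-x) / 2 ≤ (1 - x * cn m n) ^ ((m + 1) * n.choose m) := by
  set N := (m + 1) * n.choose m
  have hN : (N : ℝ) * cn m n ≤ 1 := cn_choose hn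
  have hc := cn_pos (m := m) hn
  set c := cn m n
  set b := x * c with hb
  have hb0 : 0 ≤ b := by positivity
  have hb1 : (0:ℝ) < 1 - b := by linarith
  have e1 : Real.exp (-(b + 2 * b ^ 2)) ≤ 1 - b := by
    have h3 : (1 - b)⁻¹ ≤ Real.exp (b + 2 * b ^ 2) := by
      have : (1 - b)⁻¹ ≤ 1 + (b + 2 * b ^ 2) := by
        rw [inv_le_iff_one_le_mul₀ hb1]
        nlinarith [mul_nonneg (sq_nonneg b) (by linarith : 0 ≤ 1 / 2 - b)]
      have h4 := Real.add_one_le_exp (b + 2 * b ^ 2)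
      linarith
    rw [Real.exp_neg]
    exact inv_le_of_inv_le₀ hb1 h3
  have e2 : Real.exp (-(b + 2 * b ^ 2)) ^ N ≤ (1 - b) ^ N :=
    pow_le_pow_left₀ (Real.exp_pos _).le e1 _
  refine le_trans ?_ e2
  rw [← Real.exp_nat_mul]
  have e3 : (N : ℝ) * b ≤ x := by
    have : (N : ℝ) * b = x * (N * c) := by rw [hb]; ring
    rw [this]; nlinarith
  have e4 : (N : ℝ) * b ^ 2 ≤ 1 / 4 := by
    have : (N : ℝ) * b ^ 2 = (x ^ 2 * c) * (N * c) := by rw [hb]; ring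
    rw [this]
    have : 0 ≤ x ^ 2 * c := by positivity
    nlinarith
  have e5 : Real.exp (-x) / 2 = Real.exp (-x - Real.log 2) := by
    rw [Real.exp_sub, Real.exp_log (by norm_num)]
  rw [e5, Real.exp_le_exp]
  have := Real.log_two_gt_d9
  nlinarith

lemma upper_pow {m n k : ℕ} (hn : k + 1 + m ≤ n) {z : ℝ} (hz : 0 ≤ z)
    (h1 : z * cn m n ≤ 1) (h2 : z * (m * (k + m) / n) ≤ 1 / 2) :
    (1 - z * cn m n) ^ ((m + 1) * (n - (k + 1)).choose m) ≤ 2 * Real.exp (-z) := by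
  set N := (m + 1) * (n - (k + 1)).choose m with hN
  have hn0 : (0 : ℝ) < n := by exact_mod_cast (by omega : 0 < n)
  have hc := cn_pos (m := m) (n := n) (by omega)
  have hNc : 1 - m * (k + m) / n ≤ (N : ℝ) * cn m n := by
    have h := Nat.pow_le_choose (α := ℝ) m (n - (k + 1))
    rw [div_le_iff₀ (by positivity)] at h
    have e : (N : ℝ) * cn m n = ((n - (k + 1)).choose m * (Nat.factorial m)) / (n : ℝ) ^ m := by
      rw [hN, cn]; push_cast; field_simp
    rw [e]
    have h3 : ((n - (k + 1) + 1 - m : ℕ) : ℝ) = n - (k + m) := by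
      have : n - (k + 1) + 1 - m = n - (k + m) := by omega
      rw [this, Nat.cast_sub (by omega)]; push_cast; ring
    rw [h3] at h
    refine le_trans ?_ (div_le_div_of_nonneg_right h (by positivity))
    rw [← div_pow, sub_div, div_self hn0.ne']
    have hle : ((k : ℝ) + m) / n ≤ 1 := by
      rw [div_le_one hn0]; exact_mod_cast (by omega : k + m ≤ n)
    have := one_add_mul_le_pow (a := -(((k : ℝ) + m) / n)) (by linarith) m
    have e2 : (1 : ℝ) - m * (k + m) / n = 1 + m * -(((k : ℝ) + m) / n) := by ring
    rw [e2, sub_eq_add_neg]; exact this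
  have e1 : (1 - z * cn m n) ^ N ≤ Real.exp (-(z * cn m n)) ^ N :=
    pow_le_pow_left₀ (by linarith) (Real.one_sub_le_exp_neg _) _
  refine e1.trans ?_
  rw [← Real.exp_nat_mul]
  have e5 : 2 * Real.exp (-z) = Real.exp (Real.log 2 + -z) := by
    rw [Real.exp_add, Real.exp_log (by norm_num)]
  rw [e5, Real.exp_le_exp]
  have := Real.log_two_gt_d9
  have := mul_le_mul_of_nonneg_left hNc hz
  nlinarith

lemma scale_eq {k j n : ℕ} (hjk : j < k) (hn : 0 < n) (x : ℝ) :
    (n : ℝ) ^ (k + 1) * cn (k - j) n * Real.exp (-x) =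
      (Nat.factorial (k - j) / (((k - j : ℕ) : ℝ) + 1)) *
        Real.exp (((j : ℝ) + 1) * Real.log n - x) := by
  have hn0 : (0 : ℝ) < n := by exact_mod_cast hn
  have e : Real.exp (((j : ℝ) + 1) * Real.log n - x) = (n : ℝ) ^ (j + 1) * Real.exp (-x) := by
    rw [sub_eq_add_neg, Real.exp_add]
    congr 1
    have := Real.exp_nat_mul (Real.log n) (j + 1)
    rw [Real.exp_log hn0] at this
    rw [← this]; push_cast; rfl
  rw [e, cn]
  have : (n : ℝ) ^ (k + 1) = (n : ℝ) ^ (j + 1) * (n : ℝ) ^ (k - j) := by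
    rw [← pow_add]; congr 1; omega
  rw [this]
  field_simp

lemma tlog : Tendsto (fun n : ℕ => Real.log (n : ℝ)) atTop atTop :=
  Real.tendsto_log_atTop.comp tendsto_natCast_atTop_atTop

lemma tloglog : Tendsto (fun n : ℕ => Real.log (Real.log (n : ℝ))) atTop atTop :=
  Real.tendsto_log_atTop.comp tlog

lemma tlogpow (a : ℕ) (A : ℝ) :
    Tendsto (fun n : ℕ => A * (Real.log (n : ℝ) ^ a / n)) atTop (nhds 0) := by
  have h := (Real.isLittleO_pow_log_id_atTop (n := a)).tendsto_div_nhds_zero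
  have := (h.comp tendsto_natCast_atTop_atTop).const_mul A
  simpa using this

lemma ev_le (a : ℕ) (A e : ℝ) (he : 0 < e) :
    ∀ᶠ n : ℕ in atTop, A * (Real.log (n : ℝ) ^ a / n) ≤ e :=
  ((tlogpow a A).eventually (Iio_mem_nhds he)).mono fun _ h => le_of_lt h

/-- small-ness facts for parameters of order `log n`. -/
lemma ev_small {m k : ℕ} (hm : 1 ≤ m) (A e : ℝ) (he : 0 < e) :
    ∀ᶠ n : ℕ in atTop, ∀ x : ℝ, 0 ≤ x → x ≤ A * Real.log n →
      x * cn m n ≤ e ∧ x ^ 2 * cn m n ≤ e ∧ x * (m * (k + m) / n) ≤ e ∧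
      x * cn m n * (((m + 1) ^ 2 * n ^ (m - 1) : ℕ) : ℝ) ≤
        ((m + 1) * Nat.factorial m * A) * (Real.log n ^ 1 / n) ∧
      x * cn m n * (((m + 1) ^ 2 * n ^ (m - 1) : ℕ) : ℝ) ≤ e := by
  filter_upwards [ev_le 1 (A * Nat.factorial m) e he, ev_le 2 (A ^ 2 * Nat.factorial m) e he,
    ev_le 1 (A * (m * (k + m))) e he, ev_le 1 ((m + 1) * Nat.factorial m * A) e he,
    eventually_gt_atTop 0] with n h1 h2 h3 h4 hn x hx hxA
  have hn0 : (0 : ℝ) < n := by exact_mod_cast hn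
  have hc := cn_le hm hn
  have hc0 := cn_nonneg m n
  have h5 : x * cn m n * (((m + 1) ^ 2 * n ^ (m - 1) : ℕ) : ℝ) ≤
        ((m + 1) * Nat.factorial m * A) * (Real.log n ^ 1 / n) := by
    have e1 : x * cn m n * (((m + 1) ^ 2 * n ^ (m - 1) : ℕ) : ℝ) =
        x * ((m + 1) * Nat.factorial m / n) := by
      have : (n : ℝ) ^ m = n ^ (m - 1) * n := by rw [← pow_succ]; congr 1; omega
      rw [cn, this]; push_cast; field_simp
    rw [e1]
    calc x * ((m + 1) * Nat.factorial m / n) ≤ A * Real.log n * ((m + 1) * Nat.factorial m / n) := by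
          gcongr
      _ = _ := by ring
  refine ⟨?_, ?_, ?_, h5, h5.trans h4⟩
  · calc x * cn m n ≤ (A * Real.log n) * (Nat.factorial m / n) := by gcongr; exact hx.trans hxA
      _ = _ := by ring
      _ ≤ e := h1
  · calc x ^ 2 * cn m n ≤ (A * Real.log n) ^ 2 * (Nat.factorial m / n) := by gcongr
      _ = _ := by ring
      _ ≤ e := h2
  · calc x * (m * (k + m) / n) ≤ (A * Real.log n) * (m * (k + m) / n) := by gcongr
      _ = _ := by ring
      _ ≤ e := h3

lemma Xs_tendsto {k j : ℕ} (hjk : j < k)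
    (cen : ∀ n : ℕ, Finset (Fin n) → Finset (Fin n))
    (hc : ∀ n, ∀ K : Finset (Fin n), K.card = k + 1 → (cen n K).card = j ∧ cen n K ⊆ K) :
    ∃ κ : ℝ, 0 < κ ∧ ∀ (A : ℝ) (a x : ℕ → ℝ),
      (∀ᶠ n : ℕ in atTop, 0 ≤ a n ∧ a n ≤ x n ∧ x n ≤ A * Real.log n) →
      Tendsto (fun n : ℕ => a n * Real.exp (((j : ℝ) + 1) * Real.log n - x n)) atTop atTop →
      Tendsto (fun n : ℕ => (birthMeasure n).real
        {t | ((Xs k (cen n) (a n * cn (k - j) n) (x n * cn (k - j) n) t).card : ℝ) <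
          κ * (a n * Real.exp (((j : ℝ) + 1) * Real.log n - x n)) / 2}) atTop (nhds 0) := by
  set m := k - j with hmdef
  have hm : 1 ≤ m := by omega
  refine ⟨(Nat.factorial m / ((m : ℝ) + 1)) * (1 / (2 ^ (k + 1) * Nat.factorial (k + 1)) / 2),
    by positivity, ?_⟩
  set κ := (Nat.factorial m / ((m : ℝ) + 1)) * (1 / (2 ^ (k + 1) * Nat.factorial (k + 1)) / 2 : ℝ)
    with hκ
  have hκ0 : 0 < κ := by positivity
  intro A a x hax hG
  set G := fun n : ℕ => a n * Real.exp (((j : ℝ) + 1) * Real.log n - x n) with hGdef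
  have hlim : Tendsto (fun n : ℕ => 4 / (κ * G n) + 8 * (((m + 1) * Nat.factorial m * A) *
      (Real.log n ^ 1 / n))) atTop (nhds 0) := by
    have h1 : Tendsto (fun n : ℕ => 4 / (κ * G n)) atTop (nhds 0) :=
      tendsto_const_nhds.div_atTop (hG.const_mul_atTop hκ0)
    have h2 := (tlogpow 1 ((m + 1) * Nat.factorial m * A)).const_mul 8
    simpa using h1.add h2
  refine squeeze_zero' (Eventually.of_forall fun n => measureReal_nonneg) ?_ hlim
  filter_upwards [hax, hG.eventually_gt_atTop 0, ev_small (k := k) hm A (1/4) (by norm_num),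
    eventually_ge_atTop (2 * k + 1)] with n hx hGn hs hn
  obtain ⟨ha, hax, hxA⟩ := hx
  have hx0 := ha.trans hax
  obtain ⟨s1, s2, -, s4, s5⟩ := hs (x n) hx0 hxA
  have hn0 : (0 : ℝ) < n := by exact_mod_cast (by omega : 0 < n)
  have hcn := cn_nonneg m n
  have key := Xs_prob (n := n) hjk (cen n) (hc n) (a := a n * cn m n) (b := x n * cn m n)
    (g := κ * G n) (by positivity) (by gcongr) (by linarith)
    (by rw [← hmdef]; linarith) (by positivity) ?_
  · refine key.trans ?_
    rw [← hmdef]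
    gcongr
  · have hl := lower_pow (m := m) (n := n) (by omega) hx0 (by linarith) s2
    have hch : (n : ℝ) ^ (k + 1) * (1 / (2 ^ (k + 1) * Nat.factorial (k + 1))) ≤
        n.choose (k + 1) := by
      refine le_trans ?_ (Nat.pow_le_choose (α := ℝ) (k + 1) n)
      have : ((n : ℝ) / 2) ≤ ((n + 1 - (k + 1) : ℕ) : ℝ) := by
        have : ((n + 1 - (k + 1) : ℕ) : ℝ) = n - k := by
          rw [Nat.cast_sub (by omega)]; push_cast; ring
        rw [this]
        have : (2 : ℝ) * k + 1 ≤ n := by exact_mod_cast hn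
        linarith
      calc _ = ((n : ℝ) / 2) ^ (k + 1) / (Nat.factorial (k + 1)) := by rw [div_pow]; field_simp
        _ ≤ _ := by gcongr
    have hsc := scale_eq (n := n) hjk (by omega) (x n)
    rw [← hmdef] at hsc ⊢
    calc κ * G n = (1 / (2 ^ (k + 1) * Nat.factorial (k + 1)) / 2) * a n *
          ((Nat.factorial m / ((m : ℝ) + 1)) * Real.exp (((j : ℝ) + 1) * Real.log n - x n)) := by
          rw [hκ, hGdef]; ring
      _ = ((n : ℝ) ^ (k + 1) * (1 / (2 ^ (k + 1) * Nat.factorial (k + 1)))) *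
          (a n * cn m n * (Real.exp (-x n) / 2)) := by rw [← hsc]; ring
      _ ≤ _ := by gcongr

lemma birth_tendsto {k j : ℕ} (hjk : j < k) (A : ℝ) (x y z : ℕ → ℝ)
    (hxy : ∀ᶠ n : ℕ in atTop, x n ≤ y n ∧ 0 ≤ z n ∧ z n ≤ A * Real.log n)
    (hG : Tendsto (fun n : ℕ => (y n - x n) * Real.exp (((j : ℝ) + 1) * Real.log n - z n))
      atTop (nhds 0)) :
    Tendsto (fun n : ℕ => (birthMeasure n).real {t | ∃ K C : Finset (Fin n), K.card = k + 1 ∧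
      C.card = j ∧ C ⊆ K ∧ x n * cn (k - j) n < t K ∧ t K ≤ y n * cn (k - j) n ∧
        ∀ S ∈ Nb k K C, z n * cn (k - j) n < t S}) atTop (nhds 0) := by
  set m := k - j with hmdef
  have hm : 1 ≤ m := by omega
  have hlim := hG.const_mul (2 ^ (k + 1) * (2 * (Nat.factorial m / ((m : ℝ) + 1))))
  rw [mul_zero] at hlim
  refine squeeze_zero' (Eventually.of_forall fun n => measureReal_nonneg) ?_ hlim
  filter_upwards [hxy, ev_small (k := k) hm A (1/4) (by norm_num),
    eventually_ge_atTop (k + 1 + m)] with n hx hs hn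
  obtain ⟨hxy, hz, hzA⟩ := hx
  obtain ⟨s1, -, s3, -, -⟩ := hs (z n) hz hzA
  have hcn := cn_nonneg m n
  refine (birth_prob (n := n) hjk (by gcongr) (by positivity) (by linarith)).trans ?_
  have hu := upper_pow (m := m) (n := n) (k := k) hn hz (by linarith) (by linarith)
  have hsc := scale_eq (n := n) hjk (by omega) (z n)
  rw [← hmdef] at hsc ⊢
  have hd : 0 ≤ y n - x n := by linarith
  calc _ = 2 ^ (k + 1) * ((n : ℝ) ^ (k + 1) * ((y n - x n) * cn m n *
        (1 - z n * cn m n) ^ ((m + 1) * (n - (k + 1)).choose m))) := by ring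
    _ ≤ 2 ^ (k + 1) * ((n : ℝ) ^ (k + 1) * ((y n - x n) * cn m n * (2 * Real.exp (-z n)))) := by
        gcongr
    _ = 2 ^ (k + 1) * 2 * (y n - x n) * ((n : ℝ) ^ (k + 1) * cn m n * Real.exp (-z n)) := by ring
    _ = _ := by rw [hsc]; ring

lemma shell_tendsto {k j : ℕ} (hjk : j < k) :
    Tendsto (fun n : ℕ => (birthMeasure n).real {t | ¬ Shells k j n t
      ((2 ^ (k - j) * (((k - j : ℕ) : ℝ) + 1) * (2 * (j + 1))) * cn (k - j) n)}) atTop (nhds 0) := by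
  set m := k - j with hmdef
  have hm : 1 ≤ m := by omega
  set Δ : ℝ := 2 ^ m * ((m : ℝ) + 1) * (2 * (j + 1)) with hΔ
  have hΔ0 : 0 < Δ := by positivity
  have h4 : Tendsto (fun n : ℕ => n / 4 + 1) atTop atTop :=
    (tendsto_add_atTop_nat 1).comp (Nat.tendsto_div_const_atTop (by norm_num))
  have hlim := ((tendsto_pow_const_mul_const_pow_of_abs_lt_one (k + 1)
    (r := (1/2 : ℝ)) (by rw [abs_of_pos] <;> norm_num)).comp h4).const_mul
      (2 ^ (k + 1) * 4 ^ (k + 1) * 2 : ℝ)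
  rw [mul_zero] at hlim
  refine squeeze_zero' (Eventually.of_forall fun n => measureReal_nonneg) ?_ hlim
  filter_upwards [ev_small (k := k) hm Δ (1/4) (by norm_num), tlog.eventually_ge_atTop 1,
    eventually_ge_atTop (4 * (k + 1 + m))] with n hs hl hn
  obtain ⟨s1, -⟩ := hs Δ hΔ0.le (by nlinarith)
  have hcn := cn_nonneg m n
  have hn0 : (0 : ℝ) < n := by exact_mod_cast (by omega : 0 < n)
  refine (shell_prob (n := n) (α := n / 4) hjk (by omega) (by positivity) (by linarith)).trans ?_
  rw [← hmdef]
  have hch : (n : ℝ) ^ m / 2 ^ m / Nat.factorial m ≤ (n - (k + 1) - n / 4).choose m := by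
    refine le_trans ?_ (Nat.pow_le_choose (α := ℝ) m _)
    have : ((n : ℝ) / 2) ≤ ((n - (k + 1) - n / 4 + 1 - m : ℕ) : ℝ) := by
      rw [div_le_iff₀ (by norm_num)]
      exact_mod_cast (by omega : n ≤ (n - (k + 1) - n / 4 + 1 - m) * 2)
    rw [← div_pow]
    gcongr
  have hone : (2 * (j + 1) : ℝ) ≤ (n - (k + 1) - n / 4).choose m * (Δ * cn m n) := by
    calc (2 * (j + 1) : ℝ) = (n : ℝ) ^ m / 2 ^ m / Nat.factorial m * (Δ * cn m n) := by
          rw [hΔ, cn]; field_simp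
      _ ≤ _ := by gcongr
  have hhalf : ((j : ℝ) + 1) * (1 - Δ * cn m n) ^ ((n - (k + 1) - n / 4).choose m) ≤ 1 / 2 := by
    have e1 : (1 - Δ * cn m n) ^ ((n - (k + 1) - n / 4).choose m) ≤
        Real.exp (-(Δ * cn m n)) ^ ((n - (k + 1) - n / 4).choose m) :=
      pow_le_pow_left₀ (by linarith) (Real.one_sub_le_exp_neg _) _
    rw [← Real.exp_nat_mul] at e1
    have e2 : Real.exp (((n - (k + 1) - n / 4).choose m : ℝ) * -(Δ * cn m n)) ≤
        Real.exp (-(2 * (j + 1))) := by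
      apply Real.exp_le_exp.2; linarith
    have e3 : Real.exp (-(2 * ((j : ℝ) + 1))) ≤ 1 / (2 * (j + 1)) := by
      rw [Real.exp_neg, ← one_div]
      apply one_div_le_one_div_of_le (by positivity)
      have := Real.add_one_le_exp (2 * ((j : ℝ) + 1))
      linarith
    calc _ ≤ ((j : ℝ) + 1) * (1 / (2 * (j + 1))) := by gcongr; exact e1.trans (e2.trans e3)
      _ = 1 / 2 := by field_simp
  have hbase : 0 ≤ ((j : ℝ) + 1) * (1 - Δ * cn m n) ^ ((n - (k + 1) - n / 4).choose m) := by
    have : 0 ≤ 1 - Δ * cn m n := by linarith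
    positivity
  have hn4 : (n : ℝ) ≤ 4 * ((n / 4 + 1 : ℕ) : ℝ) := by
    exact_mod_cast (by omega : n ≤ 4 * (n / 4 + 1))
  calc _ ≤ 2 ^ (k + 1) * ((4 * ((n / 4 + 1 : ℕ) : ℝ)) ^ (k + 1) * (1 / 2 : ℝ) ^ (n / 4)) := by
        gcongr
    _ = _ := by simp only [Function.comp]; rw [mul_pow, pow_succ (1 / 2 : ℝ)]; ring

lemma a1_eq {k j n : ℕ} (hn : 0 < n) :
    pjPrevMinus k j n / cn (k - j) n = (1 - 1 / Real.sqrt (Real.log n)) *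
      ((j * (((k - j : ℕ) : ℝ) + 1) ^ 2 / (((k - j : ℕ) : ℝ) + 2)) * (Real.log n ^ 1 / n)) := by
  have hn0 : (0 : ℝ) < n := by exact_mod_cast hn
  rw [pjPrevMinus, cn, Nat.factorial_succ]
  push_cast
  generalize (1 - 1 / Real.sqrt (Real.log n)) = u
  field_simp
  ring

lemma exp_jlog {j n : ℕ} (hn : 0 < n) (x : ℝ) :
    Real.exp (((j : ℝ) + 1) * Real.log n - x) = (n : ℝ) ^ (j + 1) * Real.exp (-x) := by
  have hn0 : (0 : ℝ) < n := by exact_mod_cast hn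
  rw [sub_eq_add_neg, Real.exp_add]
  congr 1
  have := Real.exp_nat_mul (Real.log n) (j + 1)
  rw [Real.exp_log hn0] at this
  rw [← this]; push_cast; rfl

lemma exists_cen_pet {k j : ℕ} (hjk : j < k) (n : ℕ) :
    ∃ cen pet : Finset (Fin n) → Finset (Fin n), ∀ K, K.card = k + 1 →
      (cen K).card = j ∧ (pet K).card = j + 1 ∧ cen K ⊆ pet K ∧ pet K ⊆ K := by
  have h : ∀ K : Finset (Fin n), ∃ C P : Finset (Fin n), K.card = k + 1 →
      C.card = j ∧ P.card = j + 1 ∧ C ⊆ P ∧ P ⊆ K := by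
    intro K
    by_cases hK : K.card = k + 1
    · obtain ⟨P, hP, hPc⟩ := Finset.exists_subset_card_eq (s := K) (n := j + 1) (by omega)
      obtain ⟨C, hC, hCc⟩ := Finset.exists_subset_card_eq (s := P) (n := j) (by omega)
      exact ⟨C, P, fun _ => ⟨hCc, hPc, hC, hP⟩⟩
    · exact ⟨∅, ∅, fun h => absurd h hK⟩
  choose cen pet hcp using h
  exact ⟨cen, pet, hcp⟩

lemma whp_of_bad {ι : Type} [Fintype ι] (T : ∀ n : ℕ, Set (Finset (Fin n) → ℝ))
    (B : ι → ∀ n : ℕ, Set (Finset (Fin n) → ℝ))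
    (hB : ∀ i, Tendsto (fun n => (birthMeasure n).real (B i n)) atTop (nhds 0))
    (h : ∀ᶠ n in atTop, ∀ t, (∀ i, t ∉ B i n) → t ∈ T n) :
    Tendsto (fun n => birthMeasure n (T n)) atTop (nhds 1) := by
  have hsum : Tendsto (fun n => 1 - ∑ i, (birthMeasure n).real (B i n)) atTop (nhds 1) := by
    have := tendsto_finsetSum (Finset.univ : Finset ι) (fun i _ => hB i)
    simpa using this.const_sub 1
  have hreal : Tendsto (fun n => (birthMeasure n).real (T n)) atTop (nhds 1) := by
    refine tendsto_of_tendsto_of_tendsto_of_le_of_le' hsum tendsto_const_nhds ?_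
      (Eventually.of_forall fun n => measureReal_le_one)
    filter_upwards [h] with n hn
    have hsub : (Set.univ : Set (Finset (Fin n) → ℝ)) ⊆ T n ∪ ⋃ i ∈ (Finset.univ : Finset ι), B i n := by
      intro t _
      by_cases ht : ∀ i, t ∉ B i n
      · exact Or.inl (hn t ht)
      · push Not at ht
        obtain ⟨i, hi⟩ := ht
        exact Or.inr (Set.mem_iUnion₂.2 ⟨i, Finset.mem_univ _, hi⟩)
    have h1 := measureReal_mono (μ := birthMeasure n) hsub (measure_ne_top _ _)
    have h2 := measureReal_union_le (μ := birthMeasure n) (T n) (⋃ i ∈ (Finset.univ : Finset ι), B i n)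
    have h3 := measureReal_biUnion_finset_le (μ := birthMeasure n) (Finset.univ : Finset ι)
      (fun i => B i n)
    have h4 : (birthMeasure n).real Set.univ = 1 := by simp
    linarith
  have := ENNReal.tendsto_ofReal hreal
  simpa [ofReal_measureReal] using this

lemma whp7 (T : ∀ n : ℕ, Set (Finset (Fin n) → ℝ))
    {B1 B2 B3 B4 B5 B6 B7 : ∀ n : ℕ, Set (Finset (Fin n) → ℝ)}
    (h1 : Tendsto (fun n => (birthMeasure n).real (B1 n)) atTop (nhds 0))
    (h2 : Tendsto (fun n => (birthMeasure n).real (B2 n)) atTop (nhds 0))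
    (h3 : Tendsto (fun n => (birthMeasure n).real (B3 n)) atTop (nhds 0))
    (h4 : Tendsto (fun n => (birthMeasure n).real (B4 n)) atTop (nhds 0))
    (h5 : Tendsto (fun n => (birthMeasure n).real (B5 n)) atTop (nhds 0))
    (h6 : Tendsto (fun n => (birthMeasure n).real (B6 n)) atTop (nhds 0))
    (h7 : Tendsto (fun n => (birthMeasure n).real (B7 n)) atTop (nhds 0))
    (h : ∀ᶠ n in atTop, ∀ t, t ∉ B1 n → t ∉ B2 n → t ∉ B3 n → t ∉ B4 n → t ∉ B5 n →
      t ∉ B6 n → t ∉ B7 n → t ∈ T n) :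
    Tendsto (fun n => birthMeasure n (T n)) atTop (nhds 1) := by
  refine whp_of_bad T ![B1, B2, B3, B4, B5, B6, B7] ?_ ?_
  · intro i
    fin_cases i
    exacts [h1, h2, h3, h4, h5, h6, h7]
  · filter_upwards [h] with n hn t ht
    exact hn t (ht 0) (ht 1) (ht 2) (ht 3) (ht 4) (ht 5) (ht 6)

set_option maxHeartbeats 2000000 in
lemma main_thm (k j : ℕ) (hj : 1 ≤ j) (hjk : j < k) :
    Tendsto (fun n : ℕ => birthMeasure n {t : Finset (Fin n) → ℝ |
      (∃ K₁ C₁ J₁ K₂ C₂ J₂ K₃ C₃ J₃,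
        ∀ p : ℝ, pjPrevMinus k j n ≤ p → p < pMj k j n t →
          (IsMj (complexAt k n t p) k j K₁ C₁ J₁ ∨
            IsMj (complexAt k n t p) k j K₂ C₂ J₂ ∨
            IsMj (complexAt k n t p) k j K₃ C₃ J₃)) ∧
      ∀ p : ℝ, pjPrevMinus k j n ≤ p → p < pMj k j n t →
        ¬ Subsingleton (cohomology (complexAt k n t p) j)})
      atTop (nhds 1) := by
  choose cen pet hcp using exists_cen_pet hjk
  have hcen : ∀ n, ∀ K : Finset (Fin n), K.card = k + 1 → (cen n K).card = j ∧ cen n K ⊆ K :=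
    fun n K hK => ⟨(hcp n K hK).1, (hcp n K hK).2.2.1.trans (hcp n K hK).2.2.2⟩
  obtain ⟨κ, hκ, hXs⟩ := Xs_tendsto hjk cen hcen
  have hshell := shell_tendsto hjk
  set m := k - j with hmdef
  have hm : 1 ≤ m := by omega
  set Δ : ℝ := 2 ^ m * ((m : ℝ) + 1) * (2 * (j + 1)) with hΔ
  have hΔ0 : 0 < Δ := by positivity
  have hjR : (1 : ℝ) ≤ j := by exact_mod_cast hj
  have hjkR : (j : ℝ) + 1 ≤ k := by exact_mod_cast hjk
  set κ2 : ℝ := j * ((m : ℝ) + 1) ^ 2 / ((m : ℝ) + 2) with hκ2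
  have hκ20 : 0 < κ2 := by positivity
  let L : ℕ → ℝ := fun n => Real.log n
  let l : ℕ → ℝ := fun n => Real.log (Real.log n)
  let A : ℝ := 2 * k + 2
  let a1 : ℕ → ℝ := fun n => pjPrevMinus k j n / cn m n
  let xq : ℕ → ℝ := fun n => (j + 1) * L n - l n / 2
  let xq2 : ℕ → ℝ := fun n => (j + 1) * L n + l n / 2
  let xq2' : ℕ → ℝ := fun n => (j + 1) * L n + 2 * l n
  let xq3 : ℕ → ℝ := fun n => A * L n
  let x1 : ℕ → ℝ := fun n => (cn m n)⁻¹
  -- eventual order relations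
  have hord : ∀ᶠ n : ℕ in atTop, 0 < n ∧ 4 ≤ L n ∧ 0 ≤ l n ∧ l n ≤ L n ∧ Δ ≤ L n / 2 ∧
      0 ≤ a1 n ∧ a1 n ≤ Δ ∧ κ2 / 2 * (L n / n) ≤ a1 n := by
    filter_upwards [eventually_gt_atTop 0, tlog.eventually_ge_atTop 4,
      tloglog.eventually_ge_atTop 0, tlog.eventually_ge_atTop (2 * Δ),
      ev_le 1 κ2 Δ hΔ0] with n h1 h2 h3 h4 h5
    have hn0 : (0 : ℝ) < n := by exact_mod_cast h1
    have hsq : (2 : ℝ) ≤ Real.sqrt (Real.log n) := by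
      apply Real.le_sqrt_of_sq_le; linarith
    have hu1 : 1 / Real.sqrt (Real.log n) ≤ 1 / 2 :=
      one_div_le_one_div_of_le (by norm_num) hsq
    have hu0 : 0 ≤ 1 / Real.sqrt (Real.log n) := by positivity
    have ha : a1 n = (1 - 1 / Real.sqrt (Real.log n)) * (κ2 * (Real.log n ^ 1 / n)) := a1_eq h1
    have hw : 0 ≤ κ2 * (Real.log n ^ 1 / n) := by
      have : 0 ≤ Real.log n := by linarith
      positivity
    refine ⟨h1, h2, h3, ?_, ?_, ?_, ?_, ?_⟩
    · exact (Real.log_le_sub_one_of_pos (by linarith)).trans (by simp only [L]; linarith)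
    · simp only [L]; linarith
    · rw [ha]; exact mul_nonneg (by linarith) hw
    · rw [ha]; nlinarith
    · rw [ha]
      simp only [pow_one, L] at hw ⊢
      nlinarith
  have htl : Tendsto (fun n => Real.exp (l n / 2)) atTop atTop :=
    Real.tendsto_exp_atTop.comp (tloglog.atTop_div_const (by norm_num))
  -- the bad events
  have b1 := hXs A a1 (fun _ => Δ) (by
      filter_upwards [hord] with n hn
      obtain ⟨h1, h2, h3, h4, h5, h6, h7, h8⟩ := hn
      refine ⟨h6, h7, ?_⟩
      change Δ ≤ A * L n
      have : (1:ℝ) ≤ A := by simp only [A]; linarith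
      nlinarith) (by
      refine tendsto_atTop_mono' _ ?_ (tlog.const_mul_atTop
        (by positivity : 0 < κ2 / 2 * Real.exp (-Δ)))
      filter_upwards [hord] with n hn
      obtain ⟨h1, h2, h3, h4, h5, h6, h7, h8⟩ := hn
      have hn0 : (0 : ℝ) < n := by exact_mod_cast h1
      have hn1 : (1 : ℝ) ≤ (n : ℝ) ^ j := one_le_pow₀ (by exact_mod_cast h1)
      rw [exp_jlog h1]
      have hL : 0 ≤ L n := by linarith
      calc κ2 / 2 * Real.exp (-Δ) * L n ≤ κ2 / 2 * Real.exp (-Δ) * L n * (n : ℝ) ^ j :=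
            le_mul_of_one_le_right (by positivity) hn1
        _ = κ2 / 2 * (L n / n) * ((n : ℝ) ^ (j + 1) * Real.exp (-Δ)) := by
            rw [pow_succ]; field_simp
        _ ≤ _ := by gcongr)
  have b2 := hXs A (fun _ => Δ) xq (by
      filter_upwards [hord] with n hn
      obtain ⟨h1, h2, h3, h4, h5, h6, h7, h8⟩ := hn
      refine ⟨hΔ0.le, ?_, ?_⟩
      · simp only [xq]; nlinarith
      · change xq n ≤ A * L n
        simp only [xq, A]; nlinarith) (by
      refine (htl.const_mul_atTop hΔ0).congr fun n => ?_
      simp only [xq, L]; congr 2; ring)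
  have b3 := hXs A xq2 xq2 (by
      filter_upwards [hord] with n hn
      obtain ⟨h1, h2, h3, h4, h5, h6, h7, h8⟩ := hn
      refine ⟨?_, le_rfl, ?_⟩
      · simp only [xq2]; nlinarith
      · change xq2 n ≤ A * L n
        simp only [xq2, A]; nlinarith) (by
      have ht : Tendsto (fun n => Real.exp (l n / 2)) atTop atTop := htl
      refine tendsto_atTop_mono' _ ?_ htl
      filter_upwards [hord] with n hn
      obtain ⟨h1, h2, h3, h4, h5, h6, h7, h8⟩ := hn
      have e1 : Real.exp (l n) = L n := Real.exp_log (by simp only [L] at h2; linarith)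
      have e2 : ((j : ℝ) + 1) * Real.log n - xq2 n = -l n / 2 := by simp only [xq2, L]; ring
      rw [e2]
      have e3 : Real.exp (l n / 2) = L n * Real.exp (-l n / 2) := by
        rw [← e1, ← Real.exp_add]; congr 1; ring
      rw [e3]
      gcongr
      simp only [xq2]; nlinarith)
  have b5 := birth_tendsto hjk A xq xq2' xq2 (by
      filter_upwards [hord] with n hn
      obtain ⟨h1, h2, h3, h4, h5, h6, h7, h8⟩ := hn
      refine ⟨?_, ?_, ?_⟩
      · simp only [xq, xq2']; linarith
      · simp only [xq2]; nlinarith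
      · change xq2 n ≤ A * L n
        simp only [xq2, A]; nlinarith) (by
      have h1 := (Real.tendsto_pow_mul_exp_neg_atTop_nhds_zero 1).comp
        (tloglog.atTop_div_const (by norm_num : (0:ℝ) < 2))
      have h2 := h1.const_mul 5
      rw [mul_zero] at h2
      refine h2.congr fun n => ?_
      have e2 : ((j : ℝ) + 1) * Real.log n - xq2 n = -(l n / 2) := by simp only [xq2, L]; ring
      rw [e2]
      simp only [xq, xq2', Function.comp, l]; ring)
  have b6 := birth_tendsto hjk A xq2' xq3 xq2' (by
      filter_upwards [hord] with n hn
      obtain ⟨h1, h2, h3, h4, h5, h6, h7, h8⟩ := hn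
      have : xq2' n ≤ A * L n := by simp only [xq2', A]; nlinarith
      refine ⟨this, ?_, this⟩
      simp only [xq2']; nlinarith) (by
      have h1 := (Real.tendsto_pow_mul_exp_neg_atTop_nhds_zero 0).comp tloglog
      have h2 := h1.const_mul A
      rw [mul_zero] at h2
      refine squeeze_zero' ?_ ?_ h2
      · filter_upwards [hord] with n hn
        obtain ⟨h1, h2, h3, h4, h5, h6, h7, h8⟩ := hn
        have : xq2' n ≤ A * L n := by simp only [xq2', A]; nlinarith
        exact mul_nonneg (by simp only [xq3]; linarith) (Real.exp_pos _).le
      · filter_upwards [hord] with n hn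
        obtain ⟨h1, h2, h3, h4, h5, h6, h7, h8⟩ := hn
        have e2 : ((j : ℝ) + 1) * Real.log n - xq2' n = -(2 * l n) := by
          simp only [xq2', L]; ring
        have e1 : Real.exp (l n) = L n := Real.exp_log (by simp only [L] at h2; linarith)
        rw [e2]
        have e3 : Real.exp (-(l n)) = L n * Real.exp (-(2 * l n)) := by
          rw [← e1, ← Real.exp_add]; congr 1; ring
        change _ ≤ A * (l n ^ 0 * Real.exp (-(l n)))
        rw [pow_zero, one_mul, e3, ← mul_assoc]
        gcongr
        simp only [xq2', xq3]; nlinarith)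
  have b7 := birth_tendsto hjk A xq3 x1 xq3 (by
      filter_upwards [hord, ev_small (k := k) hm A 1 (by norm_num)] with n hn hs
      obtain ⟨h1, h2, h3, h4, h5, h6, h7, h8⟩ := hn
      have h0 : 0 ≤ xq3 n := by simp only [xq3, A]; positivity
      refine ⟨?_, h0, le_rfl⟩
      have := (hs (xq3 n) h0 le_rfl).1
      simp only [x1]
      rw [← one_div, le_div_iff₀ (cn_pos h1)]
      exact this) (by
      have hK : (0 : ℝ) < Nat.factorial m / ((m : ℝ) + 1) := by positivity
      refine squeeze_zero' ?_ ?_ (tlogpow 0 (Nat.factorial m / ((m : ℝ) + 1))⁻¹)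
      · filter_upwards [hord, ev_small (k := k) hm A 1 (by norm_num)] with n hn hs
        obtain ⟨h1, h2, h3, h4, h5, h6, h7, h8⟩ := hn
        have h0 : 0 ≤ xq3 n := by simp only [xq3, A]; positivity
        have := (hs (xq3 n) h0 le_rfl).1
        have h9 : xq3 n ≤ x1 n := by
          simp only [x1]
          rw [← one_div, le_div_iff₀ (cn_pos h1)]
          exact this
        exact mul_nonneg (by linarith) (Real.exp_pos _).le
      · filter_upwards [hord] with n hn
        obtain ⟨h1, h2, h3, h4, h5, h6, h7, h8⟩ := hn
        have hn0 : (0 : ℝ) < n := by exact_mod_cast h1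
        have h0 : 0 ≤ xq3 n := by simp only [xq3, A]; positivity
        have hsc := scale_eq (n := n) hjk h1 (xq3 n)
        rw [← hmdef] at hsc
        have he : Real.exp (-xq3 n) = ((n : ℝ) ^ (k + 1))⁻¹ * ((n : ℝ) ^ (k + 1))⁻¹ := by
          have := Real.exp_nat_mul (Real.log n) (2 * k + 2)
          rw [Real.exp_log hn0] at this
          rw [Real.exp_neg, ← mul_inv, ← pow_add]
          congr 1
          rw [show k + 1 + (k + 1) = 2 * k + 2 by ring, ← this]
          simp only [xq3, A, L]; push_cast; rfl
        have hc := cn_pos (m := m) h1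
        have hn1 : (1 : ℝ) ≤ n := by exact_mod_cast h1
        calc (x1 n - xq3 n) * Real.exp (((j : ℝ) + 1) * Real.log n - xq3 n)
            ≤ x1 n * Real.exp (((j : ℝ) + 1) * Real.log n - xq3 n) := by gcongr; linarith
          _ = x1 n * ((Nat.factorial m / ((m : ℝ) + 1))⁻¹ *
                ((n : ℝ) ^ (k + 1) * cn m n * Real.exp (-xq3 n))) := by
              rw [hsc, inv_mul_cancel_left₀ hK.ne']
          _ = (Nat.factorial m / ((m : ℝ) + 1))⁻¹ * ((n : ℝ) ^ (k + 1))⁻¹ := by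
              have hp : (n : ℝ) ^ (k + 1) ≠ 0 := by positivity
              rw [he]; simp only [x1]
              generalize (n : ℝ) ^ (k + 1) = w at *
              field_simp
          _ ≤ _ := by
              rw [pow_zero, one_div]
              gcongr
              exact le_self_pow₀ hn1 (by omega))
  have hbig : ∀ᶠ n : ℕ in atTop, 1 < κ * (κ2 / 2 * Real.exp (-Δ)) / 2 * Real.log n :=
    (tlog.const_mul_atTop (by positivity)).eventually_gt_atTop 1
  refine whp7 _ b1 b2 b3 hshell b5 b6 b7 ?_
  filter_upwards [hord, hbig, ev_small (k := k) hm A 1 (by norm_num)] with n hn hbig hs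
  obtain ⟨h1, h2, h3, h4, h5, h6, h7, h8⟩ := hn
  have hn0 : (0 : ℝ) < n := by exact_mod_cast h1
  have hc := cn_pos (m := m) h1
  intro t t1 t2 t3 t4 t5 t6 t7
  simp only [not_lt] at t1 t2 t3
  simp only [not_not] at t4
  have hr : a1 n * cn m n = pjPrevMinus k j n := div_mul_cancel₀ _ hc.ne'
  have hxq : Δ ≤ xq n := by simp only [xq]; nlinarith
  have hxq2 : xq n ≤ xq2 n := by simp only [xq, xq2]; linarith
  have hxq20 : 0 ≤ xq2 n := by linarith
  have hxq22 : xq2 n ≤ xq2' n := by simp only [xq2, xq2']; linarith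
  have hq21 : xq2 n * cn m n ≤ 1 := (hs (xq2 n) hxq20 (by
    change xq2 n ≤ A * L n
    simp only [xq2, A]; nlinarith)).1
  refine combine hj hjk t _ (Δ * cn m n) (xq n * cn m n) (xq2 n * cn m n)
    (by gcongr) (by gcongr) (by positivity) hq21 ?_ ?_ ?_ t4 ?_
  · refine first_triple hj hjk t _ _ (cen n) (pet n) (hcp n)
      (Xs k (cen n) (a1 n * cn m n) (Δ * cn m n) t) ?_ ?_ ?_
    · intro K hK
      simp only [Xs, Finset.mem_filter, Finset.mem_powersetCard] at hK
      exact ⟨hK.1.2, hr ▸ hK.2.1, hK.2.2⟩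
    · rw [← hr]; gcongr
    · have hnj : (0 : ℝ) < (n : ℝ) ^ j := by positivity
      have hch : (n.choose j : ℝ) ≤ (n : ℝ) ^ j := by exact_mod_cast Nat.choose_le_pow n j
      have : (n : ℝ) ^ j < κ * (a1 n * Real.exp (((j : ℝ) + 1) * Real.log n - Δ)) / 2 := by
        rw [exp_jlog h1]
        calc (n : ℝ) ^ j < (κ * (κ2 / 2 * Real.exp (-Δ)) / 2 * Real.log n) * (n : ℝ) ^ j :=
              lt_mul_of_one_lt_left hnj hbig
          _ = κ * (κ2 / 2 * (L n / n) * ((n : ℝ) ^ (j + 1) * Real.exp (-Δ))) / 2 := by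
              simp only [L]; rw [pow_succ]; field_simp
          _ ≤ _ := by gcongr
      have := hch.trans_lt (this.trans_le t1)
      exact_mod_cast this
  · have hpos : (0 : ℝ) < (Xs k (cen n) (Δ * cn m n) (xq n * cn m n) t).card :=
      lt_of_lt_of_le (by positivity) t2
    obtain ⟨K, hK⟩ := Finset.card_pos.1 (by exact_mod_cast hpos)
    simp only [Xs, Finset.mem_filter, Finset.mem_powersetCard] at hK
    exact ⟨K, cen n K, hK.1.2, (hcen n K hK.1.2).1, (hcen n K hK.1.2).2, hK.2.1, hK.2.2⟩
  · have hx : 0 < xq2 n := by linarith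
    have hpos : (0 : ℝ) < (Xs k (cen n) (xq2 n * cn m n) (xq2 n * cn m n) t).card :=
      lt_of_lt_of_le (by positivity) t3
    obtain ⟨K, hK⟩ := Finset.card_pos.1 (by exact_mod_cast hpos)
    simp only [Xs, Finset.mem_filter, Finset.mem_powersetCard] at hK
    exact ⟨K, cen n K, hK.1.2, (hcen n K hK.1.2).1, (hcen n K hK.1.2).2, hK.2.1, hK.2.2⟩
  · intro K C p hK hC hCK htp hp1 hqp hS
    by_contra hlt
    push Not at hlt
    rcases le_or_gt (t K) (xq2' n * cn m n) with c1 | c1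
    · exact t5 ⟨K, C, hK, hC, hCK, hlt, c1, fun S hS' => hqp.trans_lt (hS S hS')⟩
    rcases le_or_gt (t K) (xq3 n * cn m n) with c2 | c2
    · exact t6 ⟨K, C, hK, hC, hCK, c1, c2, fun S hS' => (c1.trans_le htp).trans (hS S hS')⟩
    · refine t7 ⟨K, C, hK, hC, hCK, c2, ?_, fun S hS' => (c2.trans_le htp).trans (hS S hS')⟩
      have : x1 n * cn m n = 1 := inv_mul_cancel₀ hc.ne'
      rw [← hmdef, this]; linarith

/-- Lemma 3.3: whp there exist three triples `(K_ℓ,C_ℓ,J_ℓ)`, `ℓ = 1,2,3`, such that for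
every `p ∈ [p_{j-1}^-, p_{M_j})` one of them forms a copy of `M_j` in `G_p`; in particular
whp `H^j(G_p;F₂) ≠ 0` for all such `p` simultaneously. -/
theorem statement5 (k j : ℕ) (hk : 2 ≤ k) (hj : 1 ≤ j) (hjk : j < k) :
    Tendsto (fun n : ℕ => birthMeasure n {t : Finset (Fin n) → ℝ |
      (∃ K₁ C₁ J₁ K₂ C₂ J₂ K₃ C₃ J₃,
        ∀ p : ℝ, pjPrevMinus k j n ≤ p → p < pMj k j n t →
          (IsMj (complexAt k n t p) k j K₁ C₁ J₁ ∨
            IsMj (complexAt k n t p) k j K₂ C₂ J₂ ∨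
            IsMj (complexAt k n t p) k j K₃ C₃ J₃)) ∧
      ∀ p : ℝ, pjPrevMinus k j n ≤ p → p < pMj k j n t →
        ¬ Subsingleton (cohomology (complexAt k n t p) j)})
      atTop (nhds 1) := by
  exact main_thm k j hj hjk

end RSC
end

section
/- Let k ≥ 2 and let ω = ω(n) be any function tending to infinity as n → ∞. Define the random variable p_T := sup{p ∈ [0,1] : G_p is not topologically connected}, where G_p is topologically connected means H^0(G_p;F_2) ≅ F_2. Then with high probability (log n − ω)·k!/n^k < p_T < (log n + ω)·k!/n^k; in particular, with high probability p_T > log n / n^k. -/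
open MeasureTheory Filter

attribute [local instance] Classical.propDecidable

namespace RSC

variable {V : Type*}

/-- `p_T`: the supremum of the `p ∈ [0,1]` at which `G_p` is not topologically connected,
where topological connectedness means `H^0(G_p;F₂) ≅ F₂`. -/
noncomputable def pT (k n : ℕ) (t : Finset (Fin n) → ℝ) : ℝ :=
  sSup {p : ℝ | p ∈ Set.Icc (0 : ℝ) 1 ∧
    ¬ Nonempty (cohomology (complexAt k n t p) 0 ≃ₗ[ZMod 2] ZMod 2)}

/-! ### Deterministic part -/

/-- every nontrivial small set is crossed by a `k`-simplex. -/
def Crossed (k n : ℕ) (p : ℝ) (t : Finset (Fin n) → ℝ) : Prop :=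
  ∀ S : Finset (Fin n), S.Nonempty → 2 * S.card ≤ n →
    ∃ K : Finset (Fin n), K.card = k + 1 ∧ t K ≤ p ∧ (∃ u ∈ K, u ∈ S) ∧ (∃ v ∈ K, v ∉ S)

lemma isSimplex_singleton (k n : ℕ) (t : Finset (Fin n) → ℝ) (p : ℝ) (v : Fin n) :
    IsSimplex (complexAt k n t p) 0 {v} := ⟨Or.inl ⟨v, rfl⟩, by simp⟩

lemma coboundary_pair (k n : ℕ) (t : Finset (Fin n) → ℝ) (p : ℝ)
    (f : Cochain (complexAt k n t p) 0) (u v : Fin n) (huv : u ≠ v)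
    (h : IsSimplex (complexAt k n t p) (0 + 1) {u, v}) :
    coboundary (complexAt k n t p) 0 f ⟨{u, v}, h⟩ =
      f ⟨{u}, isSimplex_singleton k n t p u⟩ + f ⟨{v}, isSimplex_singleton k n t p v⟩ := by
  have hp : Finset.powersetCard (0 + 1) ({u, v} : Finset (Fin n)) = {{u}, {v}} := by
    ext A
    simp only [Finset.mem_powersetCard, Finset.mem_insert, Finset.mem_singleton, zero_add,
      Finset.card_eq_one]
    constructor
    · rintro ⟨h1, a, rfl⟩
      simpa using h1
    · rintro (rfl | rfl) <;> simp
  simp only [coboundary, LinearMap.coe_mk, AddHom.coe_mk]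
  rw [hp, Finset.sum_pair (by simpa using huv)]
  rw [dif_pos (isSimplex_singleton k n t p u), dif_pos (isSimplex_singleton k n t p v)]

lemma mem_cocycles_zero (k n : ℕ) (t : Finset (Fin n) → ℝ) (p : ℝ)
    (f : Cochain (complexAt k n t p) 0) :
    f ∈ cocycles (complexAt k n t p) 0 ↔ ∀ u v : Fin n, u ≠ v →
      (∃ K : Finset (Fin n), K.card = k + 1 ∧ t K ≤ p ∧ u ∈ K ∧ v ∈ K) →
      f ⟨{u}, isSimplex_singleton k n t p u⟩ = f ⟨{v}, isSimplex_singleton k n t p v⟩ := by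
  unfold cocycles
  rw [LinearMap.mem_ker]
  constructor
  · rintro h u v huv ⟨K, hK, htK, hu, hv⟩
    have hs : IsSimplex (complexAt k n t p) (0 + 1) {u, v} := by
      refine ⟨Or.inr ⟨by simp, K, hK, htK, ?_⟩, Finset.card_pair huv⟩
      intro x hx
      simp only [Finset.mem_insert, Finset.mem_singleton] at hx
      rcases hx with rfl | rfl <;> assumption
    have := congrFun h ⟨{u, v}, hs⟩
    rw [coboundary_pair k n t p f u v huv hs] at this
    exact CharTwo.add_eq_zero.mp this
  · intro h
    funext ⟨σ, hσ⟩
    obtain ⟨u, v, huv, rfl⟩ := Finset.card_eq_two.mp hσ.2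
    rw [coboundary_pair k n t p f u v huv hσ, Pi.zero_apply, CharTwo.add_eq_zero]
    apply h u v huv
    rcases hσ.1 with ⟨w, hw⟩ | ⟨-, K, h1, h2, h3⟩
    · have := congrArg Finset.card hw
      rw [Finset.card_pair huv] at this
      simp at this
    · exact ⟨K, h1, h2, h3 (by simp), h3 (by simp)⟩

/-- `H^0` is the space of `0`-cocycles. -/
noncomputable def cohomologyZeroEquiv (k n : ℕ) (t : Finset (Fin n) → ℝ) (p : ℝ) :
    cohomology (complexAt k n t p) 0 ≃ₗ[ZMod 2] cocycles (complexAt k n t p) 0 :=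
  Submodule.quotEquivOfEqBot _ (by
    rw [Submodule.eq_bot_iff]
    intro x hx
    simpa [coboundaries] using hx)

lemma zmod2_eq_one {a : ZMod 2} (h : a ≠ 0) : a = 1 := by
  revert a; decide

lemma nonempty_of_crossed (k n : ℕ) (hn : 0 < n) (t : Finset (Fin n) → ℝ) (p : ℝ)
    (h : Crossed k n p t) :
    Nonempty (cohomology (complexAt k n t p) 0 ≃ₗ[ZMod 2] ZMod 2) := by
  set G := complexAt k n t p with hG
  -- a cocycle is constant
  have key : ∀ f ∈ cocycles G 0, ∀ u v : Fin n,
      f ⟨{u}, isSimplex_singleton k n t p u⟩ = f ⟨{v}, isSimplex_singleton k n t p v⟩ := by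
    intro f hf u v
    by_contra hne
    rw [mem_cocycles_zero] at hf
    -- pick the small side
    have main : ∀ S : Finset (Fin n), S.Nonempty → 2 * S.card ≤ n →
        (∀ x ∈ S, ∀ y, y ∉ S → f ⟨{x}, isSimplex_singleton k n t p x⟩ ≠
          f ⟨{y}, isSimplex_singleton k n t p y⟩) → False := by
      intro S hS hc hd
      obtain ⟨K, hK, htK, ⟨x, hxK, hxS⟩, ⟨y, hyK, hyS⟩⟩ := h S hS hc
      exact hd x hxS y hyS (hf x y (fun e => hyS (e ▸ hxS)) ⟨K, hK, htK, hxK, hyK⟩)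
    let S : Finset (Fin n) := Finset.univ.filter fun x =>
      f ⟨{x}, isSimplex_singleton k n t p x⟩ = f ⟨{u}, isSimplex_singleton k n t p u⟩
    by_cases hc : 2 * S.card ≤ n
    · refine main S ⟨u, by simp [S]⟩ hc ?_
      intro x hx y hy e
      simp only [S, Finset.mem_filter, Finset.mem_univ, true_and] at hx hy
      exact hy (e ▸ hx)
    · refine main Sᶜ ⟨v, by simpa [S] using fun e => hne e.symm⟩ ?_ ?_
      · rw [Finset.card_compl, Fintype.card_fin]; omega
      intro x hx y hy e
      simp only [S, Finset.mem_compl, Finset.mem_filter, Finset.mem_univ, true_and, not_not]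
        at hx hy
      exact hx (e ▸ hy)
  let v0 : Fin n := ⟨0, hn⟩
  let ev : cocycles G 0 →ₗ[ZMod 2] ZMod 2 :=
    (LinearMap.proj (⟨{v0}, isSimplex_singleton k n t p v0⟩ :
      {A : Finset (Fin n) // IsSimplex G 0 A})).comp (cocycles G 0).subtype
  refine ⟨(cohomologyZeroEquiv k n t p).trans (LinearEquiv.ofBijective ev ⟨?_, ?_⟩)⟩
  · intro f g hfg
    ext ⟨A, hA⟩
    obtain ⟨a, rfl⟩ := Finset.card_eq_one.mp hA.2
    have h1 := key f.1 f.2 a v0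
    have h2 := key g.1 g.2 a v0
    have h3 : f.1 ⟨{v0}, isSimplex_singleton k n t p v0⟩ =
      g.1 ⟨{v0}, isSimplex_singleton k n t p v0⟩ := hfg
    exact h1.trans (h3.trans h2.symm)
  · intro c
    refine ⟨⟨fun _ => c, ?_⟩, rfl⟩
    rw [mem_cocycles_zero]
    intros; rfl

lemma not_nonempty_of_isolated (k n : ℕ) (hn : 2 ≤ n) (t : Finset (Fin n) → ℝ) (p : ℝ)
    (v : Fin n) (h : ∀ K : Finset (Fin n), K.card = k + 1 → v ∈ K → p < t K) :
    ¬ Nonempty (cohomology (complexAt k n t p) 0 ≃ₗ[ZMod 2] ZMod 2) := by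
  rintro ⟨e⟩
  let e' := (cohomologyZeroEquiv k n t p).symm.trans e
  have hone : (fun _ => 1 : Cochain (complexAt k n t p) 0) ∈ cocycles (complexAt k n t p) 0 := by
    rw [mem_cocycles_zero]; intros; rfl
  have hind : (fun A => if A.1 = {v} then 1 else 0 : Cochain (complexAt k n t p) 0) ∈
      cocycles (complexAt k n t p) 0 := by
    rw [mem_cocycles_zero]
    rintro x y hxy ⟨K, hK, htK, hx, hy⟩
    have hx' : x ≠ v := by
      rintro rfl; exact absurd htK (not_le.mpr (h K hK hx))
    have hy' : y ≠ v := by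
      rintro rfl; exact absurd htK (not_le.mpr (h K hK hy))
    simp [hx', hy']
  have h1 : e' ⟨_, hone⟩ = 1 := by
    apply zmod2_eq_one
    intro h0
    rw [LinearEquiv.map_eq_zero_iff] at h0
    have := congrFun (congrArg Subtype.val h0) ⟨{v}, isSimplex_singleton k n t p v⟩
    simp at this
  have h2 : e' ⟨_, hind⟩ = 1 := by
    apply zmod2_eq_one
    intro h0
    rw [LinearEquiv.map_eq_zero_iff] at h0
    have := congrFun (congrArg Subtype.val h0) ⟨{v}, isSimplex_singleton k n t p v⟩
    simp at this
  have h3 := e'.injective (h1.trans h2.symm)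
  haveI : Nontrivial (Fin n) := Fin.nontrivial_iff_two_le.mpr hn
  obtain ⟨w, hw⟩ := exists_ne v
  have := congrFun (congrArg Subtype.val h3) ⟨{w}, isSimplex_singleton k n t p w⟩
  simp [hw] at this

lemma Crossed.mono {k n : ℕ} {p q : ℝ} (hpq : p ≤ q) {t : Finset (Fin n) → ℝ}
    (h : Crossed k n p t) : Crossed k n q t := by
  intro S h1 h2
  obtain ⟨K, a, b, c⟩ := h S h1 h2
  exact ⟨K, a, b.trans hpq, c⟩

/-- `v` is isolated at time `p`. -/
def Isol (k n : ℕ) (p : ℝ) (v : Fin n) : Set (Finset (Fin n) → ℝ) :=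
  {t | ∀ K : Finset (Fin n), K.card = k + 1 → v ∈ K → p < t K}

lemma pT_bounds (k n : ℕ) (hn : 2 ≤ n) (t : Finset (Fin n) → ℝ) (p q : ℝ)
    (hp0 : 0 ≤ p) (hp1 : p ≤ 1) (v : Fin n) (hv : t ∈ Isol k n p v) (hq : Crossed k n q t) :
    p ≤ pT k n t ∧ pT k n t ≤ q := by
  have hmem : p ∈ {p : ℝ | p ∈ Set.Icc (0 : ℝ) 1 ∧
    ¬ Nonempty (cohomology (complexAt k n t p) 0 ≃ₗ[ZMod 2] ZMod 2)} :=
    ⟨⟨hp0, hp1⟩, not_nonempty_of_isolated k n hn t p v hv⟩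
  constructor
  · exact le_csSup ⟨1, fun x hx => hx.1.2⟩ hmem
  · refine csSup_le ⟨p, hmem⟩ ?_
    rintro x ⟨-, hx⟩
    by_contra hlt
    exact hx (nonempty_of_crossed k n (by omega) t x (hq.mono (not_le.mp hlt).le))

/-! ### Probability -/

instance inst_s6 (n : ℕ) : IsProbabilityMeasure (birthMeasure n) := by
  unfold birthMeasure
  haveI : IsProbabilityMeasure (volume.restrict (Set.Icc (0 : ℝ) 1)) := ⟨by simp⟩
  infer_instance

/-- all sets of the family `F` are born after time `p`. -/
def Late (n : ℕ) (p : ℝ) (F : Finset (Finset (Fin n))) : Set (Finset (Fin n) → ℝ) :=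
  {t | ∀ K ∈ F, p < t K}

lemma late_eq (n : ℕ) (p : ℝ) (F : Finset (Finset (Fin n))) :
    Late n p F = Set.pi Set.univ (fun K => if K ∈ F then Set.Ioi p else Set.univ) := by
  ext t
  simp only [Late, Set.mem_ofPred_eq, Set.mem_pi, Set.mem_univ, true_implies]
  refine forall_congr' fun K => ?_
  by_cases h : K ∈ F <;> simp [h]

lemma measurableSet_late (n : ℕ) (p : ℝ) (F : Finset (Finset (Fin n))) :
    MeasurableSet (Late n p F) := by
  rw [late_eq]
  refine MeasurableSet.univ_pi fun K => ?_
  by_cases h : K ∈ F <;> simp [h]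

lemma measure_late (n : ℕ) (p : ℝ) (hp0 : 0 ≤ p) (hp1 : p ≤ 1) (F : Finset (Finset (Fin n))) :
    (birthMeasure n).real (Late n p F) = (1 - p) ^ F.card := by
  haveI : IsProbabilityMeasure (volume.restrict (Set.Icc (0 : ℝ) 1)) := ⟨by simp⟩
  rw [late_eq, measureReal_def, birthMeasure, Measure.pi_pi, ENNReal.toReal_prod]
  have : ∀ K : Finset (Fin n), ((volume.restrict (Set.Icc (0 : ℝ) 1))
      (if K ∈ F then Set.Ioi p else Set.univ)).toReal = if K ∈ F then 1 - p else 1 := by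
    intro K
    by_cases h : K ∈ F
    · simp only [h, if_true]
      rw [Measure.restrict_apply measurableSet_Ioi]
      have : Set.Ioi p ∩ Set.Icc (0 : ℝ) 1 = Set.Ioc p 1 := by
        ext x; simp only [Set.mem_inter_iff, Set.mem_Ioi, Set.mem_Icc, Set.mem_Ioc]
        constructor
        · rintro ⟨a, b, c⟩; exact ⟨a, c⟩
        · rintro ⟨a, c⟩; exact ⟨a, by linarith, c⟩
      rw [this, Real.volume_Ioc, ENNReal.toReal_ofReal (by linarith)]
    · simp [h]
  simp_rw [this]
  rw [Finset.prod_ite_mem, Finset.univ_inter, Finset.prod_const]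

/-- second moment method. -/
lemma second_moment_s6 {Ω ι : Type*} [MeasurableSpace Ω] (μ : Measure Ω) [IsProbabilityMeasure μ]
    [Fintype ι] (A : ι → Set Ω) (hA : ∀ i, MeasurableSet (A i)) (ρ : ℝ)
    (hρ1 : 1 ≤ ρ)
    (hρ : ∀ i j, i ≠ j → μ.real (A i ∩ A j) ≤ ρ * (μ.real (A i) * μ.real (A j)))
    (hm : 0 < ∑ i, μ.real (A i)) :
    μ.real (⋂ i, (A i)ᶜ) ≤ 1 / (∑ i, μ.real (A i)) + (ρ - 1) := by
  set m := ∑ i, μ.real (A i) with hmdef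
  let X : Ω → ℝ := fun x => ∑ i, (A i).indicator (fun _ => (1 : ℝ)) x
  have hint : ∀ s : Set Ω, MeasurableSet s → Integrable (s.indicator (fun _ => (1 : ℝ))) μ :=
    fun s hs => (integrable_const 1).indicator hs
  have hintv : ∀ s : Set Ω, MeasurableSet s → ∫ x, s.indicator (fun _ => (1 : ℝ)) x ∂μ = μ.real s := by
    intro s hs
    rw [integral_indicator hs]; simp
  have hX : ∫ x, X x ∂μ = m := by
    simp only [X]
    rw [integral_finsetSum _ (fun i _ => hint _ (hA i))]
    exact Finset.sum_congr rfl fun i _ => hintv _ (hA i)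
  have hXi : Integrable X μ := integrable_finsetSum _ (fun i _ => hint _ (hA i))
  have hX2e : ∀ x, X x ^ 2 = ∑ i, ∑ j, (A i ∩ A j).indicator (fun _ => (1 : ℝ)) x := by
    intro x
    simp only [X, sq, Finset.sum_mul_sum]
    refine Finset.sum_congr rfl fun i _ => Finset.sum_congr rfl fun j _ => ?_
    by_cases h1 : x ∈ A i <;> by_cases h2 : x ∈ A j <;> simp [h1, h2]
  have hX2i : Integrable (fun x => X x ^ 2) μ := by
    simp_rw [hX2e]
    exact integrable_finsetSum _ fun i _ => integrable_finsetSum _ fun j _ =>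
      hint _ ((hA i).inter (hA j))
  have hX2 : ∫ x, X x ^ 2 ∂μ = ∑ i, ∑ j, μ.real (A i ∩ A j) := by
    simp_rw [hX2e]
    rw [integral_finsetSum _ fun i _ => integrable_finsetSum _ fun j _ =>
      hint _ ((hA i).inter (hA j))]
    refine Finset.sum_congr rfl fun i _ => ?_
    rw [integral_finsetSum _ fun j _ => hint _ ((hA i).inter (hA j))]
    exact Finset.sum_congr rfl fun j _ => hintv _ ((hA i).inter (hA j))
  have hB : MeasurableSet (⋂ i, (A i)ᶜ) := MeasurableSet.iInter fun i => (hA i).compl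
  have h1 : m ^ 2 * μ.real (⋂ i, (A i)ᶜ) ≤ ∫ x, (X x ^ 2 - 2 * m * X x + m ^ 2) ∂μ := by
    rw [← hintv _ hB, ← integral_const_mul]
    refine integral_mono ((hint _ hB).const_mul _) ?_ ?_
    · exact (hX2i.sub (hXi.const_mul _)).add (integrable_const _)
    · intro x
      simp only
      by_cases hx : x ∈ ⋂ i, (A i)ᶜ
      · have : X x = 0 := by
          refine Finset.sum_eq_zero fun i _ => ?_
          have := Set.mem_iInter.mp hx i
          simpa using this
        rw [this]; simp [hx]
      · simp only [hx, not_false_eq_true, Set.indicator_of_notMem, mul_zero]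
        nlinarith [sq_nonneg (X x - m)]
  have h2 : ∫ x, (X x ^ 2 - 2 * m * X x + m ^ 2) ∂μ =
      (∑ i, ∑ j, μ.real (A i ∩ A j)) - m ^ 2 := by
    have hXs : Integrable (fun x => X x ^ 2 - 2 * m * X x) μ := hX2i.sub (hXi.const_mul _)
    rw [integral_add hXs (integrable_const _),
      integral_sub hX2i (hXi.const_mul _), integral_const_mul, hX, hX2]
    simp; ring
  have h3 : ∑ i, ∑ j, μ.real (A i ∩ A j) ≤ m + ρ * m ^ 2 := by
    have : m + ρ * m ^ 2 = ∑ i, ∑ j, ((if i = j then μ.real (A i) else 0) +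
        ρ * (μ.real (A i) * μ.real (A j))) := by
      simp_rw [Finset.sum_add_distrib]
      congr 1
      · simp [hmdef]
      · rw [sq, hmdef, Finset.sum_mul_sum, Finset.mul_sum]
        exact Finset.sum_congr rfl fun i _ => Finset.mul_sum _ _ _
    rw [this]
    refine Finset.sum_le_sum fun i _ => Finset.sum_le_sum fun j _ => ?_
    by_cases h : i = j
    · subst h
      have : 0 ≤ ρ * (μ.real (A i) * μ.real (A i)) := by positivity
      simp; exact this
    · simpa [h] using hρ i j h
  have h4 : m ^ 2 * μ.real (⋂ i, (A i)ᶜ) ≤ m ^ 2 * (1 / m + (ρ - 1)) := by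
    have : m ^ 2 * (1 / m + (ρ - 1)) = m + ρ * m ^ 2 - m ^ 2 := by
      field_simp; ring
    rw [this]; linarith
  exact le_of_mul_le_mul_left h4 (by positivity)

/-- `(k+1)`-sets containing `v`. -/
def star (k n : ℕ) (v : Fin n) : Finset (Finset (Fin n)) :=
  (Finset.powersetCard (k + 1) Finset.univ).filter fun K => v ∈ K

lemma isol_eq (k n : ℕ) (p : ℝ) (v : Fin n) : Isol k n p v = Late n p (star k n v) := by
  ext t
  simp [Isol, Late, star]

lemma card_star_le (k n : ℕ) (v : Fin n) : (star k n v).card ≤ n.choose k := by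
  have : n.choose k = (Finset.powersetCard k (Finset.univ : Finset (Fin n))).card := by simp
  rw [this]
  refine Finset.card_le_card_of_injOn (fun K => K.erase v) ?_ ?_
  · intro K hK
    simp only [star, Finset.coe_filter, Finset.mem_powersetCard, Finset.subset_univ, true_and,
      Set.mem_ofPred_eq] at hK
    simp [Finset.card_erase_of_mem hK.2, hK.1]
  · intro K hK L hL h
    simp only [star, Finset.coe_filter, Finset.mem_powersetCard, Finset.subset_univ, true_and,
      Set.mem_ofPred_eq] at hK hL
    rw [← Finset.insert_erase hK.2, ← Finset.insert_erase hL.2]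
    exact congrArg _ h

lemma card_star_inter_le (k n : ℕ) (u v : Fin n) (huv : u ≠ v) :
    (star (k + 1) n u ∩ star (k + 1) n v).card ≤ n.choose k := by
  have : n.choose k = (Finset.powersetCard k (Finset.univ : Finset (Fin n))).card := by simp
  rw [this]
  refine Finset.card_le_card_of_injOn (fun K => (K.erase u).erase v) ?_ ?_
  · intro K hK
    simp only [star, Finset.coe_inter, Finset.coe_filter, Finset.mem_powersetCard,
      Finset.subset_univ, true_and, Set.mem_ofPred_eq, Set.mem_inter_iff] at hK
    have hv : v ∈ K.erase u := Finset.mem_erase.mpr ⟨huv.symm, hK.2.2⟩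
    simp [Finset.card_erase_of_mem hv, Finset.card_erase_of_mem hK.1.2, hK.1.1]
  · intro K hK L hL h
    simp only [star, Finset.coe_inter, Finset.coe_filter, Finset.mem_powersetCard,
      Finset.subset_univ, true_and, Set.mem_ofPred_eq, Set.mem_inter_iff] at hK hL
    have hv : v ∈ K.erase u := Finset.mem_erase.mpr ⟨huv.symm, hK.2.2⟩
    have hv' : v ∈ L.erase u := Finset.mem_erase.mpr ⟨huv.symm, hL.2.2⟩
    have : K.erase u = L.erase u := by
      rw [← Finset.insert_erase hv, ← Finset.insert_erase hv']
      exact congrArg _ h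
    rw [← Finset.insert_erase hK.1.2, ← Finset.insert_erase hL.1.2, this]

lemma one_sub_ge (p : ℝ) (hp0 : 0 ≤ p) (hp : p ≤ 1 / 2) :
    Real.exp (-(p + 2 * p ^ 2)) ≤ 1 - p := by
  have hq : 0 < 1 - p := by linarith
  rw [← Real.le_log_iff_exp_le hq]
  refine le_trans ?_ (Real.one_sub_inv_le_log_of_pos hq)
  have : (1 - p)⁻¹ ≤ 1 + p + 2 * p ^ 2 := by
    rw [inv_le_iff_one_le_mul₀ hq]
    nlinarith [mul_nonneg (sq_nonneg p) (by linarith : (0:ℝ) ≤ 1 - 2 * p)]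
  linarith

lemma no_isol_bound (k n : ℕ) (hn : 0 < n) (p : ℝ) (hp0 : 0 ≤ p) (hp : p ≤ 1 / 2) :
    (birthMeasure n).real (⋂ v, (Isol (k + 1) n p v)ᶜ) ≤
      1 / (n * Real.exp (-(p + 2 * p ^ 2) * (n ^ (k + 1) / (k + 1).factorial))) +
        (Real.exp (2 * p * n ^ k) - 1) := by
  have hq : 0 < 1 - p := by linarith
  have hq1 : 1 - p ≤ 1 := by linarith
  have hlow : ∀ v, Real.exp (-(p + 2 * p ^ 2) * (n ^ (k + 1) / (k + 1).factorial)) ≤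
      (birthMeasure n).real (Isol (k + 1) n p v) := by
    intro v
    rw [isol_eq, measure_late n p hp0 (by linarith)]
    have h1 : ((star (k + 1) n v).card : ℝ) ≤ n ^ (k + 1) / (k + 1).factorial :=
      (Nat.cast_le.mpr (card_star_le (k + 1) n v)).trans (Nat.choose_le_pow_div (k + 1) n)
    calc _ ≤ Real.exp (-(p + 2 * p ^ 2) * (star (k + 1) n v).card) := by
          apply Real.exp_le_exp.mpr
          apply mul_le_mul_of_nonpos_left h1
          nlinarith
      _ = Real.exp (-(p + 2 * p ^ 2)) ^ (star (k + 1) n v).card := by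
          rw [← Real.exp_nat_mul, mul_comm]
      _ ≤ _ := pow_le_pow_left₀ (Real.exp_pos _).le (one_sub_ge p hp0 hp) _
  have hsum : n * Real.exp (-(p + 2 * p ^ 2) * (n ^ (k + 1) / (k + 1).factorial)) ≤
      ∑ v, (birthMeasure n).real (Isol (k + 1) n p v) := by
    calc _ = ∑ v : Fin n, Real.exp (-(p + 2 * p ^ 2) * (n ^ (k + 1) / (k + 1).factorial)) := by
          simp
      _ ≤ _ := Finset.sum_le_sum fun v _ => hlow v
  have hpos : 0 < n * Real.exp (-(p + 2 * p ^ 2) * (n ^ (k + 1) / (k + 1).factorial)) := by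
    positivity
  have := second_moment_s6 (birthMeasure n) (Isol (k + 1) n p)
    (fun v => by rw [isol_eq]; exact measurableSet_late _ _ _) (Real.exp (2 * p * n ^ k))
    (Real.one_le_exp (by positivity)) ?_ (hpos.trans_le hsum)
  · refine this.trans ?_
    gcongr
  · intro u v huv
    have hi : Isol (k + 1) n p u ∩ Isol (k + 1) n p v =
        Late n p (star (k + 1) n u ∪ star (k + 1) n v) := by
      rw [isol_eq, isol_eq]
      ext t
      simp only [Late, Set.mem_inter_iff, Set.mem_ofPred_eq, Finset.mem_union]
      constructor
      · rintro ⟨a, b⟩ K (h | h)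
        exacts [a K h, b K h]
      · intro h; exact ⟨fun K hK => h K (Or.inl hK), fun K hK => h K (Or.inr hK)⟩
    rw [hi, isol_eq, isol_eq, measure_late n p hp0 (by linarith),
      measure_late n p hp0 (by linarith), measure_late n p hp0 (by linarith), ← pow_add,
      ← Finset.card_union_add_card_inter, pow_add, mul_left_comm]
    have hI : ((star (k + 1) n u ∩ star (k + 1) n v).card : ℝ) ≤ n ^ k := by
      exact_mod_cast (card_star_inter_le k n u v huv).trans (Nat.choose_le_pow n k)
    have : 1 ≤ Real.exp (2 * p * n ^ k) *
        (1 - p) ^ (star (k + 1) n u ∩ star (k + 1) n v).card := by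
      set c := (star (k + 1) n u ∩ star (k + 1) n v).card
      calc (1 : ℝ) ≤ Real.exp (2 * p * n ^ k + c * (-(p + 2 * p ^ 2))) := by
            apply Real.one_le_exp
            have : (c : ℝ) * (p + 2 * p ^ 2) ≤ n ^ k * (2 * p) := by
              apply mul_le_mul hI _ (by positivity) (by positivity)
              nlinarith
            nlinarith
        _ = Real.exp (2 * p * n ^ k) * Real.exp (-(p + 2 * p ^ 2)) ^ c := by
            rw [Real.exp_add, Real.exp_nat_mul]
        _ ≤ _ := by
            gcongr
            exact one_sub_ge p hp0 hp
    exact le_mul_of_one_le_right (by positivity) this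

/-- `(k+1)`-sets crossing `S`. -/
def crossing (k n : ℕ) (S : Finset (Fin n)) : Finset (Finset (Fin n)) :=
  (Finset.powersetCard (k + 1) Finset.univ).filter
    fun K => (∃ u ∈ K, u ∈ S) ∧ (∃ v ∈ K, v ∉ S)

lemma card_crossing_ge (k n : ℕ) (hk : 1 ≤ k) (S : Finset (Fin n)) :
    S.card * (n - S.card).choose k ≤ (crossing k n S).card := by
  have : S.card * (n - S.card).choose k = (S ×ˢ Finset.powersetCard k Sᶜ).card := by
    simp [Finset.card_compl]
  rw [this]
  refine Finset.card_le_card_of_injOn (fun x => insert x.1 x.2) ?_ ?_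
  · rintro ⟨v, A⟩ h
    simp only [Finset.coe_product, Set.mem_prod, Finset.mem_coe, Finset.mem_powersetCard] at h
    obtain ⟨hv, hA, hc⟩ := h
    have hvA : v ∉ A := fun h => Finset.mem_compl.mp (hA h) hv
    have hne : A.Nonempty := by
      rw [← Finset.card_pos]; omega
    obtain ⟨w, hw⟩ := hne
    simp only [crossing, Finset.coe_filter, Finset.mem_powersetCard, Finset.subset_univ, true_and,
      Set.mem_ofPred_eq]
    refine ⟨by rw [Finset.card_insert_of_notMem hvA, hc], ⟨v, by simp, hv⟩, ⟨w, by simp [hw], ?_⟩⟩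
    exact Finset.mem_compl.mp (hA hw)
  · rintro ⟨v, A⟩ h ⟨w, B⟩ h' e
    simp only [Finset.coe_product, Set.mem_prod, Finset.mem_coe, Finset.mem_powersetCard] at h h'
    obtain ⟨hv, hA, hc⟩ := h
    obtain ⟨hw, hB, hc'⟩ := h'
    have hvA : v ∉ A := fun h => Finset.mem_compl.mp (hA h) hv
    have hwB : w ∉ B := fun h => Finset.mem_compl.mp (hB h) hw
    simp only at e
    have hvw : v = w := by
      have : v ∈ insert w B := e ▸ Finset.mem_insert_self v A
      rcases Finset.mem_insert.mp this with h | h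
      · exact h
      · exact absurd hv (Finset.mem_compl.mp (hB h))
    subst hvw
    have : A = B := by
      rw [← Finset.erase_insert hvA, ← Finset.erase_insert hwB, e]
    rw [this]

lemma not_crossed_bound (k n : ℕ) (hk : 1 ≤ k) (p : ℝ) (hp0 : 0 ≤ p) (hp1 : p ≤ 1) :
    (birthMeasure n).real {t | ¬ Crossed k n p t} ≤
      ∑ s ∈ Finset.Icc 1 (n / 2),
        (n.choose s : ℝ) * Real.exp (-(p * (s * (n - s).choose k : ℕ))) := by
  let T : Finset (Finset (Fin n)) := (Finset.Icc 1 (n / 2)).biUnion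
    fun s => Finset.powersetCard s Finset.univ
  have hsub : {t | ¬ Crossed k n p t} ⊆ ⋃ S ∈ T, Late n p (crossing k n S) := by
    intro t ht
    simp only [Set.mem_ofPred_eq, Crossed, not_forall] at ht
    obtain ⟨S, hS, hc, h⟩ := ht
    simp only [Set.mem_iUnion]
    refine ⟨S, ?_, ?_⟩
    · simp only [T, Finset.mem_biUnion, Finset.mem_powersetCard, Finset.subset_univ, true_and]
      refine ⟨S.card, Finset.mem_Icc.mpr ⟨Finset.card_pos.mpr hS, by omega⟩, rfl⟩
    · intro K hK
      simp only [crossing, Finset.mem_filter, Finset.mem_powersetCard, Finset.subset_univ,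
        true_and] at hK
      by_contra hlt
      exact h ⟨K, hK.1, not_lt.mp hlt, hK.2⟩
  have hterm : ∀ S : Finset (Fin n), (birthMeasure n).real (Late n p (crossing k n S)) ≤
      Real.exp (-(p * (S.card * (n - S.card).choose k : ℕ))) := by
    intro S
    rw [measure_late n p hp0 hp1]
    calc (1 - p) ^ (crossing k n S).card ≤ (1 - p) ^ (S.card * (n - S.card).choose k) :=
          pow_le_pow_of_le_one (by linarith) (by linarith) (card_crossing_ge k n hk S)
      _ ≤ Real.exp (-p) ^ (S.card * (n - S.card).choose k) :=
          pow_le_pow_left₀ (by linarith) (Real.one_sub_le_exp_neg p) _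
      _ = _ := by
          rw [← Real.exp_nat_mul]; congr 1; ring
  calc _ ≤ (birthMeasure n).real (⋃ S ∈ T, Late n p (crossing k n S)) :=
        measureReal_mono hsub (measure_ne_top _ _)
    _ ≤ ∑ S ∈ T, (birthMeasure n).real (Late n p (crossing k n S)) :=
        measureReal_biUnion_finset_le _ _
    _ ≤ ∑ S ∈ T, Real.exp (-(p * (S.card * (n - S.card).choose k : ℕ))) :=
        Finset.sum_le_sum fun S _ => hterm S
    _ = ∑ s ∈ Finset.Icc 1 (n / 2), ∑ S ∈ Finset.powersetCard s (Finset.univ : Finset (Fin n)),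
          Real.exp (-(p * (S.card * (n - S.card).choose k : ℕ))) := by
        refine Finset.sum_biUnion ?_
        intro a _ b _ hab
        exact Finset.pairwise_disjoint_powersetCard _ hab
    _ = _ := by
        refine Finset.sum_congr rfl fun s _ => ?_
        rw [Finset.sum_congr rfl (g := fun _ => Real.exp (-(p * (s * (n - s).choose k : ℕ))))]
        · simp
        · intro S hS
          rw [(Finset.mem_powersetCard.mp hS).2]

/-! ### Asymptotics -/

lemma choose_lower (k m : ℕ) (x : ℝ) (hx0 : 0 ≤ x) (hx : x + k ≤ m) :
    x ^ k ≤ k.factorial * m.choose k := by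
  have hkm : k ≤ m := by
    have : (k : ℝ) ≤ m := by linarith
    exact_mod_cast this
  have h1 : (m + 1 - k) ^ k ≤ k.factorial * m.choose k := by
    rw [← Nat.descFactorial_eq_factorial_mul_choose]
    exact Nat.pow_sub_le_descFactorial m k
  have h2 : x ≤ ((m + 1 - k : ℕ) : ℝ) := by
    rw [Nat.cast_sub (by omega)]; push_cast; linarith
  calc x ^ k ≤ ((m + 1 - k : ℕ) : ℝ) ^ k := pow_le_pow_left₀ hx0 h2 k
    _ ≤ _ := by exact_mod_cast h1

lemma term_bound (k n s : ℕ) (hk : 1 ≤ k) (hn : 4 * k ≤ n) (hn3 : 3 ≤ n) (hs1 : 1 ≤ s)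
    (hs : 2 * s ≤ n) (w : ℝ) (hw0 : 0 ≤ w) (hw : w ≤ Real.log n) :
    (n.choose s : ℝ) * Real.exp (-(((Real.log n + w / 2) * k.factorial / (n : ℝ) ^ k) *
        (s * (n - s).choose k : ℕ))) ≤
      Real.exp (2 * k + 2 * k ^ 2 - w / 2) ^ s +
      (Real.exp 1 * Real.log n * Real.exp (-(Real.log n / 4 ^ k))) ^ s := by
  set L := Real.log n with hL
  have hnpos : (0 : ℝ) < n := by exact_mod_cast (by omega : 0 < n)
  have hL0 : 0 ≤ L := Real.log_natCast_nonneg n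
  have hLn : L ≤ n := (Real.log_le_sub_one_of_pos hnpos).trans (by linarith)
  have hspos : (0 : ℝ) < s := by exact_mod_cast hs1
  have hsR : 2 * (s : ℝ) ≤ n := by exact_mod_cast hs
  have hkR : 4 * (k : ℝ) ≤ n := by exact_mod_cast hn
  have hk1 : (1 : ℝ) ≤ k := by exact_mod_cast hk
  set y : ℝ := (s + k) / n with hy
  have hyn : y * n = s + k := by rw [hy]; field_simp
  have hy34 : y ≤ 3 / 4 := by rw [hy, div_le_iff₀ hnpos]; linarith
  have hy0 : 0 ≤ y := by positivity
  -- lower bound on exponent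
  have hexp : s * ((L + w / 2) * (1 - y) ^ k) ≤
      ((L + w / 2) * k.factorial / (n : ℝ) ^ k) * (s * (n - s).choose k : ℕ) := by
    have h := choose_lower k (n - s) ((1 - y) * n) (mul_nonneg (by linarith) hnpos.le) (by
      rw [Nat.cast_sub (by omega)]
      nlinarith)
    rw [mul_pow] at h
    have h' : (1 - y) ^ k ≤ k.factorial * (n - s).choose k / (n : ℝ) ^ k := by
      rw [le_div_iff₀ (by positivity)]; exact h
    calc _ ≤ s * ((L + w / 2) * (k.factorial * (n - s).choose k / (n : ℝ) ^ k)) := by gcongr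
      _ = _ := by push_cast; ring
  have hterm : (n.choose s : ℝ) * Real.exp (-(((L + w / 2) * k.factorial / (n : ℝ) ^ k) *
        (s * (n - s).choose k : ℕ))) ≤
        (n.choose s : ℝ) * Real.exp (-(s * ((L + w / 2) * (1 - y) ^ k))) := by
    gcongr
  refine hterm.trans ?_
  by_cases hc : s * L ≤ n
  · have hch : (n.choose s : ℝ) ≤ Real.exp (s * L) := by
      rw [Real.exp_nat_mul, hL, Real.exp_log hnpos]
      exact_mod_cast Nat.choose_le_pow n s
    have hb : 1 - k * y ≤ (1 - y) ^ k := by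
      have := one_add_mul_le_pow (a := -y) (by linarith) k
      calc 1 - k * y = 1 + k * (-y) := by ring
        _ ≤ _ := this
        _ = _ := by ring
    have hLy : L * y ≤ 1 + k := by
      rw [hy, mul_div_assoc', div_le_iff₀ hnpos]
      nlinarith
    have hfin : (L + w / 2) * (1 - k * y) ≥ L + w / 2 - (2 * k + 2 * k ^ 2) := by
      have h1 : (L + w / 2) * y ≤ 2 * (1 + k) := by
        have : (L + w / 2) * y ≤ (2 * L) * y := by gcongr; linarith
        linarith
      nlinarith
    have : (n.choose s : ℝ) * Real.exp (-(s * ((L + w / 2) * (1 - y) ^ k))) ≤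
        Real.exp (2 * k + 2 * k ^ 2 - w / 2) ^ s := by
      calc _ ≤ Real.exp (s * L) * Real.exp (-(s * ((L + w / 2) * (1 - k * y)))) := by gcongr
        _ = Real.exp (s * (L - ((L + w / 2) * (1 - k * y)))) := by
            rw [← Real.exp_add]; congr 1; ring
        _ ≤ Real.exp (s * (2 * k + 2 * k ^ 2 - w / 2)) := by
            exact Real.exp_le_exp.mpr (mul_le_mul_of_nonneg_left (by linarith) hspos.le)
        _ = _ := Real.exp_nat_mul _ _
    refine this.trans (le_add_of_nonneg_right (by positivity))
  · push Not at hc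
    have hch : (n.choose s : ℝ) ≤ (Real.exp 1 * L) ^ s := by
      have h1 : (n.choose s : ℝ) ≤ n ^ s / s.factorial := Nat.choose_le_pow_div s n
      have h2 : (s : ℝ) ^ s / s.factorial ≤ Real.exp s := Real.pow_div_factorial_le_exp _ hspos.le s
      have h3 : (n : ℝ) ^ s / s.factorial ≤ (s * L) ^ s / s.factorial := by gcongr
      calc _ ≤ (s * L) ^ s / (s.factorial : ℝ) := h1.trans h3
        _ = ((s : ℝ) ^ s / s.factorial) * L ^ s := by rw [mul_pow]; ring
        _ ≤ Real.exp s * L ^ s := by gcongr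
        _ = _ := by rw [mul_pow, ← Real.exp_nat_mul, mul_one]
    have hb : L / 4 ^ k ≤ (L + w / 2) * (1 - y) ^ k := by
      calc L / 4 ^ k = L * (1 / 4) ^ k := by rw [one_div, inv_pow]; rfl
        _ ≤ _ := mul_le_mul (by linarith) (pow_le_pow_left₀ (by norm_num) (by linarith) k)
          (by positivity) (by linarith)
    have : (n.choose s : ℝ) * Real.exp (-(s * ((L + w / 2) * (1 - y) ^ k))) ≤
        (Real.exp 1 * L * Real.exp (-(L / 4 ^ k))) ^ s := by
      calc _ ≤ (Real.exp 1 * L) ^ s * Real.exp (-(s * (L / 4 ^ k))) := by gcongr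
        _ = _ := by
          rw [mul_pow _ (Real.exp (-(L / 4 ^ k))), ← Real.exp_nat_mul]; congr 2; ring
    refine this.trans (le_add_of_nonneg_left (by positivity))

lemma geo_bound (a : ℝ) (ha0 : 0 ≤ a) (ha : a ≤ 1 / 2) (N : ℕ) :
    ∑ s ∈ Finset.Icc 1 N, a ^ s ≤ 2 * a := by
  have : ∑ s ∈ Finset.Icc 1 N, a ^ s ≤ 2 * a - 2 * a ^ (N + 1) := by
    induction N with
    | zero => simp
    | succ N ih =>
      rw [Finset.sum_Icc_succ_top (by omega)]
      have h : a ^ (N + 1 + 1) = a ^ (N + 1) * a := pow_succ _ _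
      have h2 : 0 ≤ a ^ (N + 1) := by positivity
      nlinarith
  have h2 : 0 ≤ a ^ (N + 1) := by positivity
  linarith

lemma tendsto_log_nat : Tendsto (fun n : ℕ => Real.log n) atTop atTop :=
  Real.tendsto_log_atTop.comp tendsto_natCast_atTop_atTop

lemma tendsto_log_pow_div (j : ℕ) (c : ℝ) :
    Tendsto (fun n : ℕ => c * Real.log n ^ j / n) atTop (nhds 0) := by
  have h := (Real.isLittleO_pow_log_id_atTop (n := j)).tendsto_div_nhds_zero.comp
    (tendsto_natCast_atTop_atTop (R := ℝ))
  have h2 := h.const_mul c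
  rw [mul_zero] at h2
  refine h2.congr fun n => ?_
  simp [mul_div_assoc]

lemma upper_tendsto (k : ℕ) (hk : 1 ≤ k) (w : ℕ → ℝ) (hw : Tendsto w atTop atTop)
    (hwl : ∀ n, w n ≤ Real.log n / 2) :
    Tendsto (fun n : ℕ => (birthMeasure n).real
      {t | ¬ Crossed k n ((Real.log n + w n / 2) * k.factorial / (n : ℝ) ^ k) t})
      atTop (nhds 0) := by
  set a : ℕ → ℝ := fun n => Real.exp (2 * k + 2 * k ^ 2 - w n / 2) with ha
  set b : ℕ → ℝ := fun n => Real.exp 1 * Real.log n * Real.exp (-(Real.log n / 4 ^ k)) with hb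
  have hat : Tendsto a atTop (nhds 0) := by
    refine Real.tendsto_exp_atBot.comp ?_
    simp_rw [sub_eq_add_neg]
    refine tendsto_atBot_add_const_left _ _ ?_
    exact tendsto_neg_atTop_atBot.comp (hw.atTop_div_const (by norm_num))
  have hbt : Tendsto b atTop (nhds 0) := by
    have h1 := (Real.tendsto_pow_mul_exp_neg_atTop_nhds_zero 1).comp
      (tendsto_log_nat.atTop_div_const (by positivity : (0 : ℝ) < 4 ^ k))
    have h2 := h1.const_mul (Real.exp 1 * 4 ^ k)
    rw [mul_zero] at h2
    refine h2.congr fun n => ?_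
    simp only [Function.comp, hb, pow_one]
    field_simp
  have hlim : Tendsto (fun n => 2 * a n + 2 * b n) atTop (nhds 0) := by
    simpa using (hat.const_mul 2).add (hbt.const_mul 2)
  have hp1 : ∀ᶠ n : ℕ in atTop, 2 * k.factorial * Real.log n ^ 1 / n < 1 :=
    (tendsto_log_pow_div 1 (2 * k.factorial)).eventually (gt_mem_nhds one_pos)
  refine tendsto_of_tendsto_of_tendsto_of_le_of_le' tendsto_const_nhds hlim
    (Eventually.of_forall fun n => measureReal_nonneg) ?_
  filter_upwards [hp1, eventually_ge_atTop (4 * k), eventually_ge_atTop 3,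
    hw.eventually_ge_atTop 0, hat.eventually (gt_mem_nhds (by norm_num : (0 : ℝ) < 1 / 2)),
    hbt.eventually (gt_mem_nhds (by norm_num : (0 : ℝ) < 1 / 2))] with n hp1 hn4 hn3 hw0 han hbn
  have hnpos : (0 : ℝ) < n := by exact_mod_cast (by omega : 0 < n)
  have hn1 : (1 : ℝ) ≤ n := by exact_mod_cast (by omega : 1 ≤ n)
  have hL0 : 0 ≤ Real.log n := Real.log_natCast_nonneg n
  have hwn := hwl n
  refine (not_crossed_bound k n hk _ (by positivity) ?_).trans ?_
  · calc (Real.log n + w n / 2) * k.factorial / (n : ℝ) ^ k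
        ≤ (2 * Real.log n) * k.factorial / (n : ℝ) ^ 1 := by
          gcongr
          · linarith
      _ = 2 * k.factorial * Real.log n ^ 1 / n := by ring
      _ ≤ 1 := hp1.le
  · calc _ ≤ ∑ s ∈ Finset.Icc 1 (n / 2), (a n ^ s + b n ^ s) := by
          refine Finset.sum_le_sum fun s hs => ?_
          rw [Finset.mem_Icc] at hs
          exact term_bound k n s hk hn4 hn3 hs.1 (by omega) (w n) hw0 (by linarith)
      _ ≤ _ := by
          rw [Finset.sum_add_distrib]
          exact add_le_add (geo_bound _ (by positivity) han.le _)
            (geo_bound _ (by positivity) hbn.le _)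

lemma lower_tendsto (k : ℕ) (w : ℕ → ℝ) (hw : Tendsto w atTop atTop)
    (hwl : ∀ n, w n ≤ Real.log n / 2) :
    Tendsto (fun n : ℕ => (birthMeasure n).real
      (⋂ v, (Isol (k + 1) n ((Real.log n - w n / 2) * (k + 1).factorial / (n : ℝ) ^ (k + 1)) v)ᶜ))
      atTop (nhds 0) := by
  set c : ℝ := ((k + 1).factorial : ℝ) with hc
  have hcpos : 0 < c := by rw [hc]; positivity
  have h1 : Tendsto (fun n : ℕ => Real.exp (2 * c * Real.log n ^ 2 / n - w n / 2))
      atTop (nhds 0) := by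
    refine Real.tendsto_exp_atBot.comp ?_
    simp_rw [sub_eq_add_neg]
    exact (tendsto_log_pow_div 2 (2 * c)).add_atBot
      (tendsto_neg_atTop_atBot.comp (hw.atTop_div_const (by norm_num)))
  have h2 : Tendsto (fun n : ℕ => Real.exp (2 * c * Real.log n ^ 1 / n) - 1)
      atTop (nhds 0) := by
    have := ((Real.continuous_exp.tendsto 0).comp (tendsto_log_pow_div 1 (2 * c))).sub_const 1
    simpa using this
  have hlim := h1.add h2
  rw [add_zero] at hlim
  have hp1 : ∀ᶠ n : ℕ in atTop, c * Real.log n ^ 1 / n < 1 / 2 :=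
    (tendsto_log_pow_div 1 c).eventually (gt_mem_nhds (by norm_num))
  refine tendsto_of_tendsto_of_tendsto_of_le_of_le' tendsto_const_nhds hlim
    (Eventually.of_forall fun n => measureReal_nonneg) ?_
  filter_upwards [hp1, eventually_ge_atTop 3, hw.eventually_ge_atTop 0] with n hp1 hn3 hw0
  have hnpos : (0 : ℝ) < n := by exact_mod_cast (by omega : 0 < n)
  have hn1 : (1 : ℝ) ≤ n := by exact_mod_cast (by omega : 1 ≤ n)
  have hL0 : 0 ≤ Real.log n := Real.log_natCast_nonneg n
  have hwn := hwl n
  set L := Real.log n with hL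
  set p := (L - w n / 2) * c / (n : ℝ) ^ (k + 1) with hp
  have hLw : 0 ≤ L - w n / 2 := by linarith
  have hp0 : 0 ≤ p := by positivity
  have hpn : p * n ^ k ≤ c * L / n := by
    rw [hp, pow_succ]
    calc (L - w n / 2) * c / ((n : ℝ) ^ k * n) * n ^ k = (L - w n / 2) * c / n := by field_simp
      _ ≤ L * c / n := by gcongr; linarith
      _ = _ := by ring
  have hpc : p ≤ c * L / n := by
    refine le_trans ?_ hpn
    exact le_mul_of_one_le_right hp0 (one_le_pow₀ hn1)
  have hph : p ≤ 1 / 2 := by rw [pow_one] at hp1; linarith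
  refine (no_isol_bound k n (by omega) p hp0 hph).trans ?_
  refine add_le_add ?_ ?_
  · rw [one_div, ← Real.exp_log hnpos, ← Real.exp_add, ← Real.exp_neg, Real.exp_log hnpos]
    apply Real.exp_le_exp.mpr
    have he : p * (n ^ (k + 1) / c) = L - w n / 2 := by rw [hp]; field_simp
    have he2 : (p + 2 * p ^ 2) * (n ^ (k + 1) / c) = (L - w n / 2) * (1 + 2 * p) := by
      rw [← he]; ring
    rw [neg_mul, he2]
    have : (L - w n / 2) * p ≤ L * (c * L / n) := by
      apply mul_le_mul _ hpc hp0 hL0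
      linarith
    have h3 : 2 * c * L ^ 2 / n = 2 * (L * (c * L / n)) := by ring
    rw [h3, ← hL]
    nlinarith
  · have : 2 * p * (n : ℝ) ^ k ≤ 2 * c * L ^ 1 / n := by
      have h3 : 2 * c * L ^ 1 / n = 2 * (c * L / n) := by ring
      rw [h3]; linarith
    gcongr

/-- Lemma 4.1: whp `(log n - ω)·k!/n^k < p_T < (log n + ω)·k!/n^k`, and in particular
whp `p_T > log n / n^k`. -/
theorem statement6 (k : ℕ) (hk : 2 ≤ k) (ω : ℕ → ℝ) (hω : Tendsto ω atTop atTop) :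
    Tendsto (fun n : ℕ => birthMeasure n {t : Finset (Fin n) → ℝ |
      ((Real.log n - ω n) * (Nat.factorial k) / (n : ℝ) ^ k < pT k n t ∧
        pT k n t < (Real.log n + ω n) * (Nat.factorial k) / (n : ℝ) ^ k) ∧
      Real.log n / (n : ℝ) ^ k < pT k n t})
      atTop (nhds 1) := by
  obtain ⟨k, rfl⟩ : ∃ k', k = k' + 1 := ⟨k - 1, by omega⟩
  set w : ℕ → ℝ := fun n => min (ω n) (Real.log n / 2) with hwdef
  have hw : Tendsto w atTop atTop :=
    Filter.tendsto_atTop.mpr fun b => by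
      filter_upwards [hω.eventually_ge_atTop b,
        (tendsto_log_nat.atTop_div_const (by norm_num : (0 : ℝ) < 2)).eventually_ge_atTop b]
        with n h1 h2 using le_min h1 h2
  have hwl : ∀ n, w n ≤ Real.log n / 2 := fun n => min_le_right _ _
  have hwω : ∀ n, w n ≤ ω n := fun n => min_le_left _ _
  have hU := upper_tendsto (k + 1) (by omega) w hw hwl
  have hL := lower_tendsto k w hw hwl
  have hsum := hL.add hU
  rw [add_zero] at hsum
  have hsub : Tendsto (fun n : ℕ => ENNReal.ofReal (1 - ((birthMeasure n).real
      (⋂ v, (Isol (k + 1) n ((Real.log n - w n / 2) * (k + 1).factorial / (n : ℝ) ^ (k + 1)) v)ᶜ)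
      + (birthMeasure n).real
      {t | ¬ Crossed (k + 1) n ((Real.log n + w n / 2) * (k + 1).factorial / (n : ℝ) ^ (k + 1)) t})))
      atTop (nhds 1) := by
    have := ENNReal.tendsto_ofReal (hsum.const_sub 1)
    simpa using this
  have hp1 : ∀ᶠ n : ℕ in atTop, (k + 1).factorial * Real.log n ^ 1 / n < 1 :=
    (tendsto_log_pow_div 1 ((k + 1).factorial)).eventually (gt_mem_nhds one_pos)
  refine tendsto_of_tendsto_of_tendsto_of_le_of_le' hsub tendsto_const_nhds ?_
    (Eventually.of_forall fun n => prob_le_one)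
  filter_upwards [hp1, eventually_ge_atTop 3, hw.eventually_gt_atTop 0] with n hp1 hn3 hw0
  have hnpos : (0 : ℝ) < n := by exact_mod_cast (by omega : 0 < n)
  have hn1 : (1 : ℝ) ≤ n := by exact_mod_cast (by omega : 1 ≤ n)
  have hL0 : 0 ≤ Real.log n := Real.log_natCast_nonneg n
  have hwn := hwl n
  have hwo := hwω n
  set p := (Real.log n - w n / 2) * (k + 1).factorial / (n : ℝ) ^ (k + 1) with hp
  set q := (Real.log n + w n / 2) * (k + 1).factorial / (n : ℝ) ^ (k + 1) with hq
  have hLw : 0 ≤ Real.log n - w n / 2 := by linarith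
  have hp0 : 0 ≤ p := by positivity
  have hple : p ≤ 1 := by
    calc p ≤ Real.log n * (k + 1).factorial / (n : ℝ) ^ 1 := by
          rw [hp]
          gcongr
          · linarith
          · omega
      _ = (k + 1).factorial * Real.log n ^ 1 / n := by ring
      _ ≤ 1 := hp1.le
  have hnk : (0 : ℝ) < (n : ℝ) ^ (k + 1) := by positivity
  have hf2 : (2 : ℝ) ≤ (k + 1).factorial := by
    have : 2 ≤ (k + 1).factorial := hk.trans (Nat.self_le_factorial _)
    exact_mod_cast this
  have hA : (Real.log n - ω n) * (Nat.factorial (k + 1)) / (n : ℝ) ^ (k + 1) < p := by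
    rw [hp]
    apply div_lt_div_of_pos_right _ hnk
    apply mul_lt_mul_of_pos_right _ (by linarith)
    linarith
  have hB : q < (Real.log n + ω n) * (Nat.factorial (k + 1)) / (n : ℝ) ^ (k + 1) := by
    rw [hq]
    apply div_lt_div_of_pos_right _ hnk
    apply mul_lt_mul_of_pos_right _ (by linarith)
    linarith
  have hC : Real.log n / (n : ℝ) ^ (k + 1) < p := by
    rw [hp]
    apply div_lt_div_of_pos_right _ hnk
    nlinarith
  set T := {t : Finset (Fin n) → ℝ |
      ((Real.log n - ω n) * (Nat.factorial (k + 1)) / (n : ℝ) ^ (k + 1) < pT (k + 1) n t ∧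
        pT (k + 1) n t < (Real.log n + ω n) * (Nat.factorial (k + 1)) / (n : ℝ) ^ (k + 1)) ∧
      Real.log n / (n : ℝ) ^ (k + 1) < pT (k + 1) n t} with hT
  have hcover : (Set.univ : Set (Finset (Fin n) → ℝ)) ⊆
      T ∪ ((⋂ v, (Isol (k + 1) n p v)ᶜ) ∪ {t | ¬ Crossed (k + 1) n q t}) := by
    intro t _
    by_cases h1 : t ∈ ⋂ v, (Isol (k + 1) n p v)ᶜ
    · exact Or.inr (Or.inl h1)
    by_cases h2 : Crossed (k + 1) n q t
    · left
      simp only [Set.mem_iInter, not_forall, Set.mem_compl_iff, not_not] at h1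
      obtain ⟨v, hv⟩ := h1
      obtain ⟨h3, h4⟩ := pT_bounds (k + 1) n (by omega) t p q hp0 hple v hv h2
      exact ⟨⟨hA.trans_le h3, h4.trans_lt hB⟩, hC.trans_le h3⟩
    · exact Or.inr (Or.inr h2)
  have hone : (1 : ℝ) ≤ (birthMeasure n).real T + ((birthMeasure n).real
      (⋂ v, (Isol (k + 1) n p v)ᶜ) + (birthMeasure n).real {t | ¬ Crossed (k + 1) n q t}) := by
    calc (1 : ℝ) = (birthMeasure n).real Set.univ := by simp
      _ ≤ _ := measureReal_mono hcover (measure_ne_top _ _)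
      _ ≤ _ := measureReal_union_le _ _
      _ ≤ _ := by gcongr; exact measureReal_union_le _ _
  rw [← ENNReal.ofReal_toReal (measure_ne_top (birthMeasure n) T)]
  apply ENNReal.ofReal_le_ofReal
  rw [← measureReal_def]
  linarith


end RSC
end

section
/- Let G be a k-dimensional simplicial complex, j ∈ {1,…,k−1}, and let S be the support of a j-cocycle of G. For a k-simplex K, let S_K denote the set of j-simplices in S contained in K. Then for each k-simplex K of G: (i) either S_K = ∅, or both |S_K| ≥ k−j+1 and the union of the members of S_K equals K; (ii) if |S_K| = k−j+1, then S_K forms a j-flower in K, i.e. the intersection of all members of S_K is a j-element set C and every member of S_K equals C ∪ {w} for some w ∈ K \ C, with the union of the members equal to K. -/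
open MeasureTheory Filter

attribute [local instance] Classical.propDecidable

namespace RSC

variable {V : Type*}

theorem flower_aux {V : Type*} [DecidableEq V] (k j : ℕ) (hjk : j < k) (K : Finset V)
    (hK : K.card = k + 1) (T : Finset (Finset V)) (hTK : ∀ σ ∈ T, σ ⊆ K)
    (hTc : ∀ σ ∈ T, σ.card = j + 1)
    (hT : ∀ σ ∈ T, ∀ w ∈ K \ σ, ∃ x ∈ σ, insert w (σ.erase x) ∈ T) :
    (T = ∅ ∨ (k - j + 1 ≤ T.card ∧ ∀ v ∈ K, ∃ σ ∈ T, v ∈ σ)) ∧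
    (T.card = k - j + 1 → ∃ C : Finset V, C.card = j ∧ C ⊆ K ∧
      ∀ P, P ∈ T ↔ ∃ w ∈ K \ C, P = insert w C) := by
  choose! x hxσ hxT using hT
  have hinj : ∀ σ, Set.InjOn (fun w => insert w (σ.erase (x σ w))) (↑(K \ σ) : Set V) := by
    intro σ w hw w' hw' h
    simp only [Finset.coe_sdiff, Set.mem_diff, Finset.mem_coe] at hw hw'
    have h1 : w ∈ insert w' (σ.erase (x σ w')) := by
      have : w ∈ insert w (σ.erase (x σ w)) := Finset.mem_insert_self _ _
      exact (show insert w (σ.erase (x σ w)) = insert w' (σ.erase (x σ w')) from h) ▸ this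
    rcases Finset.mem_insert.1 h1 with h2 | h2
    · exact h2
    · exact absurd (Finset.mem_of_mem_erase h2) hw.2
  let I : Finset V → Finset (Finset V) := fun σ =>
    insert σ ((K \ σ).image (fun w => insert w (σ.erase (x σ w))))
  have hIc : ∀ σ ∈ T, (I σ).card = k - j + 1 := by
    intro σ hσ
    have hc : (K \ σ).card = k - j := by
      rw [Finset.card_sdiff_of_subset (hTK σ hσ), hK, hTc σ hσ]; omega
    rw [Finset.card_insert_of_notMem, Finset.card_image_of_injOn (hinj σ), hc]
    intro h
    obtain ⟨w, hw, h⟩ := Finset.mem_image.1 h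
    apply (Finset.mem_sdiff.1 hw).2
    rw [← h]
    exact Finset.mem_insert_self _ _
  have hIT : ∀ σ ∈ T, I σ ⊆ T := by
    intro σ hσ τ hτ
    rcases Finset.mem_insert.1 hτ with h | h
    · rwa [h]
    · obtain ⟨w, hw, h⟩ := Finset.mem_image.1 h
      rw [← h]; exact hxT σ hσ w hw
  constructor
  · rcases T.eq_empty_or_nonempty with h | ⟨σ, hσ⟩
    · exact Or.inl h
    · refine Or.inr ⟨(hIc σ hσ) ▸ Finset.card_le_card (hIT σ hσ), fun v hv => ?_⟩
      by_cases hvσ : v ∈ σ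
      · exact ⟨σ, hσ, hvσ⟩
      · exact ⟨_, hxT σ hσ v (Finset.mem_sdiff.2 ⟨hv, hvσ⟩), Finset.mem_insert_self _ _⟩
  · intro hcard
    have hIeq : ∀ σ ∈ T, I σ = T := fun σ hσ =>
      Finset.eq_of_subset_of_card_le (hIT σ hσ) (by rw [hcard, hIc σ hσ])
    -- a member of `T` containing a vertex outside `σ` is determined by it
    have huniq0 : ∀ σ ∈ T, ∀ w ∈ K \ σ, ∀ τ ∈ T, w ∈ τ → τ = insert w (σ.erase (x σ w)) := by
      intro σ hσ w hw τ hτ hwτ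
      have hw2 := (Finset.mem_sdiff.1 hw).2
      rw [← hIeq σ hσ] at hτ
      rcases Finset.mem_insert.1 hτ with h | h
      · rw [h] at hwτ; exact absurd hwτ hw2
      · obtain ⟨w', hw', h⟩ := Finset.mem_image.1 h
        rw [← h] at hwτ
        rcases Finset.mem_insert.1 hwτ with h2 | h2
        · subst h2; exact h.symm
        · exact absurd (Finset.mem_of_mem_erase h2) hw2
    have hne : T.Nonempty := by rw [← Finset.card_pos]; omega
    obtain ⟨σ, hσ⟩ := hne
    have hne2 : (K \ σ).Nonempty := by
      rw [← Finset.card_pos, Finset.card_sdiff_of_subset (hTK σ hσ), hK, hTc σ hσ]; omega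
    obtain ⟨w0, hw0⟩ := hne2
    have hx0 := hxσ σ hσ w0 hw0
    have hx : ∀ w ∈ K \ σ, x σ w = x σ w0 := by
      intro w hw
      by_contra hcon
      have hxw := hxσ σ hσ w hw
      have hwσ := (Finset.mem_sdiff.1 hw).2
      have hmem : x σ w ∈ K \ (insert w (σ.erase (x σ w))) := by
        rw [Finset.mem_sdiff]
        refine ⟨hTK σ hσ hxw, fun h => ?_⟩
        rcases Finset.mem_insert.1 h with h | h
        · exact hwσ (h ▸ hxw)
        · exact Finset.notMem_erase _ _ h
      have e1 := huniq0 _ (hxT σ hσ w hw) _ hmem σ hσ hxw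
      have e2 := huniq0 _ (hxT σ hσ w hw) _ hmem _ (hxT σ hσ w0 hw0)
        (Finset.mem_insert_of_mem (Finset.mem_erase.2 ⟨hcon, hxw⟩))
      have e3 := e1.trans e2.symm
      apply (Finset.mem_sdiff.1 hw0).2
      rw [e3]
      exact Finset.mem_insert_self _ _
    refine ⟨σ.erase (x σ w0), ?_, (Finset.erase_subset _ _).trans (hTK σ hσ), fun P => ?_⟩
    · rw [Finset.card_erase_of_mem hx0, hTc σ hσ]; omega
    · constructor
      · intro hP
        rw [← hIeq σ hσ] at hP
        rcases Finset.mem_insert.1 hP with h | h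
        · exact ⟨x σ w0, Finset.mem_sdiff.2 ⟨hTK σ hσ hx0, Finset.notMem_erase _ _⟩,
            by rw [h, Finset.insert_erase hx0]⟩
        · obtain ⟨w, hw, h⟩ := Finset.mem_image.1 h
          refine ⟨w, ?_, ?_⟩
          · rw [Finset.mem_sdiff] at hw ⊢
            exact ⟨hw.1, fun h => hw.2 (Finset.mem_of_mem_erase h)⟩
          · rw [← h, hx w hw]
      · rintro ⟨w, hw, rfl⟩
        rw [Finset.mem_sdiff] at hw
        by_cases hwσ : w ∈ σ
        · have : w = x σ w0 := by
            by_contra hcon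
            exact hw.2 (Finset.mem_erase.2 ⟨hcon, hwσ⟩)
          rw [this, Finset.insert_erase hx0]; exact hσ
        · have hw' : w ∈ K \ σ := Finset.mem_sdiff.2 ⟨hw.1, hwσ⟩
          have := hxT σ hσ w hw'
          rwa [hx w hw'] at this

theorem exchange_aux {V : Type*} [DecidableEq V] (k j : ℕ) (G : Set (Finset V))
    (hG : IsKComplex G k) (f : Cochain G j) (hf : f ∈ cocycles G j)
    (K : Finset V) (hK : IsSimplex G k K) (σ : Finset V) (hσ : σ ∈ cochainSupport f)
    (hσK : σ ⊆ K) (w : V) (hw : w ∈ K \ σ) :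
    ∃ x ∈ σ, insert w (σ.erase x) ∈ cochainSupport f := by
  rw [Finset.mem_sdiff] at hw
  obtain ⟨hs, hs1⟩ := hσ
  have hA : IsSimplex G (j + 1) (insert w σ) := by
    refine ⟨hG.down K hK.1 _ (Finset.insert_subset hw.1 hσK) (Finset.insert_nonempty _ _), ?_⟩
    rw [Finset.card_insert_of_notMem hw.2, hs.2]
  have h0 : coboundary G j f = 0 := hf
  have h1 : ∑ τ ∈ Finset.powersetCard (j + 1) (insert w σ),
      (if h : IsSimplex G j τ then f ⟨τ, h⟩ else 0) = 0 := congrFun h0 ⟨_, hA⟩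
  have hex : ∃ τ ∈ Finset.powersetCard (j + 1) (insert w σ), τ ≠ σ ∧
      (if h : IsSimplex G j τ then f ⟨τ, h⟩ else 0) ≠ 0 := by
    by_contra hcon
    push Not at hcon
    rw [Finset.sum_eq_single σ (fun τ hτ hne => hcon τ hτ hne)
      (fun h => absurd (Finset.mem_powersetCard.2 ⟨Finset.subset_insert _ _, hs.2⟩) h),
      dif_pos hs, hs1] at h1
    exact one_ne_zero h1
  obtain ⟨τ, hτ, hne, hv⟩ := hex
  obtain ⟨hτs, hτc⟩ := Finset.mem_powersetCard.1 hτ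
  have hτm : τ ∈ cochainSupport f := by
    by_cases h : IsSimplex G j τ
    · rw [dif_pos h] at hv
      refine ⟨h, ?_⟩
      generalize f ⟨τ, h⟩ = a at hv
      revert a; decide
    · rw [dif_neg h] at hv; exact absurd rfl hv
  have hnot : ¬ σ ⊆ τ := fun h =>
    hne (Finset.eq_of_subset_of_card_le h (by rw [hτc, hs.2])).symm
  obtain ⟨x, hxσ, hxτ⟩ := Finset.not_subset.1 hnot
  refine ⟨x, hxσ, ?_⟩
  have : τ = insert w (σ.erase x) := by
    apply Finset.eq_of_subset_of_card_le
    · intro y hy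
      rcases Finset.mem_insert.1 (hτs hy) with h | h
      · rw [h]; exact Finset.mem_insert_self _ _
      · exact Finset.mem_insert_of_mem (Finset.mem_erase.2 ⟨fun e => hxτ (e ▸ hy), h⟩)
    · refine (Finset.card_insert_le _ _).trans ?_
      rw [Finset.card_erase_of_mem hxσ, hs.2, hτc]; omega
  rwa [← this]

/-- Lemma 3.1: if `S` is the support of a `j`-cocycle of a `k`-complex `G` and `K` is a
`k`-simplex, then (i) either `S_K = ∅`, or `|S_K| ≥ k-j+1` and the union of the members
of `S_K` equals `K`; (ii) if `|S_K| = k-j+1`, then `S_K` forms a `j`-flower in `K`. -/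
theorem statement7 {V : Type*} [DecidableEq V] (k j : ℕ) (hk : 2 ≤ k) (hj : 1 ≤ j)
    (hjk : j < k) (G : Set (Finset V)) (hG : IsKComplex G k)
    (S : Set (Finset V))
    (hS : ∃ f : Cochain G j, f ∈ cocycles G j ∧ cochainSupport f = S)
    (K : Finset V) (hK : IsSimplex G k K) :
    ({σ ∈ S | σ ⊆ K} = (∅ : Set (Finset V)) ∨
      (k - j + 1 ≤ {σ ∈ S | σ ⊆ K}.ncard ∧
        ∀ v : V, v ∈ K ↔ ∃ σ ∈ S, σ ⊆ K ∧ v ∈ σ)) ∧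
    ({σ ∈ S | σ ⊆ K}.ncard = k - j + 1 →
      ∃ C : Finset V, C.card = j ∧ C ⊆ K ∧ {σ ∈ S | σ ⊆ K} = Flower K C) := by
  obtain ⟨f, hf, rfl⟩ := hS
  have hfin : {σ ∈ cochainSupport f | σ ⊆ K}.Finite :=
    (K.powerset.finite_toSet).subset fun σ hσ => Finset.mem_coe.2 (Finset.mem_powerset.2 hσ.2)
  obtain ⟨T, hT⟩ := hfin.exists_finset_coe
  have hmem : ∀ σ, σ ∈ T ↔ σ ∈ cochainSupport f ∧ σ ⊆ K := by
    intro σ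
    rw [← Finset.mem_coe, hT]; rfl
  have key := flower_aux k j hjk K hK.2 T (fun σ hσ => ((hmem σ).1 hσ).2)
    (fun σ hσ => ((hmem σ).1 hσ).1.1.2) (by
      intro σ hσ w hw
      obtain ⟨h1, h2⟩ := (hmem σ).1 hσ
      obtain ⟨x, hx, hx2⟩ := exchange_aux k j G hG f hf K hK σ h1 h2 w hw
      exact ⟨x, hx, (hmem _).2 ⟨hx2, Finset.insert_subset (Finset.mem_sdiff.1 hw).1
        ((Finset.erase_subset _ _).trans h2)⟩⟩)
  rw [← hT, Set.ncard_coe_finset]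
  refine ⟨?_, fun hc => ?_⟩
  · rcases key.1 with h | ⟨h1, h2⟩
    · left; rw [h, Finset.coe_empty]
    · refine Or.inr ⟨h1, fun v => ⟨fun hv => ?_, ?_⟩⟩
      · obtain ⟨σ, hσ, hvσ⟩ := h2 v hv
        exact ⟨σ, ((hmem σ).1 hσ).1, ((hmem σ).1 hσ).2, hvσ⟩
      · rintro ⟨σ, _, hσK, hvσ⟩
        exact hσK hvσ
  · obtain ⟨C, hC, hCK, h⟩ := key.2 hc
    refine ⟨C, hC, hCK, Set.ext fun P => ?_⟩
    rw [Finset.mem_coe, h P]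
    rfl

end RSC
end
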